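/- There exists a positive constant c₃ such that for all sufficiently large y and all real x ≥ y + 1, the interval [x − y, x] contains a set of pairwise coprime positive integers of size at least c₃·√y / log y. -/

import Mathlib

open Real

/-!
Join two integers of `(x - y, x]` by an edge when they have a common prime factor, and look for an
independent set in this graph among the integers free of primes below `z = κ √y`. At this boundary
of the linear sieve the lower bound still gives at least `y / log² y` such integers, provided `κ` is
small: by induction on the length of the interval, Buchstab's identity compares the sifting function
with that of Selberg's extremal examples, the integers with a prescribed parity of `Ω`, up to an
error of order `y / log² y`, and for the even integers the count exceeds `(log (1 / κ) - O(1))`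
times this error.

A prime `p` in `[z, y]` divides `O(y / (p log y))` of the sifted integers by the upper bound sieve,
apart from the `p` close to `y`, for which a trivial bound is enough; and no larger prime divides
two of them. So the graph has `O(y √y / log³ y)` edges. Thus its average degree is `O(√y / log y)`,
and greedily one finds an independent set of size at least a constant times
`(y / log² y) / (√y / log y) = √y / log y`.
-/

namespace LinearSieve

/-! ### Sifting and the parity model -/

/-- `n` is `z`-rough: it has no prime factor below `z`. -/
def IsRough (z : ℝ) (n : ℕ) : Prop := ∀ p : ℕ, p.Prime → p ∣ n → z ≤ p

open Classical in
/-- The positive `z`-rough integers up to `v`. -/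
noncomputable def roughUpTo (z v : ℝ) : Finset ℕ := {n ∈ Finset.Ioc 0 ⌊v⌋₊ | IsRough z n}

/-- The positive `z`-rough integers in `(a, b]`. -/
noncomputable def siftedSet (a b z : ℝ) : Finset ℕ := (roughUpTo z b).filter fun n : ℕ => a < n

/-- The number of `z`-rough integers in `(a, b]`, the sifting function of the interval. -/
noncomputable def siftedCount (a b z : ℝ) : ℕ := (siftedSet a b z).card

/-- The parity of `⌊u⌋` for `u ≥ 0`, as a real number. -/
noncomputable def floorParity (u : ℝ) : ℝ := (⌊u⌋₊ : ℝ) - 2 * ⌊u / 2⌋₊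

open Classical in
/-- The positive `z`-rough integers `n ≤ v` with `Ω(n) ≡ c mod 2`. -/
noncomputable def roughWithParity (c : ZMod 2) (z v : ℝ) : Finset ℕ :=
  {n ∈ roughUpTo z v | (ArithmeticFunction.cardFactors n : ZMod 2) = c}

/-- A smoothed count of the `z`-rough integers up to `v` with `Ω(n) ≡ c mod 2`, normalised so as
to be asymptotic to `v` when `z = 2`. By Selberg, the cases `c = 1` and `c = 0` are extremal for the
upper and the lower bound linear sieve, so they serve as main terms here. -/
noncomputable def parityModel (c : ZMod 2) (v z : ℝ) : ℝ :=
  2 / log 2 * ∑ n ∈ roughWithParity c z v, floorParity (v / n)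

lemma IsRough.mono {z w : ℝ} (h : z ≤ w) {n : ℕ} (hn : IsRough w n) : IsRough z n :=
  fun p hp hd => h.trans (hn p hp hd)

lemma isRough_two (n : ℕ) : IsRough 2 n := fun _ hp _ => mod_cast hp.two_le

lemma mem_roughUpTo {z v : ℝ} {n : ℕ} :
    n ∈ roughUpTo z v ↔ n ≠ 0 ∧ (n : ℝ) ≤ v ∧ IsRough z n := by
  classical
  rw [roughUpTo, Finset.mem_filter, Finset.mem_Ioc, Nat.pos_iff_ne_zero, and_assoc]
  exact and_congr_right fun hn => by rw [Nat.le_floor_iff' hn]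

lemma mem_siftedSet {a b z : ℝ} {n : ℕ} :
    n ∈ siftedSet a b z ↔ n ≠ 0 ∧ a < n ∧ (n : ℝ) ≤ b ∧ IsRough z n := by
  rw [siftedSet, Finset.mem_filter, mem_roughUpTo]
  tauto

lemma roughUpTo_two (v : ℝ) : roughUpTo 2 v = Finset.Ioc 0 ⌊v⌋₊ := by
  classical exact Finset.filter_true_of_mem fun n _ => isRough_two n

lemma roughUpTo_anti (v : ℝ) {z w : ℝ} (h : z ≤ w) : roughUpTo w v ⊆ roughUpTo z v := by
  classical exact Finset.monotone_filter_right _ fun _ _ hn => hn.mono h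

lemma mem_primesBelow_ceil {z : ℝ} {p : ℕ} :
    p ∈ Nat.primesBelow ⌈z⌉₊ ↔ p.Prime ∧ (p : ℝ) < z := by
  rw [Nat.mem_primesBelow, Nat.lt_ceil, and_comm]

/-! ### Buchstab's identity -/

lemma isRough_minFac_of_mul {p m : ℕ} (h : (p * m).minFac = p) : IsRough p m := fun q hq hqm => by
  have : (p * m).minFac ≤ q := Nat.minFac_le_of_dvd hq.two_le (hqm.mul_left p)
  exact_mod_cast h ▸ this

lemma IsRough.minFac_mul {p m : ℕ} (hp : p.Prime) (hm : IsRough p m) : (p * m).minFac = p := by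
  refine le_antisymm (Nat.minFac_le_of_dvd hp.two_le (dvd_mul_right _ _)) ?_
  have hprime : (p * m).minFac.Prime :=
    Nat.minFac_prime fun h => hp.one_lt.ne' (Nat.eq_one_of_mul_eq_one_right h)
  rcases hprime.dvd_mul.1 (Nat.minFac_dvd (p * m)) with h | h
  · exact ((Nat.prime_dvd_prime_iff_eq hprime hp).1 h).ge
  · exact_mod_cast hm _ hprime h

lemma not_isRough_iff {z : ℝ} {n : ℕ} :
    ¬ IsRough z n ↔ n ≠ 1 ∧ (n.minFac : ℝ) < z := by
  constructor
  · intro h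
    simp only [IsRough, not_forall, not_le] at h
    obtain ⟨p, hp, hd, hlt⟩ := h
    refine ⟨fun h1 => hp.one_lt.ne' (Nat.dvd_one.1 (h1 ▸ hd)), lt_of_le_of_lt ?_ hlt⟩
    exact_mod_cast Nat.minFac_le_of_dvd hp.two_le hd
  · rintro ⟨h1, hlt⟩ h
    exact (h _ (Nat.minFac_prime h1) n.minFac_dvd).not_gt hlt

lemma filter_minFac_eq_image {z v : ℝ} {p : ℕ} (hp : p.Prime) (hpz : (p : ℝ) < z) :
    {n ∈ roughUpTo 2 v \ roughUpTo z v | n.minFac = p}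
      = (roughUpTo p (v / p)).image (p * ·) := by
  have hp0 : (0 : ℝ) < p := mod_cast hp.pos
  ext n
  simp only [Finset.mem_filter, Finset.mem_sdiff, mem_roughUpTo, Finset.mem_image,
    le_div_iff₀' hp0]
  constructor
  · rintro ⟨⟨⟨hn0, hnv, -⟩, -⟩, hmin⟩
    obtain ⟨m, rfl⟩ : p ∣ n := hmin ▸ n.minFac_dvd
    exact ⟨m, ⟨right_ne_zero_of_mul hn0, mod_cast hnv, isRough_minFac_of_mul hmin⟩, rfl⟩
  · rintro ⟨m, ⟨hm0, hmv, hm⟩, rfl⟩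
    refine ⟨⟨⟨mul_ne_zero hp.ne_zero hm0, mod_cast hmv, isRough_two _⟩, fun h => ?_⟩,
      hm.minFac_mul hp⟩
    exact (h.2.2 p hp (dvd_mul_right _ _)).not_gt hpz

lemma sum_roughUpTo_eq_sub {M : Type*} [AddCommGroup M] (v z : ℝ) (w : ℕ → M) :
    ∑ n ∈ roughUpTo z v, w n = ∑ n ∈ roughUpTo 2 v, w n
      - ∑ p ∈ Nat.primesBelow ⌈z⌉₊, ∑ m ∈ roughUpTo p (v / p), w (p * m) := by
  have hsub : roughUpTo z v ⊆ roughUpTo 2 v := fun n hn => by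
    rw [mem_roughUpTo] at hn ⊢
    exact ⟨hn.1, hn.2.1, isRough_two n⟩
  have hmaps : ∀ n ∈ roughUpTo 2 v \ roughUpTo z v, n.minFac ∈ Nat.primesBelow ⌈z⌉₊ := by
    intro n hn
    simp only [Finset.mem_sdiff, mem_roughUpTo] at hn
    obtain ⟨h1, hlt⟩ := not_isRough_iff.1 fun h => hn.2 ⟨hn.1.1, hn.1.2.1, h⟩
    exact mem_primesBelow_ceil.2 ⟨Nat.minFac_prime h1, hlt⟩
  rw [← Finset.sum_sdiff hsub, ← Finset.sum_fiberwise_of_maps_to hmaps w, eq_sub_iff_add_eq,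
    add_comm, add_left_inj]
  refine Finset.sum_congr rfl fun p hp => ?_
  obtain ⟨hp, hpz⟩ := mem_primesBelow_ceil.1 hp
  rw [filter_minFac_eq_image hp hpz, Finset.sum_image fun _ _ _ _ h =>
    Nat.eq_of_mul_eq_mul_left hp.pos h]

lemma siftedCount_eq_sub (a b z : ℝ) :
    (siftedCount a b z : ℝ) = siftedCount a b 2
      - ∑ p ∈ Nat.primesBelow ⌈z⌉₊, (siftedCount (a / p) (b / p) p : ℝ) := by
  simp only [siftedCount, siftedSet, Finset.natCast_card_filter]
  rw [sum_roughUpTo_eq_sub]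
  congr 1
  refine Finset.sum_congr rfl fun p hp => Finset.sum_congr rfl fun m _ => ?_
  have hp0 : (0 : ℝ) < p := mod_cast (mem_primesBelow_ceil.1 hp).1.pos
  simp only [div_lt_iff₀' hp0, Nat.cast_mul]

lemma cast_cardFactors_prime_mul_eq_iff {p m : ℕ} (hp : p.Prime) (hm : m ≠ 0) (c : ZMod 2) :
    (ArithmeticFunction.cardFactors (p * m) : ZMod 2) = c ↔
      (ArithmeticFunction.cardFactors m : ZMod 2) = c + 1 := by
  rw [ArithmeticFunction.cardFactors_mul hp.ne_zero hm,
    ArithmeticFunction.cardFactors_apply_prime hp, Nat.cast_add, Nat.cast_one]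
  generalize (ArithmeticFunction.cardFactors m : ZMod 2) = k
  decide +revert

lemma parityModel_eq_sub (c : ZMod 2) (v z : ℝ) :
    parityModel c v z = parityModel c v 2
      - ∑ p ∈ Nat.primesBelow ⌈z⌉₊, parityModel (c + 1) (v / p) p := by
  simp only [parityModel, roughWithParity, Finset.sum_filter, ← Finset.mul_sum, ← mul_sub]
  rw [sum_roughUpTo_eq_sub]
  congr 2
  refine Finset.sum_congr rfl fun p hp => Finset.sum_congr rfl fun m hm => ?_
  simp only [cast_cardFactors_prime_mul_eq_iff (mem_primesBelow_ceil.1 hp).1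
    (mem_roughUpTo.1 hm).1, Nat.cast_mul, div_div]

/-! ### Elementary bounds -/

lemma siftedCount_anti (a b : ℝ) {z w : ℝ} (h : z ≤ w) :
    siftedCount a b w ≤ siftedCount a b z :=
  Finset.card_le_card (Finset.filter_subset_filter _ (roughUpTo_anti b h))

lemma abs_siftedCount_two_sub_le {a b : ℝ} (ha : 0 ≤ a) (hab : a ≤ b) :
    |(siftedCount a b 2 : ℝ) - (b - a)| ≤ 1 := by
  have hset : siftedSet a b 2 = Finset.Ioc ⌊a⌋₊ ⌊b⌋₊ := by
    ext n
    simp only [siftedSet, roughUpTo_two, Finset.mem_filter, Finset.mem_Ioc, Nat.floor_lt ha]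
    refine ⟨fun h => ⟨h.2, h.1.2⟩, fun h => ⟨⟨?_, h.2⟩, h.1⟩⟩
    exact_mod_cast ha.trans_lt h.1
  rw [siftedCount, hset, Nat.card_Ioc, Nat.cast_sub (Nat.floor_le_floor hab), abs_le]
  have := Nat.floor_le ha
  have := Nat.floor_le (ha.trans hab)
  have := Nat.lt_floor_add_one a
  have := Nat.lt_floor_add_one b
  constructor <;> linarith

lemma floorParity_eq_mod_two (u : ℝ) : floorParity u = ((⌊u⌋₊ % 2 : ℕ) : ℝ) := by
  have hdiv : ⌊u / 2⌋₊ = ⌊u⌋₊ / 2 := mod_cast Nat.floor_div_natCast u 2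
  have hmod : (2 : ℝ) * (⌊u⌋₊ / 2 : ℕ) + (⌊u⌋₊ % 2 : ℕ) = ⌊u⌋₊ := mod_cast Nat.div_add_mod _ 2
  rw [floorParity, hdiv]
  linarith

lemma floorParity_nonneg (u : ℝ) : 0 ≤ floorParity u := by
  rw [floorParity_eq_mod_two]; positivity

lemma floorParity_le_one (u : ℝ) : floorParity u ≤ 1 := by
  rw [floorParity_eq_mod_two]
  exact_mod_cast Nat.lt_succ_iff.1 (Nat.mod_lt _ two_pos)

lemma two_div_log_two_pos : 0 < 2 / log 2 := div_pos two_pos (log_pos one_lt_two)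

lemma two_div_log_two_le : 2 / log 2 ≤ 3 := by
  rw [div_le_iff₀ (log_pos one_lt_two)]
  linarith [log_two_gt_d9]

lemma parityModel_nonneg (c : ZMod 2) (v z : ℝ) : 0 ≤ parityModel c v z :=
  mul_nonneg two_div_log_two_pos.le (Finset.sum_nonneg fun _ _ => floorParity_nonneg _)

lemma parityModel_le_three_mul_card (c : ZMod 2) (v z : ℝ) :
    parityModel c v z ≤ 3 * ((roughWithParity c z v).card : ℝ) := by
  refine mul_le_mul two_div_log_two_le ?_
    (Finset.sum_nonneg fun _ _ => floorParity_nonneg _) zero_le_three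
  simpa using Finset.sum_le_card_nsmul (roughWithParity c z v) _ (1 : ℝ)
    fun n _ => floorParity_le_one (v / n)

/-! ### The parity model at level two -/

section Liouville

open ArithmeticFunction hiding log

lemma liouville_mul_zeta_prime_pow {p : ℕ} (hp : p.Prime) (k : ℕ) :
    (liouville * (zeta : ArithmeticFunction ℤ)) (p ^ k) = if Even k then 1 else 0 := by
  have hpow : ∀ i ∈ Finset.range (k + 1), liouville (p ^ i) = (-1) ^ i := fun i _ => by
    rw [liouville_apply (pow_ne_zero _ hp.ne_zero), cardFactors_apply_prime_pow hp]
  rw [coe_mul_zeta_apply, Nat.sum_divisors_prime_pow hp, Finset.sum_congr rfl hpow,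
    neg_one_geom_sum]
  simp only [Nat.even_add_one, ite_not]

lemma liouville_mul_zeta_eq_zero_or {n : ℕ} (hn : n ≠ 0) :
    (liouville * (zeta : ArithmeticFunction ℤ)) n = 0 ∨
      (liouville * (zeta : ArithmeticFunction ℤ)) n = 1 ∧ IsSquare n := by
  have hmul : IsMultiplicative (liouville * (zeta : ArithmeticFunction ℤ)) :=
    isMultiplicative_liouville.mul isMultiplicative_zeta.natCast
  induction n using Nat.recOnPosPrimePosCoprime with
  | prime_pow p k hp _ =>
    rw [liouville_mul_zeta_prime_pow hp]
    by_cases hk : Even k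
    · exact Or.inr ⟨if_pos hk, hk.isSquare_pow p⟩
    · exact Or.inl (if_neg hk)
  | zero => exact absurd rfl hn
  | one => exact Or.inr ⟨hmul.1, IsSquare.one⟩
  | coprime a b ha hb hab iha ihb =>
    rw [hmul.2 hab]
    rcases iha (by omega) with ha0 | ⟨ha1, hasq⟩
    · exact Or.inl (by rw [ha0, zero_mul])
    rcases ihb (by omega) with hb0 | ⟨hb1, hbsq⟩
    · exact Or.inl (by rw [hb0, mul_zero])
    exact Or.inr ⟨by rw [ha1, hb1, one_mul], hasq.mul hbsq⟩

lemma card_filter_isSquare_Ioc_le (M : ℕ) :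
    {n ∈ Finset.Ioc 0 M | IsSquare n}.card ≤ M.sqrt := by
  have hsub : {n ∈ Finset.Ioc 0 M | IsSquare n} ⊆ (Finset.Ioc 0 M.sqrt).image fun a => a * a := by
    intro n hn
    obtain ⟨hn, r, rfl⟩ := Finset.mem_filter.1 hn
    rw [Finset.mem_Ioc] at hn
    exact Finset.mem_image.2
      ⟨r, Finset.mem_Ioc.2 ⟨pos_of_mul_pos_left hn.1 r.zero_le, Nat.le_sqrt.2 hn.2⟩, rfl⟩
  calc _ ≤ _ := Finset.card_le_card hsub
    _ ≤ _ := Finset.card_image_le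
    _ = M.sqrt := by rw [Nat.card_Ioc, Nat.sub_zero]

lemma abs_sum_liouville_mul_div_le (M : ℕ) :
    |∑ n ∈ Finset.Ioc 0 M, (liouville n : ℝ) * ((M / n : ℕ) : ℝ)| ≤ M.sqrt := by
  have hconv : ∑ n ∈ Finset.Ioc 0 M, (liouville n : ℝ) * ((M / n : ℕ) : ℝ) =
      ((∑ n ∈ Finset.Ioc 0 M, (liouville * (zeta : ArithmeticFunction ℤ)) n : ℤ) : ℝ) := by
    rw [sum_Ioc_mul_zeta_eq_sum liouville M]
    push_cast
    rfl
  have hbounds : ∀ n ∈ Finset.Ioc 0 M, 0 ≤ (liouville * (zeta : ArithmeticFunction ℤ)) n ∧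
      (liouville * (zeta : ArithmeticFunction ℤ)) n ≤ if IsSquare n then 1 else 0 := by
    intro n hn
    rcases liouville_mul_zeta_eq_zero_or (Finset.mem_Ioc.1 hn).1.ne' with h | ⟨h, hsq⟩
    · rw [h]; exact ⟨le_rfl, by positivity⟩
    · rw [h, if_pos hsq]; exact ⟨zero_le_one, le_rfl⟩
  rw [hconv, abs_of_nonneg (mod_cast Finset.sum_nonneg fun n hn => (hbounds n hn).1)]
  have hle := Finset.sum_le_sum fun n hn => (hbounds n hn).2
  rw [Finset.sum_boole] at hle
  exact_mod_cast hle.trans (Int.ofNat_le.2 (card_filter_isSquare_Ioc_le M))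

lemma floorParity_div_natCast (v : ℝ) (n : ℕ) :
    floorParity (v / n) = ((⌊v⌋₊ / n : ℕ) : ℝ) - 2 * ((⌊v / 2⌋₊ / n : ℕ) : ℝ) := by
  rw [floorParity, div_right_comm, Nat.floor_div_natCast, Nat.floor_div_natCast]

lemma natSqrt_floor_le_sqrt {u : ℝ} (hu : 0 ≤ u) : (Nat.sqrt ⌊u⌋₊ : ℝ) ≤ √u := by
  apply Real.le_sqrt_of_sq_le
  have : (Nat.sqrt ⌊u⌋₊ : ℝ) ^ 2 ≤ ⌊u⌋₊ := mod_cast Nat.sqrt_le' _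
  exact this.trans (Nat.floor_le hu)

lemma sum_mul_floorParity_div {v : ℝ} (hv : 0 ≤ v) (w : ℕ → ℝ) :
    ∑ n ∈ Finset.Ioc 0 ⌊v⌋₊, w n * floorParity (v / n) =
      ∑ n ∈ Finset.Ioc 0 ⌊v⌋₊, w n * ((⌊v⌋₊ / n : ℕ) : ℝ)
        - 2 * ∑ n ∈ Finset.Ioc 0 ⌊v / 2⌋₊, w n * ((⌊v / 2⌋₊ / n : ℕ) : ℝ) := by
  have hhalf : ∑ n ∈ Finset.Ioc 0 ⌊v / 2⌋₊, w n * ((⌊v / 2⌋₊ / n : ℕ) : ℝ) =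
      ∑ n ∈ Finset.Ioc 0 ⌊v⌋₊, w n * ((⌊v / 2⌋₊ / n : ℕ) : ℝ) := by
    refine Finset.sum_subset (Finset.Ioc_subset_Ioc_right (Nat.floor_le_floor (by linarith)))
      fun n hn hn' => ?_
    rw [Finset.mem_Ioc] at hn hn'
    rw [Nat.div_eq_of_lt (by omega), Nat.cast_zero, mul_zero]
  simp only [floorParity_div_natCast, mul_sub, Finset.sum_sub_distrib,
    mul_left_comm (_ : ℝ) (2 : ℝ), ← Finset.mul_sum, hhalf]

lemma abs_sum_liouville_mul_floorParity_le {v : ℝ} (hv : 0 ≤ v) :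
    |∑ n ∈ Finset.Ioc 0 ⌊v⌋₊, (liouville n : ℝ) * floorParity (v / n)| ≤ 3 * √v := by
  rw [sum_mul_floorParity_div hv]
  have hfull := (abs_sum_liouville_mul_div_le ⌊v⌋₊).trans (natSqrt_floor_le_sqrt hv)
  have hhalf := (abs_sum_liouville_mul_div_le ⌊v / 2⌋₊).trans
    ((natSqrt_floor_le_sqrt (by linarith)).trans (Real.sqrt_le_sqrt (by linarith : v / 2 ≤ v)))
  rw [abs_le] at *
  constructor <;> linarith

lemma two_mul_sum_roughWithParity_two (c : ZMod 2) (v : ℝ) (w : ℕ → ℝ) :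
    2 * ∑ n ∈ roughWithParity c 2 v, w n = ∑ n ∈ Finset.Ioc 0 ⌊v⌋₊, w n
      + (if c = 0 then 1 else -1) * ∑ n ∈ Finset.Ioc 0 ⌊v⌋₊, (liouville n : ℝ) * w n := by
  rw [roughWithParity, roughUpTo_two, Finset.sum_filter, Finset.mul_sum, Finset.mul_sum,
    ← Finset.sum_add_distrib]
  refine Finset.sum_congr rfl fun n hn => ?_
  rw [liouville_apply (Finset.mem_Ioc.1 hn).1.ne']
  rcases Nat.even_or_odd (cardFactors n) with hpar | hpar
  · rw [hpar.neg_one_pow, ZMod.natCast_eq_zero_iff_even.2 hpar]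
    by_cases hc : c = 0
    · rw [if_pos hc.symm, if_pos hc]; push_cast; ring
    · rw [if_neg (Ne.symm hc), if_neg hc]; push_cast; ring
  · rw [hpar.neg_one_pow, ZMod.natCast_eq_one_iff_odd.2 hpar]
    by_cases hc : c = 0
    · rw [if_neg (by rw [hc]; decide), if_pos hc]; push_cast; ring
    · rw [if_pos (by decide +revert), if_neg hc]; push_cast; ring

end Liouville

section Divisor

lemma sum_div_Ioc_eq (V T K S : ℕ) (hT : V ≤ T) (hS : V / (K + 1) ≤ S) :
    ∑ n ∈ Finset.Ioc S T, V / n = ∑ k ∈ Finset.Ioc 0 K, (V / k - S) := by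
  have hleft : ∀ n ∈ Finset.Ioc S T, V / n = {k ∈ Finset.Ioc 0 K | n * k ≤ V}.card := by
    intro n hn
    have hn0 : 0 < n := by have := Finset.mem_Ioc.1 hn; omega
    have hVK : V / n ≤ K := Nat.lt_succ_iff.1 <| (Nat.div_lt_iff_lt_mul hn0).2 <| by
      rw [mul_comm]
      exact (Nat.div_lt_iff_lt_mul K.succ_pos).1 (hS.trans_lt (Finset.mem_Ioc.1 hn).1)
    have hset : {k ∈ Finset.Ioc 0 K | n * k ≤ V} = Finset.Ioc 0 (V / n) := by
      ext k
      simp only [Finset.mem_filter, Finset.mem_Ioc, Nat.le_div_iff_mul_le hn0, mul_comm n]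
      exact ⟨fun h => ⟨h.1.1, h.2⟩, fun h =>
        ⟨⟨h.1, ((Nat.le_div_iff_mul_le hn0).2 h.2).trans hVK⟩, h.2⟩⟩
    rw [hset, Nat.card_Ioc, Nat.sub_zero]
  have hright : ∀ k ∈ Finset.Ioc 0 K, V / k - S = {n ∈ Finset.Ioc S T | n * k ≤ V}.card := by
    intro k hk
    have hset : {n ∈ Finset.Ioc S T | n * k ≤ V} = Finset.Ioc S (V / k) := by
      ext n
      simp only [Finset.mem_filter, Finset.mem_Ioc, Nat.le_div_iff_mul_le (Finset.mem_Ioc.1 hk).1]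
      refine ⟨fun h => ⟨h.1.1, h.2⟩, fun h => ⟨⟨h.1, ?_⟩, h.2⟩⟩
      exact (Nat.le_mul_of_pos_right n (Finset.mem_Ioc.1 hk).1).trans (h.2.trans hT)
    rw [hset, Nat.card_Ioc]
  rw [Finset.sum_congr rfl hleft, Finset.sum_congr rfl hright]
  exact Finset.sum_card_bipartiteAbove_eq_sum_card_bipartiteBelow fun n k => n * k ≤ V

/-- Dirichlet's hyperbola trick: large `n` are counted through the small values of `v / n`. -/
lemma sum_floorParity_Ioc_eq (v : ℝ) (M : ℕ) :
    ∑ n ∈ Finset.Ioc (⌊v⌋₊ / (2 * M + 1)) ⌊v⌋₊, floorParity (v / n) =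
      ∑ k ∈ Finset.Ioc 0 (2 * M), (⌊v / k⌋₊ : ℝ)
        - 2 * ∑ j ∈ Finset.Ioc 0 M, (⌊v / 2 / j⌋₊ : ℝ) := by
  set V := ⌊v⌋₊
  have hhalf : ⌊v / 2⌋₊ = V / 2 := mod_cast Nat.floor_div_natCast v 2
  have hfull : ∀ k ∈ Finset.Ioc 0 (2 * M), V / (2 * M + 1) ≤ V / k := fun k hk =>
    Nat.div_le_div_left (by have := Finset.mem_Ioc.1 hk; omega) (Finset.mem_Ioc.1 hk).1
  have hhalf_le : ∀ j ∈ Finset.Ioc 0 M, V / (2 * M + 1) ≤ V / 2 / j := fun j hj => by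
    rw [Nat.div_div_eq_div_mul]
    have := Finset.mem_Ioc.1 hj
    exact Nat.div_le_div_left (by omega) (by omega)
  have hV := sum_div_Ioc_eq V V (2 * M) _ le_rfl le_rfl
  have hV2 := sum_div_Ioc_eq (V / 2) V M (V / (2 * M + 1)) (Nat.div_le_self _ _) (by
    rw [Nat.div_div_eq_div_mul]; exact Nat.div_le_div_left (by omega) (by omega))
  simp only [floorParity_div_natCast, Finset.sum_sub_distrib, ← Finset.mul_sum,
    Nat.floor_div_natCast, hhalf]
  rw [← Nat.cast_sum, ← Nat.cast_sum, hV, hV2, Nat.cast_sum, Nat.cast_sum,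
    Finset.sum_congr rfl fun k hk => Nat.cast_sub (hfull k hk),
    Finset.sum_congr rfl fun j hj => Nat.cast_sub (hhalf_le j hj),
    Finset.sum_sub_distrib, Finset.sum_sub_distrib, Finset.sum_const, Finset.sum_const,
    Nat.card_Ioc, Nat.card_Ioc]
  simp only [Nat.sub_zero, nsmul_eq_mul, Nat.cast_mul, Nat.cast_ofNat]
  ring

lemma abs_harmonic_two_mul_sub_sub_log_two_le {M : ℕ} (hM : M ≠ 0) :
    |(harmonic (2 * M) : ℝ) - harmonic M - log 2| ≤ 1 / M := by
  have hM0 : (0 : ℝ) < M := by positivity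
  have hlog : log (M + 1) ≤ log M + 1 / M := by
    have := log_le_sub_one_of_pos (show (0 : ℝ) < (M + 1) / M by positivity)
    rw [log_div (by positivity) hM0.ne', add_div, div_self hM0.ne'] at this
    linarith
  have hlog2 : log (2 * M + 1) ≤ log 2 + log M + 1 / M := by
    rw [← log_mul two_ne_zero hM0.ne']
    have := log_le_sub_one_of_pos (show (0 : ℝ) < (2 * M + 1) / (2 * M) by positivity)
    rw [log_div (by positivity) (by positivity), add_div, div_self (by positivity)] at this
    have hle : (1 : ℝ) / (2 * M) ≤ 1 / M := one_div_le_one_div_of_le hM0 (by linarith)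
    linarith
  have hlow := eulerMascheroniSeq_lt_eulerMascheroniConstant M
  have hlow2 := eulerMascheroniSeq_lt_eulerMascheroniConstant (2 * M)
  have hupp := eulerMascheroniConstant_lt_eulerMascheroniSeq' M
  have hupp2 := eulerMascheroniConstant_lt_eulerMascheroniSeq' (2 * M)
  rw [eulerMascheroniSeq] at hlow hlow2
  rw [eulerMascheroniSeq', if_neg (by omega)] at hupp hupp2
  push_cast at hlow2 hupp2
  rw [log_mul two_ne_zero hM0.ne'] at hupp2
  rw [abs_le]
  constructor <;> linarith

lemma sum_floor_div_bounds {u : ℝ} (hu : 0 ≤ u) (K : ℕ) :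
    u * harmonic K - K ≤ ∑ k ∈ Finset.Ioc 0 K, (⌊u / k⌋₊ : ℝ) ∧
      ∑ k ∈ Finset.Ioc 0 K, (⌊u / k⌋₊ : ℝ) ≤ u * harmonic K := by
  have hharm : u * harmonic K = ∑ k ∈ Finset.Ioc 0 K, u / k := by
    rw [harmonic_eq_sum_Icc, Rat.cast_sum, Finset.mul_sum]
    exact Finset.sum_congr rfl fun k _ => by push_cast; rw [div_eq_mul_inv]
  refine ⟨?_, hharm ▸ Finset.sum_le_sum fun _ _ => Nat.floor_le (by positivity)⟩
  have hcard : (K : ℝ) = ∑ _k ∈ Finset.Ioc 0 K, (1 : ℝ) := by simp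
  rw [hharm, hcard, ← Finset.sum_sub_distrib]
  exact Finset.sum_le_sum fun _ _ => (Nat.sub_one_lt_floor _).le

lemma abs_sum_floorParity_sub_le {v : ℝ} (hv : 1 ≤ v) :
    |∑ n ∈ Finset.Ioc 0 ⌊v⌋₊, floorParity (v / n) - v * log 2| ≤ 8 * √v := by
  set M := ⌈√v⌉₊
  set S := ⌊v⌋₊ / (2 * M + 1)
  have hsq : √v * √v = v := mul_self_sqrt (by linarith)
  have hsqrt : 1 ≤ √v := one_le_sqrt.2 hv
  have hM : √v ≤ M := Nat.le_ceil _
  have hM' : (M : ℝ) < √v + 1 := Nat.ceil_lt_add_one (by linarith)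
  have hsplit := Finset.sum_Ioc_consecutive (fun n : ℕ => floorParity (v / n)) S.zero_le
    (Nat.div_le_self ⌊v⌋₊ (2 * M + 1))
  have hsmall_nonneg : 0 ≤ ∑ n ∈ Finset.Ioc 0 S, floorParity (v / n) :=
    Finset.sum_nonneg fun _ _ => floorParity_nonneg _
  have hsmall : ∑ n ∈ Finset.Ioc 0 S, floorParity (v / n) ≤ √v := by
    calc _ ≤ (S : ℝ) := by
          simpa using Finset.sum_le_card_nsmul (Finset.Ioc 0 S) _ (1 : ℝ)
            fun n _ => floorParity_le_one (v / n)
      _ ≤ ⌊v⌋₊ / ((2 * M + 1 : ℕ) : ℝ) := Nat.cast_div_le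
      _ ≤ √v := by
          rw [div_le_iff₀ (by positivity)]
          push_cast
          nlinarith [Nat.floor_le (show 0 ≤ v by linarith)]
  have hmain : |v * ((harmonic (2 * M) : ℝ) - harmonic M - log 2)| ≤ √v := by
    rw [abs_mul, abs_of_nonneg (by linarith)]
    calc _ ≤ v * (1 / M) := by
          have hM0 : M ≠ 0 := (Nat.ceil_pos.2 (by linarith)).ne'
          gcongr
          exact abs_harmonic_two_mul_sub_sub_log_two_le hM0
      _ ≤ √v := by rw [mul_one_div, div_le_iff₀ (by linarith)]; nlinarith
  obtain ⟨hlow, hupp⟩ := sum_floor_div_bounds (show 0 ≤ v by linarith) (2 * M)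
  obtain ⟨hlow2, hupp2⟩ :=
    sum_floor_div_bounds (show 0 ≤ v / 2 by linarith) M
  rw [sum_floorParity_Ioc_eq] at hsplit
  push_cast at hlow
  rw [abs_le] at hmain ⊢
  constructor <;> linarith

end Divisor

lemma abs_parityModel_two_sub_le (c : ZMod 2) {v : ℝ} (hv : 1 ≤ v) :
    |parityModel c v 2 - v| ≤ 20 * √v := by
  have hlog := log_two_gt_d9
  have hsum := abs_sum_floorParity_sub_le hv
  have hliou := abs_sum_liouville_mul_floorParity_le (zero_le_one.trans hv)
  have hid := two_mul_sum_roughWithParity_two c v fun n => floorParity (v / n)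
  have hsign : |(if c = 0 then 1 else -1 : ℝ)| = 1 := by split_ifs <;> norm_num
  rw [← one_mul |∑ n ∈ _, _|, ← hsign, ← abs_mul] at hliou
  have heq : parityModel c v 2 - v
      = (2 * ∑ n ∈ roughWithParity c 2 v, floorParity (v / n) - v * log 2) / log 2 := by
    rw [parityModel]
    field_simp
  have hsqrt := sqrt_nonneg v
  rw [heq, abs_div, abs_of_pos (a := log 2) (by linarith), div_le_iff₀ (by linarith), hid]
  rw [abs_le] at hsum hliou ⊢
  constructor <;> nlinarith

/-! ### Sums against monotone weights -/

section Stieltjes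

open MeasureTheory

variable {ι : Type*} {s : Finset ι} {x a : ι → ℝ} {w φ : ℝ → ℝ} {A B K : ℝ}

lemma intervalIntegrable_mul_of_monotoneOn (hAB : A ≤ B) (hw : ContinuousOn w (Set.Icc A B))
    (hφ : MonotoneOn φ (Set.Icc A B)) :
    IntervalIntegrable (fun y => w y * φ y) volume A B := by
  rw [← Set.uIcc_of_le hAB] at hw hφ
  exact hφ.intervalIntegrable.continuousOn_mul hw

lemma integral_mul_nonneg_of_monotoneOn (hAB : A ≤ B) (hw0 : ∀ t ∈ Set.Icc A B, 0 ≤ w t)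
    (hφ : MonotoneOn φ (Set.Icc A B)) (hφA : 0 ≤ φ A) : 0 ≤ ∫ y in A..B, w y * φ y :=
  intervalIntegral.integral_nonneg hAB fun y hy =>
    mul_nonneg (hw0 y hy) (hφA.trans (hφ ⟨le_rfl, hAB⟩ hy hy.1))

lemma integral_mul_sub_const (hAB : A ≤ B) (hw : ContinuousOn w (Set.Icc A B))
    (hφ : MonotoneOn φ (Set.Icc A B)) (k : ℝ) :
    ∫ y in A..B, w y * (φ y - k) = (∫ y in A..B, w y * φ y) - (∫ y in A..B, w y) * k := by
  have hw_int : IntervalIntegrable w volume A B :=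
    (Set.uIcc_of_le hAB ▸ hw).intervalIntegrable
  simp only [mul_sub]
  rw [intervalIntegral.integral_sub (intervalIntegrable_mul_of_monotoneOn hAB hw hφ)
    (hw_int.mul_const k), intervalIntegral.integral_mul_const]

lemma sum_mul_le_integral_mul_add_of_tail_le (hAB : A ≤ B) (hx : ∀ i ∈ s, x i ∈ Set.Icc A B)
    (ha : ∀ i ∈ s, 0 ≤ a i) (hw : ContinuousOn w (Set.Icc A B)) (hw0 : ∀ t ∈ Set.Icc A B, 0 ≤ w t)
    (htail : ∀ t ∈ Set.Icc A B, ∑ i ∈ s with t ≤ x i, a i ≤ (∫ y in t..B, w y) + K)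
    (hφ : MonotoneOn φ (Set.Icc A B)) (hφA : 0 ≤ φ A) :
    ∑ i ∈ s, a i * φ (x i) ≤ (∫ y in A..B, w y * φ y) + K * φ B := by
  classical
  induction s using Finset.induction_on_min_value x generalizing A φ with
  | empty =>
    have hint := integral_mul_nonneg_of_monotoneOn hAB hw0 hφ hφA
    have hφB : 0 ≤ φ B := hφA.trans (hφ ⟨le_rfl, hAB⟩ ⟨hAB, le_rfl⟩ hAB)
    have hK : 0 ≤ K := by simpa using htail B ⟨hAB, le_rfl⟩
    rw [Finset.sum_empty]
    exact add_nonneg hint (mul_nonneg hK hφB)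
  | insert j s hj hmin ih =>
    simp only [Finset.mem_insert, forall_eq_or_imp] at hx ha
    obtain ⟨⟨hAj, hjB⟩, hx⟩ := hx
    have hsub : Set.Icc (x j) B ⊆ Set.Icc A B := Set.Icc_subset_Icc_left hAj
    have hjmem : x j ∈ Set.Icc A B := ⟨hAj, hjB⟩
    have hφj : 0 ≤ φ (x j) := hφA.trans (hφ ⟨le_rfl, hAB⟩ hjmem hAj)
    have hrest : ∑ i ∈ s, a i * (φ (x i) - φ (x j))
        ≤ (∫ y in x j..B, w y * (φ y - φ (x j))) + K * (φ B - φ (x j)) := by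
      refine ih (φ := fun y => φ y - φ (x j)) hjB (fun i hi => ⟨hmin i hi, (hx i hi).2⟩) ha.2
        (hw.mono hsub) (fun t ht => hw0 t (hsub ht)) (fun t ht => ?_)
        (fun p hp q hq hpq => sub_le_sub_right (hφ (hsub hp) (hsub hq) hpq) _) (sub_self _).ge
      refine (Finset.sum_le_sum_of_subset_of_nonneg
        (Finset.filter_subset_filter _ (Finset.subset_insert j s)) fun i hi _ => ?_).trans
        (htail t (hsub ht))
      rcases Finset.mem_insert.1 (Finset.mem_filter.1 hi).1 with rfl | hi
      exacts [ha.1, ha.2 i hi]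
    have htotal : a j + ∑ i ∈ s, a i ≤ (∫ y in x j..B, w y) + K := by
      have := htail (x j) hjmem
      rwa [Finset.filter_true_of_mem
        (by simpa only [Finset.mem_insert, forall_eq_or_imp, le_refl, true_and] using hmin),
        Finset.sum_insert hj] at this
    have hsub' : Set.Icc A (x j) ⊆ Set.Icc A B := Set.Icc_subset_Icc_right hjB
    have hsplit := intervalIntegral.integral_add_adjacent_intervals
      (intervalIntegrable_mul_of_monotoneOn hAj (hw.mono hsub') (hφ.mono hsub'))
      (intervalIntegrable_mul_of_monotoneOn hjB (hw.mono hsub) (hφ.mono hsub))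
    have hnonneg := integral_mul_nonneg_of_monotoneOn hAj (fun t ht => hw0 t (hsub' ht))
      (hφ.mono hsub') hφA
    rw [integral_mul_sub_const hjB (hw.mono hsub) (hφ.mono hsub)] at hrest
    simp only [mul_sub, Finset.sum_sub_distrib, ← Finset.sum_mul] at hrest
    rw [Finset.sum_insert hj, ← hsplit]
    linarith [mul_le_mul_of_nonneg_right htotal hφj]

lemma sum_mul_le_integral_mul_add_of_head_le (hAB : A ≤ B) (hx : ∀ i ∈ s, x i ∈ Set.Icc A B)
    (ha : ∀ i ∈ s, 0 ≤ a i) (hw : ContinuousOn w (Set.Icc A B)) (hw0 : ∀ t ∈ Set.Icc A B, 0 ≤ w t)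
    (hhead : ∀ t ∈ Set.Icc A B, ∑ i ∈ s with x i ≤ t, a i ≤ (∫ y in A..t, w y) + K)
    (hφ : AntitoneOn φ (Set.Icc A B)) (hφB : 0 ≤ φ B) :
    ∑ i ∈ s, a i * φ (x i) ≤ (∫ y in A..B, w y * φ y) + K * φ A := by
  have hmem : ∀ t ∈ Set.Icc (-B) (-A), -t ∈ Set.Icc A B := fun t ht =>
    ⟨le_neg_of_le_neg ht.2, neg_le_of_neg_le ht.1⟩
  have hneg := sum_mul_le_integral_mul_add_of_tail_le (s := s) (x := fun i => -x i) (a := a)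
    (w := fun y => w (-y)) (φ := fun y => φ (-y)) (K := K) (neg_le_neg hAB)
    (fun i hi => ⟨neg_le_neg (hx i hi).2, neg_le_neg (hx i hi).1⟩) ha
    (hw.comp continuous_neg.continuousOn hmem) (fun t ht => hw0 _ (hmem t ht))
    (fun t ht => by
      simpa only [intervalIntegral.integral_comp_neg (fun y => w y), neg_neg, le_neg]
        using hhead (-t) (hmem t ht))
    (fun p hp q hq hpq => hφ (hmem q hq) (hmem p hp) (neg_le_neg hpq)) (by rwa [neg_neg])
  simpa only [intervalIntegral.integral_comp_neg (fun y => w y * φ y), neg_neg] using hneg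

end Stieltjes

/-! ### Mertens' estimates -/

section Mertens

open ArithmeticFunction hiding log

lemma sum_log_eq_log_factorial (n : ℕ) : ∑ m ∈ Finset.Ioc 0 n, log m = log n.factorial := by
  induction n with
  | zero => simp
  | succ n ih =>
    rw [Finset.sum_Ioc_succ_top n.zero_le, ih, Nat.factorial_succ, Nat.cast_mul,
      log_mul (mod_cast n.succ_ne_zero) (mod_cast n.factorial_ne_zero), add_comm]

lemma log_factorial_eq_sum_vonMangoldt_mul (n : ℕ) :
    log n.factorial = ∑ d ∈ Finset.Ioc 0 n, vonMangoldt d * ((n / d : ℕ) : ℝ) := by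
  rw [← sum_Ioc_mul_zeta_eq_sum, vonMangoldt_mul_zeta, ← sum_log_eq_log_factorial]
  simp only [ArithmeticFunction.log_apply]

lemma mul_log_sub_le_log_factorial {n : ℕ} (hn : n ≠ 0) : n * log n - n ≤ log n.factorial := by
  have hfact : (0 : ℝ) < n.factorial := mod_cast n.factorial_pos
  have h := Real.log_le_log (by positivity) (pow_div_factorial_le_exp n (Nat.cast_nonneg n) n)
  rw [log_exp, log_div (by positivity) hfact.ne', log_pow] at h
  linarith

lemma log_factorial_le_mul_log (n : ℕ) : log n.factorial ≤ n * log n := by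
  rw [← log_pow]
  exact Real.log_le_log (mod_cast n.factorial_pos) (mod_cast n.factorial_le_pow)

lemma sum_vonMangoldt_le_mul (n : ℕ) :
    ∑ d ∈ Finset.Ioc 0 n, vonMangoldt d ≤ (log 4 + 4) * n := by
  simpa only [Chebyshev.psi, Nat.floor_natCast] using
    Chebyshev.psi_le_const_mul_self n.cast_nonneg

lemma abs_sum_vonMangoldt_div_sub_log_le {n : ℕ} (hn : n ≠ 0) :
    |∑ d ∈ Finset.Ioc 0 n, vonMangoldt d / d - log n| ≤ log 4 + 4 := by
  have hn0 : (0 : ℝ) < n := by positivity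
  have hfact := log_factorial_eq_sum_vonMangoldt_mul n
  have hupper : ∑ d ∈ Finset.Ioc 0 n, vonMangoldt d * ((n / d : ℕ) : ℝ) ≤
      n * ∑ d ∈ Finset.Ioc 0 n, vonMangoldt d / d := by
    rw [Finset.mul_sum]
    refine Finset.sum_le_sum fun d _ => ?_
    rw [← mul_div_assoc, mul_div_right_comm, mul_comm]
    exact mul_le_mul_of_nonneg_right Nat.cast_div_le vonMangoldt_nonneg
  have hlower : n * ∑ d ∈ Finset.Ioc 0 n, vonMangoldt d / d
      - ∑ d ∈ Finset.Ioc 0 n, vonMangoldt d ≤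
      ∑ d ∈ Finset.Ioc 0 n, vonMangoldt d * ((n / d : ℕ) : ℝ) := by
    rw [Finset.mul_sum, ← Finset.sum_sub_distrib]
    refine Finset.sum_le_sum fun d _ => ?_
    have hfloor : (n / d : ℝ) - 1 ≤ ((n / d : ℕ) : ℝ) := by
      rw [← Nat.floor_natCast (R := ℝ) n, ← Nat.floor_div_natCast, Nat.floor_natCast]
      exact (Nat.sub_one_lt_floor _).le
    calc n * (vonMangoldt d / d) - vonMangoldt d = vonMangoldt d * (n / d - 1 : ℝ) := by ring
      _ ≤ _ := mul_le_mul_of_nonneg_left hfloor vonMangoldt_nonneg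
  have hsum := sum_vonMangoldt_le_mul n
  have hlog4 : 0 < log 4 := log_pos (by norm_num)
  have hfact_low := mul_log_sub_le_log_factorial hn
  have hfact_upp := log_factorial_le_mul_log n
  rw [abs_sub_le_iff]
  constructor <;> refine le_of_mul_le_mul_left ?_ hn0 <;> linarith [mul_pos hn0 hlog4]

/-- The primes in `[x, z]`. -/
noncomputable def primesIcc (x z : ℝ) : Finset ℕ := {p ∈ Finset.Icc ⌈x⌉₊ ⌊z⌋₊ | p.Prime}

lemma mem_primesIcc {x z : ℝ} {p : ℕ} :
    p ∈ primesIcc x z ↔ p.Prime ∧ x ≤ p ∧ (p : ℝ) ≤ z := by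
  rw [primesIcc, Finset.mem_filter, Finset.mem_Icc, Nat.ceil_le, and_comm]
  exact and_congr_right fun hp => by rw [Nat.le_floor_iff' hp.ne_zero]

lemma log_mem_Icc_of_mem_primesIcc {x z : ℝ} (hx : 0 < x) {p : ℕ} (hp : p ∈ primesIcc x z) :
    log p ∈ Set.Icc (log x) (log z) := by
  obtain ⟨hprime, hxp, hpz⟩ := mem_primesIcc.1 hp
  exact ⟨Real.log_le_log hx hxp, Real.log_le_log (mod_cast hprime.pos) hpz⟩

lemma sum_log_div_primesIcc_le {x z : ℝ} (hx : 2 ≤ x) (hxz : x ≤ z) :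
    ∑ p ∈ primesIcc x z, log p / p ≤ log z - log x + 13 := by
  obtain ⟨m, hm⟩ : ∃ m, ⌈x⌉₊ = m + 1 :=
    Nat.exists_eq_add_one.2 (Nat.ceil_pos.2 (by linarith))
  have hceil : (m : ℝ) + 1 = ⌈x⌉₊ := mod_cast hm.symm
  have hxm : x ≤ m + 1 := hceil ▸ Nat.le_ceil x
  have hmx : (m : ℝ) + 1 < x + 1 := hceil ▸ Nat.ceil_lt_add_one (by linarith)
  have hm1 : (1 : ℝ) ≤ m := by linarith
  have hmn : m ≤ ⌊z⌋₊ := Nat.le_floor (by linarith)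
  have hn1 : (1 : ℝ) ≤ ⌊z⌋₊ := hm1.trans (mod_cast hmn)
  have hle : ∑ p ∈ primesIcc x z, log p / p ≤ ∑ d ∈ Finset.Ioc m ⌊z⌋₊, vonMangoldt d / d := by
    rw [Finset.sum_congr rfl fun p hp => by
      rw [← vonMangoldt_apply_prime (mem_primesIcc.1 hp).1]]
    refine Finset.sum_le_sum_of_subset_of_nonneg (fun p hp => ?_) fun d _ _ =>
      div_nonneg vonMangoldt_nonneg d.cast_nonneg
    have := Finset.mem_Icc.1 (Finset.mem_filter.1 hp).1
    exact Finset.mem_Ioc.2 ⟨by omega, this.2⟩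
  have hsplit := Finset.sum_Ioc_consecutive (fun d : ℕ => vonMangoldt d / (d : ℝ)) m.zero_le hmn
  have hupp := (abs_le.1 (abs_sum_vonMangoldt_div_sub_log_le
    (n := ⌊z⌋₊) fun h => by rw [h] at hn1; norm_num at hn1)).2
  have hlow := (abs_le.1 (abs_sum_vonMangoldt_div_sub_log_le
    (n := m) fun h => by rw [h] at hm1; norm_num at hm1)).1
  have hlogz : log ⌊z⌋₊ ≤ log z := Real.log_le_log (by linarith) (Nat.floor_le (by linarith))
  have hlogx : log x ≤ log m + log 2 := by
    rw [← Real.log_mul (by linarith) two_ne_zero]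
    exact Real.log_le_log (by linarith) (by linarith)
  have hlog4 : log 4 = 2 * log 2 := by
    rw [show (4 : ℝ) = 2 ^ 2 by norm_num, Real.log_pow, Nat.cast_ofNat]
  linarith [Real.log_two_lt_d9]

lemma sum_one_div_primesIcc_le {x z : ℝ} (hx : 2 ≤ x) (hxz : x ≤ z) :
    ∑ p ∈ primesIcc x z, (1 : ℝ) / p ≤ (∫ y in (log x)..(log z), 1 / y) + 13 / log x := by
  have hlogx : 0 < log x := log_pos (by linarith)
  have hlogp : ∀ p ∈ primesIcc x z, 0 < log (p : ℝ) := fun p hp =>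
    hlogx.trans_le (log_mem_Icc_of_mem_primesIcc (by linarith) hp).1
  have hlogdiv : ∀ p : ℕ, 0 ≤ log p / (p : ℝ) := fun p =>
    div_nonneg (log_natCast_nonneg p) p.cast_nonneg
  have h := sum_mul_le_integral_mul_add_of_head_le (K := 13) (w := fun _ => 1)
    (a := fun p : ℕ => log p / p) (φ := fun y => 1 / y) (Real.log_le_log (by linarith) hxz)
    (fun p hp => log_mem_Icc_of_mem_primesIcc (by linarith) hp) (fun p _ => hlogdiv p)
    continuousOn_const (fun _ _ => zero_le_one)
    (fun t ht => by
      have hxt : x ≤ exp t := by rw [← Real.log_le_iff_le_exp (by linarith)]; exact ht.1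
      rw [intervalIntegral.integral_const, smul_eq_mul, mul_one]
      refine le_trans (Finset.sum_le_sum_of_subset_of_nonneg (fun p hp => ?_) fun p _ _ =>
        hlogdiv p) ((sum_log_div_primesIcc_le hx hxt).trans_eq (by rw [log_exp]))
      obtain ⟨hp, hpt⟩ := Finset.mem_filter.1 hp
      obtain ⟨hprime, hxp, -⟩ := mem_primesIcc.1 hp
      exact mem_primesIcc.2
        ⟨hprime, hxp, (Real.log_le_iff_le_exp (mod_cast hprime.pos)).1 hpt⟩)
    (fun p hp q _ hpq => one_div_le_one_div_of_le (hlogx.trans_le hp.1) hpq)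
    (one_div_nonneg.2 (log_nonneg (by linarith)))
  simp only [mul_one_div] at h
  refine (Finset.sum_congr rfl fun p hp => ?_).trans_le h
  rw [div_right_comm, div_self (hlogp p hp).ne']

lemma sum_one_div_primesIcc_le_half_mul {x z : ℝ} (hx : 2 ≤ x) (hxz : x ≤ z) :
    ∑ p ∈ primesIcc x z, (1 : ℝ) / p ≤ (z - x + 1) / 2 := by
  have hcard : ((primesIcc x z).card : ℝ) ≤ z - x + 1 := by
    have hle : (primesIcc x z).card ≤ ⌊z⌋₊ + 1 - ⌈x⌉₊ :=
      (Finset.card_filter_le _ _).trans_eq (Nat.card_Icc _ _)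
    rcases le_total ⌈x⌉₊ (⌊z⌋₊ + 1) with h | h
    · have hle' : ((primesIcc x z).card : ℝ) ≤ ⌊z⌋₊ + 1 - ⌈x⌉₊ := by
        exact_mod_cast (Nat.cast_le (α := ℝ).2 hle).trans_eq (Nat.cast_sub h)
      linarith [Nat.le_ceil x, Nat.floor_le (show 0 ≤ z by linarith)]
    · rw [Nat.sub_eq_zero_of_le h, Nat.le_zero] at hle
      rw [hle, Nat.cast_zero]
      linarith
  calc ∑ p ∈ primesIcc x z, (1 : ℝ) / p ≤ (primesIcc x z).card • (1 / 2 : ℝ) := by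
        refine Finset.sum_le_card_nsmul _ _ _ fun p hp => ?_
        exact one_div_le_one_div_of_le two_pos (hx.trans (mem_primesIcc.1 hp).2.1)
    _ ≤ (z - x + 1) / 2 := by rw [nsmul_eq_mul]; linarith

lemma integral_one_div_sq {a b : ℝ} (ha : 0 < a) (hab : a ≤ b) :
    ∫ y in a..b, 1 / y ^ 2 = 1 / a - 1 / b := by
  have hpos : ∀ y ∈ Set.uIcc a b, y ≠ 0 := fun y hy =>
    (ha.trans_le (Set.uIcc_of_le hab ▸ hy).1).ne'
  have hderiv : ∀ y ∈ Set.uIcc a b, HasDerivAt (fun y : ℝ => -y⁻¹) (1 / y ^ 2) y := fun y hy => by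
    simpa only [neg_neg, one_div] using (hasDerivAt_inv (hpos y hy)).fun_neg
  rw [intervalIntegral.integral_eq_sub_of_hasDerivAt hderiv]
  · ring
  · exact (continuousOn_const.div (continuousOn_id.pow 2)
      fun y hy => pow_ne_zero 2 (hpos y hy)).intervalIntegrable

lemma integral_one_div_add_const_div_sq {a b : ℝ} (ha : 0 < a) (hab : a ≤ b) (C : ℝ) :
    ∫ y in a..b, (1 / y + C / y ^ 2) = (∫ y in a..b, 1 / y) + C * (1 / a - 1 / b) := by
  have hcont : ∀ k : ℕ, IntervalIntegrable (fun y : ℝ => 1 / y ^ k) MeasureTheory.volume a b :=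
    fun k => (continuousOn_const.div (continuousOn_id.pow k) fun y hy =>
      pow_ne_zero k (ha.trans_le (Set.uIcc_of_le hab ▸ hy).1).ne').intervalIntegrable
  rw [← integral_one_div_sq ha hab, ← intervalIntegral.integral_const_mul,
    ← intervalIntegral.integral_add (by simpa only [pow_one] using hcont 1)
      ((hcont 2).const_mul C)]
  simp only [mul_one_div]

lemma sub_le_mul_one_div_log_sub {x z : ℝ} (hx : 1 < x) (hxz : x ≤ z) :
    z - x ≤ z * log z ^ 2 * (1 / log x - 1 / log z) := by
  have hlogx : 0 < log x := log_pos hx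
  have hlogxz : log x ≤ log z := Real.log_le_log (by linarith) hxz
  have hlogz : 0 < log z := hlogx.trans_le hlogxz
  have hz : 0 < z := by linarith
  have hdiff : z - x ≤ z * (log z - log x) := by
    have h := one_sub_inv_le_log_of_pos (show 0 < z / x by positivity)
    rw [inv_div, log_div hz.ne' (by linarith)] at h
    calc z - x = z * (1 - x / z) := by field_simp
      _ ≤ z * (log z - log x) := mul_le_mul_of_nonneg_left h hz.le
  calc z - x ≤ z * (log z - log x) := hdiff
    _ = z * (log x * log z) * (1 / log x - 1 / log z) := by field_simp
    _ ≤ z * log z ^ 2 * (1 / log x - 1 / log z) := by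
        have := sub_nonneg.2 (one_div_le_one_div_of_le hlogx hlogxz)
        gcongr
        nlinarith

/-- The error at the upper endpoint must be at most `1/2` even for bounded `z`, since the smallest
primes carry a constant proportion of the sum. -/
lemma exists_sum_one_div_primesIcc_le :
    ∃ C : ℝ, 1 ≤ C ∧ ∀ x z : ℝ, 2 ≤ x → x ≤ z →
      ∑ p ∈ primesIcc x z, (1 : ℝ) / p
        ≤ (∫ y in (log x)..(log z), (1 / y + C / y ^ 2)) + min (1 / 2) (C / log z) := by
  have hC0 : 0 ≤ exp 26 * 26 ^ 2 := by positivity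
  refine ⟨exp 26 * 26 ^ 2 + 13, by linarith, fun x z hx hxz => ?_⟩
  set C := exp 26 * 26 ^ 2 + 13
  have hlogx : 0 < log x := log_pos (by linarith)
  have hlogxz : log x ≤ log z := Real.log_le_log (by linarith) hxz
  have hlogz : 0 < log z := hlogx.trans_le hlogxz
  have hinv : 0 ≤ 1 / log x - 1 / log z := sub_nonneg.2 (one_div_le_one_div_of_le hlogx hlogxz)
  rw [integral_one_div_add_const_div_sq hlogx hlogxz]
  rcases le_total (13 / log z) (1 / 2) with hlarge | hsmall
  · have hmin : 13 / log z ≤ min (1 / 2) (C / log z) :=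
      le_min hlarge (by gcongr; linarith)
    have hmul : 13 * (1 / log x - 1 / log z) ≤ C * (1 / log x - 1 / log z) :=
      mul_le_mul_of_nonneg_right (by linarith) hinv
    have h := sum_one_div_primesIcc_le hx hxz
    rw [show 13 / log x = 13 * (1 / log x - 1 / log z) + 13 / log z by ring] at h
    linarith
  · have hmin : min (1 / 2) (C / log z) = 1 / 2 :=
      min_eq_left (hsmall.trans (by gcongr; linarith))
    have hlogz26 : log z ≤ 26 := by rw [le_div_iff₀ hlogz] at hsmall; linarith
    have hz : z ≤ exp 26 := (Real.log_le_iff_le_exp (by linarith)).1 hlogz26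
    have hgap : z - x ≤ C * (1 / log x - 1 / log z) := by
      refine (sub_le_mul_one_div_log_sub (by linarith) hxz).trans
        (mul_le_mul_of_nonneg_right ?_ hinv)
      calc z * log z ^ 2 ≤ exp 26 * 26 ^ 2 := by gcongr
        _ ≤ C := by linarith
    have hint : 0 ≤ ∫ y in (log x)..(log z), 1 / y :=
      intervalIntegral.integral_nonneg hlogxz fun u hu => one_div_nonneg.2 (hlogx.le.trans hu.1)
    rw [hmin]
    linarith [sum_one_div_primesIcc_le_half_mul hx hxz]

end Mertens

/-! ### The delay-differential system of the remainder terms -/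

section Kernel

/-- Right end of the half-line on which `decayKernel c` is constant. -/
noncomputable def plateauEnd (c : ZMod 2) : ℝ := if c = 1 then 3 else 2

/-- The value of `decayKernel c` up to `plateauEnd c`. -/
noncomputable def plateauValue (c : ZMod 2) : ℝ := if c = 1 then 1 else 2

/-- The coefficient `t / (t - 1) ^ 2` of the delay-differential system, truncated at `t = 2` to
make it continuous on the whole line. -/
noncomputable def delayWeight (t : ℝ) : ℝ := max t 2 / (max t 2 - 1) ^ 2

/-- The integral operator whose fixed point is `decayKernel`. -/
noncomputable def delayStep (r : ZMod 2 → ℝ → ℝ) (c : ZMod 2) (s : ℝ) : ℝ :=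
  plateauValue c -
    ∫ t in plateauEnd c..max s (plateauEnd c), delayWeight t * r (c + 1) (t - 1)

/-- The iterates of `delayStep`; the `n`-th one agrees with the fixed point on `(-∞, n]`. -/
noncomputable def decayKernelApprox : ℕ → ZMod 2 → ℝ → ℝ
  | 0 => fun c _ => plateauValue c
  | n + 1 => delayStep (decayKernelApprox n)

/-- The solution of `r c' s = -s / (s - 1) ^ 2 * r (c + 1) (s - 1)` for `plateauEnd c < s`, with
constant value `plateauValue c` before. It governs the decay, in `s = log v / log z`, of the
error made when sifting an interval of length `v` by the primes below `z`. -/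
noncomputable def decayKernel (c : ZMod 2) (s : ℝ) : ℝ := decayKernelApprox ⌈s⌉₊ c s

lemma zmod_two_eq_zero_or_eq_one (c : ZMod 2) : c = 0 ∨ c = 1 := by
  decide +revert

lemma two_le_plateauEnd (c : ZMod 2) : 2 ≤ plateauEnd c := by
  unfold plateauEnd
  split_ifs <;> norm_num

lemma plateauEnd_one : plateauEnd 1 = 3 := if_pos rfl

lemma plateauEnd_zero : plateauEnd 0 = 2 := if_neg zero_ne_one

lemma plateauValue_one : plateauValue 1 = 1 := if_pos rfl

lemma plateauValue_zero : plateauValue 0 = 2 := if_neg zero_ne_one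

lemma plateauValue_le_two (c : ZMod 2) : plateauValue c ≤ 2 := by
  unfold plateauValue
  split_ifs <;> norm_num

lemma delayWeight_of_le {t : ℝ} (h : 2 ≤ t) : delayWeight t = t / (t - 1) ^ 2 := by
  rw [delayWeight, max_eq_left h]

lemma delayWeight_nonneg (t : ℝ) : 0 ≤ delayWeight t := by
  have : 2 ≤ max t 2 := le_max_right _ _
  unfold delayWeight
  positivity

lemma continuous_delayWeight : Continuous delayWeight := by
  refine (by fun_prop : Continuous fun t : ℝ => max t 2).div (by fun_prop) fun t => ?_
  have : 2 ≤ max t 2 := le_max_right _ _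
  exact pow_ne_zero 2 (by linarith)

lemma delayStep_of_le {c : ZMod 2} {s : ℝ} (h : s ≤ plateauEnd c) (r : ZMod 2 → ℝ → ℝ) :
    delayStep r c s = plateauValue c := by
  rw [delayStep, max_eq_right h, intervalIntegral.integral_same, sub_zero]

lemma delayStep_congr {r r' : ZMod 2 → ℝ → ℝ} {a s : ℝ} (h : ∀ c, ∀ t ≤ a, r c t = r' c t)
    (hs : s ≤ a + 1) (c : ZMod 2) : delayStep r c s = delayStep r' c s := by
  rcases le_total s (plateauEnd c) with hsc | hsc
  · rw [delayStep_of_le hsc, delayStep_of_le hsc]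
  · refine congrArg (plateauValue c - ·) (intervalIntegral.integral_congr fun t ht => ?_)
    rw [max_eq_left hsc, Set.uIcc_of_le hsc] at ht
    exact congrArg (delayWeight t * ·) (h _ _ (by linarith [ht.2]))

lemma continuous_delayStep {r : ZMod 2 → ℝ → ℝ} (hr : ∀ c, Continuous (r c)) (c : ZMod 2) :
    Continuous (delayStep r c) := by
  have hcont : Continuous fun t => delayWeight t * r (c + 1) (t - 1) :=
    continuous_delayWeight.mul ((hr _).comp (continuous_sub_right 1))
  exact continuous_const.sub <|
    (intervalIntegral.continuous_primitive (fun a b => hcont.intervalIntegrable a b) _).comp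
      (by fun_prop : Continuous fun s : ℝ => max s (plateauEnd c))

lemma decayKernelApprox_succ_eq (n : ℕ) (c : ZMod 2) {s : ℝ} (hs : s ≤ n + 2) :
    decayKernelApprox (n + 1) c s = decayKernelApprox n c s := by
  induction n generalizing c s with
  | zero =>
    rw [Nat.cast_zero, zero_add] at hs
    exact delayStep_of_le (hs.trans (two_le_plateauEnd c)) _
  | succ n ih => exact delayStep_congr (fun c _ ht => ih c ht) (by push_cast at hs; linarith) c

lemma decayKernelApprox_eq_decayKernel {n : ℕ} {s : ℝ} (c : ZMod 2) (h : s ≤ n) :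
    decayKernelApprox n c s = decayKernel c s := by
  induction n, Nat.ceil_le.2 h using Nat.le_induction with
  | base => rfl
  | succ n hn ih =>
    have hsn : s ≤ n := Nat.ceil_le.1 hn
    rw [decayKernelApprox_succ_eq n c (by linarith), ih hsn]

lemma continuous_decayKernel (c : ZMod 2) : Continuous (decayKernel c) := by
  have happrox (n : ℕ) : ∀ c, Continuous (decayKernelApprox n c) := by
    induction n with
    | zero => exact fun _ => continuous_const
    | succ n ih => exact continuous_delayStep ih
  refine continuous_iff_continuousAt.2 fun s => ?_
  obtain ⟨n, hn⟩ := exists_nat_gt s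
  refine (happrox n c).continuousAt.congr ?_
  filter_upwards [Iio_mem_nhds hn] with t ht
  exact decayKernelApprox_eq_decayKernel c ht.le

lemma delayStep_decayKernel (c : ZMod 2) (s : ℝ) :
    delayStep decayKernel c s = decayKernel c s := by
  obtain ⟨n, hn⟩ := exists_nat_ge s
  rw [← decayKernelApprox_eq_decayKernel (n := n + 1) c (by push_cast; linarith)]
  exact delayStep_congr (fun c t ht => (decayKernelApprox_eq_decayKernel c ht).symm)
    (by linarith) c

lemma decayKernel_of_le {c : ZMod 2} {s : ℝ} (h : s ≤ plateauEnd c) :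
    decayKernel c s = plateauValue c := by
  rw [← delayStep_decayKernel, delayStep_of_le h]

lemma continuous_delayWeight_mul_decayKernel (c : ZMod 2) :
    Continuous fun t => delayWeight t * decayKernel c (t - 1) :=
  continuous_delayWeight.mul ((continuous_decayKernel c).comp (continuous_sub_right 1))

lemma hasDerivAt_decayKernel {c : ZMod 2} {s : ℝ} (h : plateauEnd c < s) :
    HasDerivAt (decayKernel c) (-(s / (s - 1) ^ 2 * decayKernel (c + 1) (s - 1))) s := by
  have hcont := continuous_delayWeight_mul_decayKernel (c + 1)
  rw [← delayWeight_of_le ((two_le_plateauEnd c).trans h.le)]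
  refine ((intervalIntegral.integral_hasDerivAt_right (hcont.intervalIntegrable (plateauEnd c) s)
    (hcont.stronglyMeasurableAtFilter _ _) hcont.continuousAt).const_sub
      (plateauValue c)).congr_of_eventuallyEq ?_
  filter_upwards [Ioi_mem_nhds h] with t ht
  rw [← delayStep_decayKernel, delayStep, max_eq_left ht.le]

lemma hasDerivAt_decayKernel_one {s : ℝ} (h : 3 < s) :
    HasDerivAt (decayKernel 1) (-(s / (s - 1) ^ 2 * decayKernel 0 (s - 1))) s :=
  hasDerivAt_decayKernel (c := 1) (by rwa [plateauEnd_one])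

lemma hasDerivAt_decayKernel_zero {s : ℝ} (h : 2 < s) :
    HasDerivAt (decayKernel 0) (-(s / (s - 1) ^ 2 * decayKernel 1 (s - 1))) s :=
  hasDerivAt_decayKernel (c := 0) (by rwa [plateauEnd_zero])

lemma decayKernel_one_of_le {s : ℝ} (h : s ≤ 3) : decayKernel 1 s = 1 := by
  rw [decayKernel_of_le (by rwa [plateauEnd_one]), plateauValue_one]

lemma decayKernel_zero_of_mem_Icc {s : ℝ} (hs : s ∈ Set.Icc 2 4) :
    decayKernel 0 s = 1 + 1 / (s - 1) - log (s - 1) := by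
  have hderiv : ∀ t ∈ Set.uIcc 2 s, HasDerivAt (fun t => log (t - 1) - (t - 1)⁻¹)
      (delayWeight t * decayKernel 1 (t - 1)) t := fun t ht => by
    rw [Set.uIcc_of_le hs.1] at ht
    have ht1 : t - 1 ≠ 0 := by linarith [ht.1]
    have hsub : HasDerivAt (fun t : ℝ => t - 1) 1 t := (hasDerivAt_id t).sub_const 1
    rw [delayWeight_of_le ht.1, decayKernel_one_of_le (by linarith [ht.2, hs.2])]
    convert! (hsub.log ht1).sub (hsub.inv ht1) using 1
    field_simp
    ring
  rw [← delayStep_decayKernel, delayStep, plateauEnd_zero, plateauValue_zero, max_eq_left hs.1,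
    zero_add, intervalIntegral.integral_eq_sub_of_hasDerivAt hderiv
      ((continuous_delayWeight_mul_decayKernel 1).intervalIntegrable _ _)]
  norm_num
  ring

end Kernel

section Adjoint

lemma intervalIntegrable_of_continuousOn_Ioi {h : ℝ → ℝ} {a b : ℝ}
    (hh : ContinuousOn h (Set.Ioi 0)) (ha : 0 < a) (hb : 0 < b) :
    IntervalIntegrable h MeasureTheory.volume a b :=
  (hh.mono fun _ hx => (lt_min ha hb).trans_le hx.1).intervalIntegrable

lemma hasDerivAt_integral_sub_one {h : ℝ → ℝ} {s : ℝ} (hh : ContinuousOn h (Set.Ioi 0))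
    (hs : 1 < s) : HasDerivAt (fun s => ∫ x in s - 1..s, h x) (h s - h (s - 1)) s := by
  have hint {a b : ℝ} := intervalIntegrable_of_continuousOn_Ioi (a := a) (b := b) hh
  have hprim : ∀ u : ℝ, 0 < u → HasDerivAt (fun s => ∫ x in (1 : ℝ)..s, h x) (h u) u :=
    fun u hu => intervalIntegral.integral_hasDerivAt_right (hint one_pos hu)
      (hh.stronglyMeasurableAtFilter isOpen_Ioi u hu) (hh.continuousAt (Ioi_mem_nhds hu))
  refine ((hprim s (by linarith)).sub
    ((hprim (s - 1) (by linarith)).comp_sub_const s 1)).congr_of_eventuallyEq ?_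
  filter_upwards [Ioi_mem_nhds hs] with t ht
  have ht0 : 0 < t - 1 := sub_pos.2 ht
  exact (intervalIntegral.integral_interval_sub_left (hint one_pos (by linarith))
    (hint one_pos ht0)).symm

lemma continuousOn_integral_sub_one {h : ℝ → ℝ} (hh : ContinuousOn h (Set.Ioi 0)) :
    ContinuousOn (fun s => ∫ x in s - 1..s, h x) (Set.Ici 3) := fun s hs =>
  (hasDerivAt_integral_sub_one hh
    (lt_of_lt_of_le (by norm_num) (Set.mem_Ici.1 hs))).continuousAt.continuousWithinAt

lemma eq_of_hasDerivAt_eq_zero {F : ℝ → ℝ} {a s : ℝ} (hF : ContinuousOn F (Set.Ici a))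
    (hderiv : ∀ s, a < s → HasDerivAt F 0 s) (hs : a ≤ s) : F s = F a := by
  rcases hs.eq_or_lt with rfl | hs
  · rfl
  obtain ⟨t, -, ht⟩ := exists_hasDerivAt_eq_slope F 0 hs (hF.mono Set.Icc_subset_Ici_self)
    fun x hx => hderiv x hx.1
  have := (div_eq_zero_iff.1 ht.symm).resolve_right (sub_pos.2 hs).ne'
  linarith

lemma continuousOn_div_sq {f : ℝ → ℝ} (hf : Continuous f) :
    ContinuousOn (fun x => f x / x ^ 2) (Set.Ioi 0) :=
  hf.continuousOn.div (by fun_prop) fun _ hx => pow_ne_zero 2 (ne_of_gt hx)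

lemma continuousOn_mul_decayKernel_add :
    ContinuousOn (fun x => (x ^ 2 - 1 / 2) * ((decayKernel 1 x + decayKernel 0 x) / x ^ 2))
      (Set.Ioi 0) :=
  ContinuousOn.mul (by fun_prop)
    (continuousOn_div_sq ((continuous_decayKernel 1).add (continuous_decayKernel 0)))

lemma integral_decayKernel_sub_two_three :
    ∫ x in (2 : ℝ)..3, (decayKernel 1 x - decayKernel 0 x) / x ^ 2 = 1 / 6 - log 2 / 3 := by
  have hderiv : ∀ x ∈ Set.uIcc (2 : ℝ) 3, HasDerivAt (fun x => -log (x - 1) / x - x⁻¹)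
      ((decayKernel 1 x - decayKernel 0 x) / x ^ 2) x := fun x hx => by
    rw [Set.uIcc_of_le (by norm_num)] at hx
    have h0 : x ≠ 0 := by linarith [hx.1]
    have h1 : x - 1 ≠ 0 := by linarith [hx.1]
    have hsub : HasDerivAt (fun t : ℝ => t - 1) 1 x := (hasDerivAt_id x).sub_const 1
    rw [decayKernel_one_of_le hx.2,
      decayKernel_zero_of_mem_Icc ⟨hx.1, hx.2.trans (by norm_num)⟩]
    convert! ((hsub.log h1).neg.div (hasDerivAt_id x) h0).sub (hasDerivAt_inv h0) using 1
    simp only [id, Pi.neg_apply]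
    field_simp
    ring
  rw [intervalIntegral.integral_eq_sub_of_hasDerivAt hderiv
    (intervalIntegrable_of_continuousOn_Ioi (continuousOn_div_sq
      ((continuous_decayKernel 1).sub (continuous_decayKernel 0))) two_pos three_pos)]
  norm_num
  ring

lemma integral_mul_decayKernel_add_two_three :
    ∫ x in (2 : ℝ)..3, (x ^ 2 - 1 / 2) * ((decayKernel 1 x + decayKernel 0 x) / x ^ 2) =
      35 / 12 - 7 / 6 * log 2 := by
  have hderiv : ∀ x ∈ Set.uIcc (2 : ℝ) 3, HasDerivAt
      (fun x => (x + 1 / 2 * x⁻¹) * (2 + (x - 1)⁻¹ - log (x - 1)) +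
        (x + 2 * log (x - 1) - 3 / 2 * (x - 1)⁻¹))
      ((x ^ 2 - 1 / 2) * ((decayKernel 1 x + decayKernel 0 x) / x ^ 2)) x := fun x hx => by
    rw [Set.uIcc_of_le (by norm_num)] at hx
    have h0 : x ≠ 0 := by linarith [hx.1]
    have h1 : x - 1 ≠ 0 := by linarith [hx.1]
    have hsub : HasDerivAt (fun t : ℝ => t - 1) 1 x := (hasDerivAt_id x).sub_const 1
    rw [decayKernel_one_of_le hx.2,
      decayKernel_zero_of_mem_Icc ⟨hx.1, hx.2.trans (by norm_num)⟩]
    convert! (((hasDerivAt_id x).add ((hasDerivAt_inv h0).const_mul (1 / 2))).mul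
      (((hsub.inv h1).const_add 2).sub (hsub.log h1))).add
      (((hasDerivAt_id x).add ((hsub.log h1).const_mul 2)).sub
        ((hsub.inv h1).const_mul (3 / 2))) using 1
    simp only [id, Pi.add_apply, Pi.sub_apply, Pi.inv_apply]
    field_simp
    ring
  rw [intervalIntegral.integral_eq_sub_of_hasDerivAt hderiv
    (intervalIntegrable_of_continuousOn_Ioi continuousOn_mul_decayKernel_add two_pos three_pos)]
  norm_num
  ring

/- The left-hand side is constant because `1 / s` solves the adjoint of the equation satisfied by
the difference of the two kernels; in `decayKernel_add_eq_integral` the adjoint solution is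
`s - 2 + s⁻¹ / 2`. -/
lemma decayKernel_sub_div_add_integral {s : ℝ} (hs : 3 ≤ s) :
    (decayKernel 1 s - decayKernel 0 s) / s +
      ∫ x in s - 1..s, (decayKernel 1 x - decayKernel 0 x) / x ^ 2 = 0 := by
  have hcont : Continuous fun s => decayKernel 1 s - decayKernel 0 s :=
    (continuous_decayKernel 1).sub (continuous_decayKernel 0)
  have hconst := eq_of_hasDerivAt_eq_zero (a := 3)
    (F := fun s => (decayKernel 1 s - decayKernel 0 s) / s +
      ∫ x in s - 1..s, (decayKernel 1 x - decayKernel 0 x) / x ^ 2)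
    ((hcont.continuousOn.div continuousOn_id fun x hx => (three_pos.trans_le hx).ne').add
      (continuousOn_integral_sub_one (continuousOn_div_sq hcont)))
    (fun s hs => by
      have h0 : s ≠ 0 := by linarith
      have h1 : s - 1 ≠ 0 := by linarith
      convert! (((hasDerivAt_decayKernel_one hs).sub
        (hasDerivAt_decayKernel_zero (by linarith))).div (hasDerivAt_id s) h0).add
        (hasDerivAt_integral_sub_one (continuousOn_div_sq hcont) (by linarith)) using 1
      simp only [id, Pi.sub_apply]
      field_simp
      ring) hs
  rw [hconst, show (3 : ℝ) - 1 = 2 by norm_num, integral_decayKernel_sub_two_three,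
    decayKernel_one_of_le le_rfl, decayKernel_zero_of_mem_Icc (by norm_num)]
  norm_num
  ring

lemma decayKernel_add_eq_integral {s : ℝ} (hs : 3 ≤ s) :
    (s - 2 + s⁻¹ / 2) * (decayKernel 1 s + decayKernel 0 s) =
      ∫ x in s - 1..s, (x ^ 2 - 1 / 2) * ((decayKernel 1 x + decayKernel 0 x) / x ^ 2) := by
  have hconst := eq_of_hasDerivAt_eq_zero (a := 3)
    (F := fun s => (s - 2 + s⁻¹ / 2) * (decayKernel 1 s + decayKernel 0 s) -
      ∫ x in s - 1..s, (x ^ 2 - 1 / 2) * ((decayKernel 1 x + decayKernel 0 x) / x ^ 2))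
    (((ContinuousOn.add (by fun_prop) ((continuousOn_id.inv₀
      fun x hx => (three_pos.trans_le hx).ne').div_const 2)).mul
      ((continuous_decayKernel 1).add (continuous_decayKernel 0)).continuousOn).sub
      (continuousOn_integral_sub_one continuousOn_mul_decayKernel_add))
    (fun s hs => by
      have h0 : s ≠ 0 := by linarith
      have h1 : s - 1 ≠ 0 := by linarith
      convert! ((((hasDerivAt_id s).sub_const 2).add
        ((hasDerivAt_inv h0).div_const 2)).mul ((hasDerivAt_decayKernel_one hs).add
        (hasDerivAt_decayKernel_zero (by linarith)))).sub
        (hasDerivAt_integral_sub_one continuousOn_mul_decayKernel_add (by linarith)) using 1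
      simp only [id, Pi.add_apply]
      field_simp
      ring) hs
  rw [← sub_eq_zero, hconst, show (3 : ℝ) - 1 = 2 by norm_num,
    integral_mul_decayKernel_add_two_three, decayKernel_one_of_le le_rfl,
    decayKernel_zero_of_mem_Icc (by norm_num)]
  norm_num
  ring
lemma mul_integral_div_sq_le_decayKernel {s : ℝ} (hs : 3 ≤ s)
    (hpos : ∀ c, ∀ t < s, 0 < decayKernel c t) (c : ZMod 2) :
    s * ∫ x in s - 1..s, decayKernel (c + 1) x / x ^ 2 ≤ decayKernel c s := by
  have hint (c : ZMod 2) : IntervalIntegrable (fun x => decayKernel c x / x ^ 2)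
      MeasureTheory.volume (s - 1) s := intervalIntegrable_of_continuousOn_Ioi
    (continuousOn_div_sq (continuous_decayKernel c)) (by linarith) (by linarith)
  have hsub : decayKernel 1 s - decayKernel 0 s = -(s * ((∫ x in s - 1..s,
      decayKernel 1 x / x ^ 2) - ∫ x in s - 1..s, decayKernel 0 x / x ^ 2)) := by
    have h := decayKernel_sub_div_add_integral hs
    simp only [sub_div _ _ (_ ^ 2)] at h
    rw [intervalIntegral.integral_sub (hint 1) (hint 0), div_add' _ _ _ (by linarith),
      div_eq_zero_iff, or_iff_left (by linarith)] at h
    linarith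
  have hadd : s * ((∫ x in s - 1..s, decayKernel 1 x / x ^ 2) +
      ∫ x in s - 1..s, decayKernel 0 x / x ^ 2) ≤ decayKernel 1 s + decayKernel 0 s := by
    have hcoeff : 0 < s - 2 + s⁻¹ / 2 := by
      have : 0 < s⁻¹ := inv_pos.2 (by linarith)
      linarith
    refine le_of_mul_le_mul_left ?_ hcoeff
    rw [decayKernel_add_eq_integral hs, ← mul_assoc, ← intervalIntegral.integral_add (hint 1)
      (hint 0), ← intervalIntegral.integral_const_mul]
    refine intervalIntegral.integral_mono_on_of_le_Ioo (by linarith)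
      (((hint 1).add (hint 0)).const_mul _) (intervalIntegrable_of_continuousOn_Ioi
        continuousOn_mul_decayKernel_add (by linarith) (by linarith)) fun x hx => ?_
    have hnonneg : 0 ≤ (decayKernel 1 x + decayKernel 0 x) / x ^ 2 :=
      div_nonneg (add_pos (hpos 1 x hx.2) (hpos 0 x hx.2)).le (sq_nonneg x)
    rw [← add_div]
    refine mul_le_mul_of_nonneg_right ?_ hnonneg
    rw [show (s - 2 + s⁻¹ / 2) * s = (s - 1) ^ 2 - 1 / 2 by
      have : s ≠ 0 := by linarith
      field_simp
      ring]
    gcongr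
    · linarith
    · exact hx.1.le
  obtain rfl | rfl : c = 0 ∨ c = 1 := zmod_two_eq_zero_or_eq_one c
  · rw [zero_add]
    linarith
  · rw [show (1 + 1 : ZMod 2) = 0 from rfl]
    linarith

lemma decayKernel_pos_of_lt_three {s : ℝ} (c : ZMod 2) (h : s < 3) : 0 < decayKernel c s := by
  rcases le_or_gt s (plateauEnd c) with hs | hs
  · rw [decayKernel_of_le hs, plateauValue]
    split_ifs <;> norm_num
  obtain rfl | rfl : c = 0 ∨ c = 1 := zmod_two_eq_zero_or_eq_one c
  · rw [plateauEnd_zero] at hs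
    rw [decayKernel_zero_of_mem_Icc ⟨hs.le, by linarith⟩]
    have hlog : log (s - 1) ≤ log 2 := log_le_log (by linarith) (by linarith)
    have hinv : 0 < 1 / (s - 1) := one_div_pos.2 (by linarith)
    linarith [log_two_lt_d9]
  · rw [plateauEnd_one] at hs
    exact absurd hs h.not_gt

lemma decayKernel_pos_of_forall_lt {s : ℝ} (hpos : ∀ c, ∀ t < s, 0 < decayKernel c t)
    (c : ZMod 2) : 0 < decayKernel c s := by
  rcases lt_or_ge s 3 with hs | hs
  · exact decayKernel_pos_of_lt_three c hs
  refine (mul_pos (by linarith) ?_).trans_le (mul_integral_div_sq_le_decayKernel hs hpos c)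
  refine intervalIntegral.intervalIntegral_pos_of_pos_on
    (intervalIntegrable_of_continuousOn_Ioi
      (continuousOn_div_sq (continuous_decayKernel _)) (by linarith) (by linarith))
    (fun x hx => div_pos (hpos _ x hx.2) (pow_pos (by linarith [hx.1]) 2)) (by linarith)

lemma decayKernel_pos (c : ZMod 2) (s : ℝ) : 0 < decayKernel c s := by
  by_contra hneg
  let Z : Set ℝ := {t | ∃ c, decayKernel c t ≤ 0}
  have hclosed : IsClosed Z := by
    simp only [Z, Set.ofPred_exists]
    exact isClosed_iUnion_of_finite fun c => isClosed_le (continuous_decayKernel c)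
      continuous_const
  have hbdd : BddBelow Z := ⟨3, fun t ⟨c, ht⟩ => not_lt.1 fun h =>
    ht.not_gt (decayKernel_pos_of_lt_three c h)⟩
  obtain ⟨c₀, hc₀⟩ : sInf Z ∈ Z := hclosed.csInf_mem ⟨s, c, not_lt.1 hneg⟩ hbdd
  exact hc₀.not_gt (decayKernel_pos_of_forall_lt (fun c t ht => not_le.1 fun h =>
    notMem_of_lt_csInf ht hbdd ⟨c, h⟩) c₀)

lemma antitone_decayKernel (c : ZMod 2) : Antitone (decayKernel c) := fun a b hab => by
  have hcont := continuous_delayWeight_mul_decayKernel (c + 1)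
  rw [← delayStep_decayKernel c a, ← delayStep_decayKernel c b]
  refine sub_le_sub_left (intervalIntegral.integral_mono_interval le_rfl (le_max_right _ _)
    (max_le_max_right _ hab) (Filter.Eventually.of_forall fun t =>
      mul_nonneg (delayWeight_nonneg t) (decayKernel_pos _ _).le) ?_) _
  exact hcont.intervalIntegrable _ _

lemma decayKernel_le_two (c : ZMod 2) (s : ℝ) : decayKernel c s ≤ 2 := by
  refine le_trans (antitone_decayKernel c (min_le_left s (plateauEnd c))) ?_
  rw [decayKernel_of_le (min_le_right _ _)]
  exact plateauValue_le_two c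

lemma decayKernel_add_le_exp_mul {s : ℝ} (hs : 5 ≤ s) :
    decayKernel 1 s + decayKernel 0 s ≤
      exp (-1) * (decayKernel 1 (s - 1) + decayKernel 0 (s - 1)) := by
  have hpos (t : ℝ) : 0 < decayKernel 1 t + decayKernel 0 t :=
    add_pos (decayKernel_pos 1 t) (decayKernel_pos 0 t)
  have hintegral : ∫ x in s - 1..s,
      (x ^ 2 - 1 / 2) * ((decayKernel 1 x + decayKernel 0 x) / x ^ 2) ≤
        ∫ _ in s - 1..s, (decayKernel 1 (s - 1) + decayKernel 0 (s - 1)) := by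
    refine intervalIntegral.integral_mono_on (by linarith)
      (intervalIntegrable_of_continuousOn_Ioi continuousOn_mul_decayKernel_add (by linarith)
        (by linarith)) intervalIntegrable_const fun x hx => ?_
    have hx0 : 0 < x := by linarith [hx.1]
    calc (x ^ 2 - 1 / 2) * ((decayKernel 1 x + decayKernel 0 x) / x ^ 2)
        ≤ x ^ 2 * ((decayKernel 1 x + decayKernel 0 x) / x ^ 2) :=
          mul_le_mul_of_nonneg_right (by linarith) (div_nonneg (hpos x).le (sq_nonneg x))
      _ = decayKernel 1 x + decayKernel 0 x := mul_div_cancel₀ _ (by positivity)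
      _ ≤ decayKernel 1 (s - 1) + decayKernel 0 (s - 1) :=
          add_le_add (antitone_decayKernel 1 hx.1) (antitone_decayKernel 0 hx.1)
  rw [← decayKernel_add_eq_integral (by linarith), intervalIntegral.integral_const,
    sub_sub_cancel, one_smul] at hintegral
  have hcoeff : 3 * (decayKernel 1 s + decayKernel 0 s) ≤
      (s - 2 + s⁻¹ / 2) * (decayKernel 1 s + decayKernel 0 s) := by
    have : 0 < s⁻¹ := inv_pos.2 (by linarith)
    exact mul_le_mul_of_nonneg_right (by linarith) (hpos s).le
  rw [exp_neg, inv_mul_eq_div, le_div_iff₀ (exp_pos 1)]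
  nlinarith [exp_one_lt_d9, hpos s]

lemma decayKernel_add_le_exp (s : ℝ) :
    decayKernel 1 s + decayKernel 0 s ≤ 4 * exp 5 * exp (-s) := by
  obtain ⟨n, hn⟩ : ∃ n : ℕ, s ≤ 5 + n := by
    obtain ⟨n, hn⟩ := exists_nat_ge s
    exact ⟨n, by linarith⟩
  induction n generalizing s with
  | zero =>
    rw [Nat.cast_zero, add_zero] at hn
    rw [mul_assoc, ← exp_add]
    have := one_le_exp (show 0 ≤ 5 + -s by linarith)
    linarith [decayKernel_le_two 1 s, decayKernel_le_two 0 s]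
  | succ n ih =>
    rcases le_total s 5 with h | h
    · exact ih s (by linarith [n.cast_nonneg (α := ℝ)])
    calc _ ≤ exp (-1) * (decayKernel 1 (s - 1) + decayKernel 0 (s - 1)) :=
          decayKernel_add_le_exp_mul h
      _ ≤ exp (-1) * (4 * exp 5 * exp (-(s - 1))) :=
          mul_le_mul_of_nonneg_left (ih (s - 1) (by push_cast at hn; linarith)) (exp_pos _).le
      _ = 4 * exp 5 * exp (-s) := by
          rw [show -s = -1 + -(s - 1) by ring, exp_add]
          ring

lemma decayKernel_le_exp (c : ZMod 2) (s : ℝ) : decayKernel c s ≤ 4 * exp 5 * exp (-s) := by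
  have h := decayKernel_add_le_exp s
  obtain rfl | rfl : c = 0 ∨ c = 1 := zmod_two_eq_zero_or_eq_one c
  · linarith [decayKernel_pos 1 s]
  · linarith [decayKernel_pos 0 s]

end Adjoint

/-! ### The error term and its recursive inequality -/

section ErrorTerm

/-- A slowly increasing factor below `1`. Its increments absorb the losses incurred when the
recursion for `decayKernel` is applied to a sum over primes in place of an integral. -/
noncomputable def damping (x : ℝ) : ℝ := 1 - 1 / √(1 + x)

/-- The relative error allowed when sifting an interval of length `exp l` by the primes below
`exp L`, for numbers with a number of prime factors of a prescribed parity. -/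
noncomputable def errorTerm (c : ZMod 2) (l L : ℝ) : ℝ :=
  decayKernel c (l / L) * damping L / l ^ 2 + exp (-(l / L) / 4) / l ^ 3

variable {c : ZMod 2} {x y l L M A B C : ℝ}

lemma damping_le_damping (hx : 0 ≤ x) (hxy : x ≤ y) : damping x ≤ damping y := by
  have : 0 < √(1 + x) := sqrt_pos.2 (by linarith)
  unfold damping
  gcongr

lemma damping_nonneg (hx : 0 ≤ x) : 0 ≤ damping x := by
  simpa [damping] using damping_le_damping le_rfl hx

lemma damping_le_one (x : ℝ) : damping x ≤ 1 :=
  sub_le_self _ (by positivity)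

lemma one_div_sqrt_le_damping_sub (hL : 1 ≤ L) (hLl : L ≤ l / 2) :
    1 / 10 / √l ≤ damping L - damping (L / 2) := by
  have hhalf : √(1 + L / 2) ≤ 7 / 8 * √(1 + L) := by
    rw [sqrt_le_left (by positivity), mul_pow, sq_sqrt (by linarith)]
    linarith
  have hhalf_inv : 8 / 7 * (1 / √(1 + L)) ≤ 1 / √(1 + L / 2) := by
    have hpos : 0 < √(1 + L / 2) := sqrt_pos.2 (by linarith)
    calc 8 / 7 * (1 / √(1 + L)) = 1 / (7 / 8 * √(1 + L)) := by field_simp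
      _ ≤ 1 / √(1 + L / 2) := one_div_le_one_div_of_le hpos hhalf
  have hsqrt_inv : 1 / √l ≤ 1 / √(1 + L) :=
    one_div_le_one_div_of_le (sqrt_pos.2 (by linarith)) (sqrt_le_sqrt (by linarith))
  have hnonneg : 0 ≤ 1 / √l := by positivity
  rw [div_eq_mul_one_div (1 / 10), damping, damping]
  linarith

lemma continuousOn_damping : ContinuousOn damping (Set.Ici 0) := by
  refine continuousOn_const.sub (continuousOn_const.div (by fun_prop) fun x hx => ?_)
  have hx : 0 ≤ x := hx
  positivity

lemma errorTerm_sub_eq (c : ZMod 2) (l : ℝ) (hy : 0 < y) :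
    errorTerm c (l - y) y = decayKernel c (l / y - 1) * damping y / (l - y) ^ 2
      + exp (1 / 4) * exp (-(l / 4 / y)) / (l - y) ^ 3 := by
  rw [errorTerm, sub_div, div_self hy.ne', ← exp_add]
  congr 3
  ring

lemma errorTerm_nonneg (hl : 0 ≤ l) (hL : 0 ≤ L) : 0 ≤ errorTerm c l L := by
  have := damping_nonneg hL
  have := (decayKernel_pos c (l / L)).le
  unfold errorTerm
  positivity

lemma errorTerm_sub_le_errorTerm_sub (hx : 0 < x) (hxy : x ≤ y) (hyl : y < l) :
    errorTerm c (l - x) x ≤ errorTerm c (l - y) y := by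
  have hy : 0 < y := hx.trans_le hxy
  have hl : 0 < l := hy.trans hyl
  have hkernel : decayKernel c (l / x - 1) ≤ decayKernel c (l / y - 1) :=
    antitone_decayKernel c (by gcongr)
  have hpos := (decayKernel_pos c (l / y - 1)).le
  have hdamping := damping_le_damping hx.le hxy
  have hdamping_x := damping_nonneg hx.le
  have hdamping_y := damping_nonneg hy.le
  rw [errorTerm_sub_eq c l hx, errorTerm_sub_eq c l hy]
  gcongr

lemma continuousOn_errorTerm_sub (hA : 0 < A) (hBl : B < l) :
    ContinuousOn (fun y => errorTerm c (l - y) y) (Set.Icc A B) := by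
  have hpos (y : ℝ) (hy : y ∈ Set.Icc A B) : 0 < y := hA.trans_le hy.1
  have hsub_pos (y : ℝ) (hy : y ∈ Set.Icc A B) : 0 < l - y := by linarith [hy.2]
  have hdiv : ContinuousOn (fun y => (l - y) / y) (Set.Icc A B) :=
    (by fun_prop : ContinuousOn (fun y => l - y) _).div continuousOn_id fun y hy => (hpos y hy).ne'
  refine ContinuousOn.add (ContinuousOn.div (ContinuousOn.mul ?_ ?_) (by fun_prop) ?_)
    (ContinuousOn.div (by fun_prop) (by fun_prop) ?_)
  · exact (continuous_decayKernel c).comp_continuousOn hdiv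
  · exact continuousOn_damping.mono fun y hy => (hpos y hy).le
  · exact fun y hy => (pow_pos (hsub_pos y hy) 2).ne'
  · exact fun y hy => (pow_pos (hsub_pos y hy) 3).ne'

lemma decayKernel_mul_damping_div_sq_le (c : ZMod 2) (hy : 0 < y) (hyl : y ≤ l / 2) :
    decayKernel c (l / y - 1) * damping y / (l - y) ^ 2 ≤
      16 * exp 6 * exp (-(l / y)) / l ^ 2 := by
  have hl : 0 < l := by linarith
  have hkernel : decayKernel c (l / y - 1) ≤ 4 * exp 6 * exp (-(l / y)) := by
    refine (decayKernel_le_exp c _).trans_eq ?_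
    rw [mul_assoc, mul_assoc, ← exp_add, ← exp_add]
    ring_nf
  have hhalf : l / 2 ≤ l - y := by linarith
  have hdamping := damping_nonneg hy.le
  calc decayKernel c (l / y - 1) * damping y / (l - y) ^ 2
      ≤ 4 * exp 6 * exp (-(l / y)) * 1 / (l / 2) ^ 2 := by
        gcongr
        exact damping_le_one y
    _ = 16 * exp 6 * exp (-(l / y)) / l ^ 2 := by field_simp; ring

lemma continuousOn_const_div (l : ℝ) (hA : 0 < A) :
    ContinuousOn (fun y => l / y) (Set.Icc A B) :=
  continuousOn_const.div continuousOn_id fun _ hy => (hA.trans_le hy.1).ne'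

lemma intervalIntegrable_decayKernel_mul (c : ZMod 2) (hA : 0 < A) (hAB : A ≤ B) (hBl : B < l) :
    IntervalIntegrable (fun y => decayKernel c (l / y - 1) * l ^ 2 / (y * (l - y) ^ 2))
      MeasureTheory.volume A B := by
  refine ContinuousOn.intervalIntegrable ?_
  rw [Set.uIcc_of_le hAB]
  refine ContinuousOn.div (ContinuousOn.mul ?_ continuousOn_const) (by fun_prop) fun y hy => ?_
  · exact (continuous_decayKernel c).comp_continuousOn
      ((continuousOn_const_div l hA).sub continuousOn_const)
  · have : 0 < y := hA.trans_le hy.1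
    have : 0 < l - y := by linarith [hy.2]
    positivity

lemma integral_decayKernel_mul (hA : 0 < A) (hAB : A ≤ B) (hB : B ≤ l / plateauEnd c) :
    ∫ y in A..B, decayKernel (c + 1) (l / y - 1) * l ^ 2 / (y * (l - y) ^ 2) =
      decayKernel c (l / B) - decayKernel c (l / A) := by
  have hend := two_le_plateauEnd c
  have hBl : B * plateauEnd c ≤ l := (le_div_iff₀ (by linarith)).1 hB
  have hBl' : B < l := by nlinarith
  refine intervalIntegral.integral_eq_sub_of_hasDerivAt_of_le (f := fun y => decayKernel c (l / y))
    hAB ((continuous_decayKernel c).comp_continuousOn (continuousOn_const_div l hA)) ?_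
    (intervalIntegrable_decayKernel_mul _ hA hAB hBl')
  intro y hy
  have hy0 : 0 < y := hA.trans hy.1
  have hly : l - y ≠ 0 := by linarith [hy.2]
  have hlt : plateauEnd c < l / y := by
    rw [lt_div_iff₀ hy0]
    nlinarith [hy.2]
  convert! (hasDerivAt_decayKernel hlt).comp y ((hasDerivAt_inv hy0.ne').const_mul l) using 1
  have hsub : l / y - 1 = (l - y) / y := by field_simp
  generalize decayKernel (c + 1) (l / y - 1) = r
  rw [hsub]
  field_simp

lemma intervalIntegrable_exp_neg_div (k : ℝ) (hA : 0 < A) (hAB : A ≤ B) :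
    IntervalIntegrable (fun y => exp (-(k / y)) / y ^ 2) MeasureTheory.volume A B := by
  refine ContinuousOn.intervalIntegrable ?_
  rw [Set.uIcc_of_le hAB]
  exact (continuousOn_const_div k hA).neg.rexp.div (by fun_prop) fun y hy =>
    (pow_pos (hA.trans_le hy.1) 2).ne'

lemma integral_exp_neg_div {k : ℝ} (hk : 0 < k) (hA : 0 < A) (hAB : A ≤ B) :
    ∫ y in A..B, exp (-(k / y)) / y ^ 2 = exp (-(k / B)) / k - exp (-(k / A)) / k := by
  refine intervalIntegral.integral_eq_sub_of_hasDerivAt_of_le (f := fun y => exp (-(k / y)) / k)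
    hAB ((continuousOn_const_div k hA).neg.rexp.div_const k) ?_
    (intervalIntegrable_exp_neg_div k hA hAB)
  intro y hy
  have hy0 : 0 < y := hA.trans hy.1
  have hderiv : HasDerivAt (fun y => -(k / y)) (-(k * -(y ^ 2)⁻¹)) y :=
    ((hasDerivAt_inv hy0.ne').const_mul k).neg
  refine (hderiv.exp.div_const k).congr_deriv ?_
  field_simp

lemma mul_errorTerm_sub_le (c : ZMod 2) (hC : 0 ≤ C) (hy : 0 < y) (hyB : y ≤ B) (hBL : B ≤ L)
    (hL : L ≤ l / 2) :
    (1 / y + C / y ^ 2) * errorTerm c (l - y) y ≤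
      damping B / l ^ 2 * (decayKernel c (l / y - 1) * l ^ 2 / (y * (l - y) ^ 2))
      + 16 * C * exp 6 / l ^ 2 * (exp (-(l / y)) / y ^ 2)
      + exp (1 / 4) / (l - L) ^ 3 * (L + C) * (exp (-(l / 4 / y)) / y ^ 2) := by
  have hl : 0 < l := by linarith
  have hlL : 0 < l - L := by linarith
  have hyl : y ≤ l / 2 := by linarith
  have hly : 0 < l - y := by linarith
  have hkernel_pos := (decayKernel_pos c (l / y - 1)).le
  have hmain : 1 / y * (decayKernel c (l / y - 1) * damping y / (l - y) ^ 2) ≤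
      damping B / l ^ 2 * (decayKernel c (l / y - 1) * l ^ 2 / (y * (l - y) ^ 2)) :=
    calc 1 / y * (decayKernel c (l / y - 1) * damping y / (l - y) ^ 2)
        ≤ 1 / y * (decayKernel c (l / y - 1) * damping B / (l - y) ^ 2) := by
          gcongr
          exact damping_le_damping hy.le hyB
      _ = _ := by field_simp
  have hmertens : C / y ^ 2 * (decayKernel c (l / y - 1) * damping y / (l - y) ^ 2) ≤
      16 * C * exp 6 / l ^ 2 * (exp (-(l / y)) / y ^ 2) :=
    calc C / y ^ 2 * (decayKernel c (l / y - 1) * damping y / (l - y) ^ 2)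
        ≤ C / y ^ 2 * (16 * exp 6 * exp (-(l / y)) / l ^ 2) :=
          mul_le_mul_of_nonneg_left (decayKernel_mul_damping_div_sq_le c hy hyl) (by positivity)
      _ = _ := by ring
  have hexp : (1 / y + C / y ^ 2) * (exp (1 / 4) * exp (-(l / 4 / y)) / (l - y) ^ 3) ≤
      exp (1 / 4) / (l - L) ^ 3 * (L + C) * (exp (-(l / 4 / y)) / y ^ 2) := by
    have hweight : 1 / y + C / y ^ 2 ≤ (L + C) / y ^ 2 := by
      rw [show 1 / y = y / y ^ 2 by field_simp, ← add_div]
      gcongr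
      linarith
    have hLC : 0 ≤ L + C := by linarith
    calc (1 / y + C / y ^ 2) * (exp (1 / 4) * exp (-(l / 4 / y)) / (l - y) ^ 3)
        ≤ (L + C) / y ^ 2 * (exp (1 / 4) * exp (-(l / 4 / y)) / (l - L) ^ 3) := by
          gcongr
          linarith
      _ = _ := by ring
  rw [errorTerm_sub_eq c l hy]
  linarith

lemma intervalIntegrable_mul_errorTerm_sub (c : ZMod 2) (C : ℝ) (hA : 0 < A) (hAB : A ≤ B)
    (hBl : B < l) :
    IntervalIntegrable (fun y => (1 / y + C / y ^ 2) * errorTerm c (l - y) y)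
      MeasureTheory.volume A B := by
  refine ContinuousOn.intervalIntegrable ?_
  rw [Set.uIcc_of_le hAB]
  exact ((continuousOn_const_div 1 hA).add (continuousOn_const.div (by fun_prop) fun y hy =>
    (pow_pos (hA.trans_le hy.1) 2).ne')).mul (continuousOn_errorTerm_sub hA hBl)

lemma integral_mul_errorTerm_sub_le (hC : 0 ≤ C) (hA : 0 < A) (hAB : A ≤ B) (hBL : B ≤ L)
    (hL : L ≤ l / plateauEnd c) :
    ∫ y in A..B, (1 / y + C / y ^ 2) * errorTerm (c + 1) (l - y) y ≤
      damping B / l ^ 2 * (decayKernel c (l / B) - decayKernel c (l / A))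
      + 16 * C * exp 6 / l ^ 2 * (exp (-(l / B)) / l - exp (-(l / A)) / l)
      + exp (1 / 4) / (l - L) ^ 3 * (L + C) *
        (exp (-(l / 4 / B)) / (l / 4) - exp (-(l / 4 / A)) / (l / 4)) := by
  have hLl : L ≤ l / 2 := by
    have hend := two_le_plateauEnd c
    rw [le_div_iff₀ (by linarith)] at hL ⊢
    nlinarith
  have hl : 0 < l := by linarith
  have hBl : B < l := by linarith
  have hkernel := intervalIntegrable_decayKernel_mul (c + 1) hA hAB hBl
  have hexp (k : ℝ) := intervalIntegrable_exp_neg_div k hA hAB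
  rw [← integral_decayKernel_mul hA hAB (hBL.trans hL), ← integral_exp_neg_div hl hA hAB,
    ← integral_exp_neg_div (by linarith) hA hAB, ← intervalIntegral.integral_const_mul,
    ← intervalIntegral.integral_const_mul, ← intervalIntegral.integral_const_mul,
    ← intervalIntegral.integral_add (hkernel.const_mul _) ((hexp _).const_mul _),
    ← intervalIntegral.integral_add ((hkernel.const_mul _).add ((hexp _).const_mul _))
      ((hexp _).const_mul _)]
  exact intervalIntegral.integral_mono_on hAB (intervalIntegrable_mul_errorTerm_sub _ C hA hAB hBl)
    (((hkernel.const_mul _).add ((hexp _).const_mul _)).add ((hexp _).const_mul _))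
    fun y hy => mul_errorTerm_sub_le _ hC (hA.trans_le hy.1) hy.2 hBL hLl

lemma min_mul_errorTerm_sub_le (c : ZMod 2) (hC : 0 ≤ C) (hL : 0 < L) (hLl : L ≤ l / 2) :
    min (1 / 2) (C / L) * errorTerm c (l - L) L ≤
      16 * C * exp 6 * (l / L * exp (-(l / L))) / l ^ 3
      + exp (1 / 4) / (l - L) ^ 3 * exp (-(l / L) / 4) * (1 / 2) := by
  have hl : 0 < l := by linarith
  have hlL : 0 < l - L := by linarith
  have hnonneg : 0 ≤ decayKernel c (l / L - 1) * damping L / (l - L) ^ 2 := by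
    have := (decayKernel_pos c (l / L - 1)).le
    have := damping_nonneg hL.le
    positivity
  have hkernel := decayKernel_mul_damping_div_sq_le c hL hLl
  rw [errorTerm_sub_eq c l hL, mul_add]
  calc _ ≤ C / L * (16 * exp 6 * exp (-(l / L)) / l ^ 2)
        + 1 / 2 * (exp (1 / 4) * exp (-(l / 4 / L)) / (l - L) ^ 3) := by
        gcongr
        · exact min_le_right _ _
        · exact min_le_left _ _
    _ = _ := by
        rw [show -(l / 4 / L) = -(l / L) / 4 by ring]
        field_simp

lemma integral_mul_errorTerm_sub_le_of_split (hC : 0 ≤ C) (hA : 0 < A) (hAM : A ≤ M) (hML : M ≤ L)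
    (hL : L ≤ l / plateauEnd c) :
    ∫ y in A..L, (1 / y + C / y ^ 2) * errorTerm (c + 1) (l - y) y ≤
      (damping L * decayKernel c (l / L) - (damping L - damping M) * decayKernel c (l / M)) / l ^ 2
      + 16 * C * exp 6 * exp (-(l / L)) / l ^ 3
      + exp (1 / 4) / (l - L) ^ 3 * exp (-(l / L) / 4) * ((L + C) * 4 / l) := by
  have hM : 0 < M := hA.trans_le hAM
  have hLl : L ≤ l / 2 := by
    have hend := two_le_plateauEnd c
    rw [le_div_iff₀ (by linarith)] at hL ⊢
    nlinarith
  have hl : 0 < l := by linarith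
  have hlL : 0 < l - L := by linarith
  rw [← intervalIntegral.integral_add_adjacent_intervals
    (intervalIntegrable_mul_errorTerm_sub (c + 1) C hA hAM (by linarith))
    (intervalIntegrable_mul_errorTerm_sub (c + 1) C hM hML (by linarith))]
  refine (add_le_add (integral_mul_errorTerm_sub_le hC hA hAM hML hL)
    (integral_mul_errorTerm_sub_le hC hM hML le_rfl hL)).trans ?_
  have hdrop_kernel : 0 ≤ damping M / l ^ 2 * decayKernel c (l / A) := by
    have := damping_nonneg hM.le
    have := (decayKernel_pos c (l / A)).le
    positivity
  have hdrop_mertens : 0 ≤ 16 * C * exp 6 / l ^ 2 * (exp (-(l / A)) / l) := by positivity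
  have hdrop_exp : 0 ≤ exp (1 / 4) / (l - L) ^ 3 * (L + C) * (exp (-(l / 4 / A)) / (l / 4)) := by
    have : 0 ≤ L + C := by linarith
    positivity
  have hexp : exp (-(l / 4 / L)) / (l / 4) = exp (-(l / L) / 4) * 4 / l := by
    rw [show -(l / 4 / L) = -(l / L) / 4 by ring]
    field_simp
  rw [hexp]
  linear_combination hdrop_kernel + hdrop_mertens + hdrop_exp

end ErrorTerm

section ErrorRecursion

variable {c : ZMod 2} {l L C K s₀ ε : ℝ}

/-- The bound obtained for the sum over primes in the recursion for `errorTerm c l L`, when the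
sum is split at `exp M` and `C` is the constant in Mertens' theorem. -/
noncomputable def errorTermBound (C : ℝ) (c : ZMod 2) (l L M : ℝ) : ℝ :=
  (damping L * decayKernel c (l / L) - (damping L - damping M) * decayKernel c (l / M)) / l ^ 2
    + 16 * C * exp 6 * ((1 + l / L) * exp (-(l / L))) / l ^ 3
    + exp (1 / 4) / (l - L) ^ 3 * exp (-(l / L) / 4) * ((L + C) * 4 / l + 1 / 2)

lemma le_half_of_le_div_plateauEnd (hL0 : 0 ≤ L) (hL : L ≤ l / plateauEnd c) : L ≤ l / 2 := by
  have hend := two_le_plateauEnd c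
  rw [le_div_iff₀ (by linarith)] at hL ⊢
  nlinarith

lemma exists_sum_errorTerm_le : ∃ C : ℝ, 1 ≤ C ∧ ∀ (c : ZMod 2) (l L M : ℝ), log 2 ≤ M → M ≤ L →
    L ≤ l / plateauEnd c →
    ∑ p ∈ primesIcc 2 (exp L), (1 : ℝ) / p * errorTerm (c + 1) (l - log p) (log p) ≤
      errorTermBound C c l L M := by
  obtain ⟨C, hC, hmertens⟩ := exists_sum_one_div_primesIcc_le
  refine ⟨C, hC, fun c l L M hM hML hL => ?_⟩
  have hlog : 0 < log 2 := log_pos one_lt_two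
  have hL0 : 0 < L := by linarith
  have hLl := le_half_of_le_div_plateauEnd hL0.le hL
  have htail (t : ℝ) (ht : t ∈ Set.Icc (log 2) L) :
      ∑ p ∈ (primesIcc 2 (exp L)).filter fun p : ℕ => t ≤ log p, (1 : ℝ) / p ≤
        (∫ y in t..L, (1 / y + C / y ^ 2)) + min (1 / 2) (C / L) := by
    have hexp : (2 : ℝ) ≤ exp t := (log_le_iff_le_exp two_pos).1 ht.1
    refine le_trans (Finset.sum_le_sum_of_subset_of_nonneg (fun p hp => ?_) fun p _ _ => ?_)
      (by simpa only [log_exp] using hmertens (exp t) (exp L) hexp (exp_le_exp.2 ht.2))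
    · rw [Finset.mem_filter, mem_primesIcc] at hp
      rw [mem_primesIcc]
      exact ⟨hp.1.1, (le_log_iff_exp_le (by linarith [hp.1.2.1])).1 hp.2, hp.1.2.2⟩
    · positivity
  have hpos (y : ℝ) (hy : y ∈ Set.Icc (log 2) L) : 0 < y := hlog.trans_le hy.1
  have hsum := sum_mul_le_integral_mul_add_of_tail_le
    (x := fun p : ℕ => log p) (a := fun p : ℕ => (1 : ℝ) / p) (w := fun y => 1 / y + C / y ^ 2)
    (φ := fun y => errorTerm (c + 1) (l - y) y) (hM.trans hML)
    (fun p hp => by simpa only [log_exp] using log_mem_Icc_of_mem_primesIcc two_pos hp)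
    (fun p _ => by positivity)
    ((continuousOn_const_div 1 hlog).add (continuousOn_const.div (by fun_prop) fun y hy =>
      (pow_pos (hpos y hy) 2).ne'))
    (fun y hy => by have := hpos y hy; positivity) htail
    (fun x hx y hy hxy => errorTerm_sub_le_errorTerm_sub (hpos x hx) hxy (by linarith [hy.2]))
    (errorTerm_nonneg (by linarith) hlog.le)
  refine hsum.trans ((add_le_add (integral_mul_errorTerm_sub_le_of_split (by linarith) hlog hM hML
    hL) (min_mul_errorTerm_sub_le (c + 1) (by linarith) hL0 hLl)).trans_eq ?_)
  unfold errorTermBound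
  ring

lemma exp_one_div_four_le : exp (1 / 4) ≤ 1.29 := by
  refine le_of_pow_le_pow_left₀ four_ne_zero (by norm_num) ?_
  rw [← exp_nat_mul]
  norm_num
  linarith [exp_one_lt_d9]

lemma exp_term_errorTermBound_half_le (hC : 0 ≤ C) (hL : 0 < L) (hLl : L ≤ l / 2)
    (hlC : 200 * C ≤ l) :
    exp (1 / 4) / (l - L) ^ 3 * exp (-(l / L) / 4) * ((L + C) * 4 / l + 1 / 2) ≤ 31 / l ^ 3 := by
  have hl0 : 0 < l := by linarith
  have hquarter : exp (1 / 4) ≤ 1.29 := exp_one_div_four_le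
  have hle_one : exp (-(l / L) / 4) ≤ 1 := by
    have : 0 ≤ l / L := by positivity
    exact exp_le_one_iff.2 (by linarith)
  have hfactor : (L + C) * 4 / l ≤ 2.02 := by
    rw [div_le_iff₀ hl0]
    linarith
  calc _ ≤ 1.29 / (l / 2) ^ 3 * 1 * (2.02 + 1 / 2) := by
        gcongr
        linarith
    _ = (1.29 * 8 * 2.52) / l ^ 3 := by ring
    _ ≤ 31 / l ^ 3 := by gcongr; norm_num

/-- Splitting the sum at `exp (L / 2)` gains a term of relative size `1 / √l`, which dominates
all the errors as long as `l / L` stays bounded. -/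
lemma errorTermBound_half_add_le (hC : 1 ≤ C) (hL : 1 ≤ L) (hLl : L ≤ l / 2) (hlC : 200 * C ≤ l)
    (hs : l ≤ s₀ * L)
    (hl : (10 * (16 * C * exp 6 + 31 + K) / decayKernel c (2 * s₀)) ^ 2 ≤ l) (hε : ε ≤ K / l ^ 3) :
    errorTermBound C c l L (L / 2) + ε ≤ errorTerm c l L := by
  have hl0 : 0 < l := by linarith
  set Q := 16 * C * exp 6 + 31 + K with hQ
  set ρ := decayKernel c (2 * s₀)
  have hρ : 0 < ρ := decayKernel_pos c _
  have hgain : Q / l ^ 3 ≤ (damping L - damping (L / 2)) * decayKernel c (l / (L / 2)) / l ^ 2 := by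
    have hkernel : ρ ≤ decayKernel c (l / (L / 2)) :=
      antitone_decayKernel c ((div_le_iff₀ (by linarith)).2 (by linarith))
    have hQ_le : 10 * Q ≤ √l * ρ := (div_le_iff₀ hρ).1 (le_sqrt_of_sq_le hl)
    calc Q / l ^ 3 ≤ (√l * ρ / 10) / l ^ 3 := by gcongr; linarith
      _ = 1 / 10 / √l * ρ / l ^ 2 := by
        field_simp
        rw [sq_sqrt hl0.le]
      _ ≤ _ := by
        have hgap := one_div_sqrt_le_damping_sub hL hLl
        have : 0 ≤ 1 / 10 / √l := by positivity
        gcongr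
        exact this.trans hgap
  have hmertens : 16 * C * exp 6 * ((1 + l / L) * exp (-(l / L))) / l ^ 3 ≤
      16 * C * exp 6 / l ^ 3 := by
    have : (1 + l / L) * exp (-(l / L)) ≤ 1 := by
      rw [exp_neg, mul_inv_le_iff₀ (exp_pos _), one_mul, add_comm]
      exact add_one_le_exp _
    exact div_le_div_of_nonneg_right (mul_le_of_le_one_right (by positivity) this) (by positivity)
  have hexp := exp_term_errorTermBound_half_le (by linarith) (by linarith) hLl hlC
  have hexp_nonneg : 0 ≤ exp (-(l / L) / 4) / l ^ 3 := by positivity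
  have hQ_div : Q / l ^ 3 = 16 * C * exp 6 / l ^ 3 + 31 / l ^ 3 + K / l ^ 3 := by
    rw [hQ, add_div, add_div]
  rw [errorTermBound, errorTerm, sub_div, mul_comm (decayKernel c (l / L))]
  linarith

/-- The main terms cancel, and the exponential term has a factor smaller than `1` to spare when
`l / L` is large. -/
lemma errorTermBound_self_add_le (hC : 1 ≤ C) (hL : log 2 ≤ L) (hLl : L ≤ l / 100)
    (hlC : 200 * C ≤ l)
    (hs : 16 * C * exp 6 * ((1 + l / L) * exp (-(l / L))) ≤ 0.01 * exp (-(l / L) / 4))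
    (hl : K * l ^ 3 * exp (-(13 / 100 * l)) ≤ 0.01) (hε : ε ≤ K * exp (-(l / 2))) :
    errorTermBound C c l L L + ε ≤ errorTerm c l L := by
  have hlog := log_two_gt_d9
  have hL0 : 0 < L := by linarith
  have hl0 : 0 < l := by linarith
  set E := exp (-(l / L) / 4) with hE
  have hexp : exp (1 / 4) / (l - L) ^ 3 * E * ((L + C) * 4 / l + 1 / 2) ≤ 0.8 * E / l ^ 3 := by
    have hquarter : exp (1 / 4) ≤ 1.29 := exp_one_div_four_le
    have hfactor : (L + C) * 4 / l ≤ 0.06 := by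
      rw [div_le_iff₀ hl0]
      linarith
    calc _ ≤ 1.29 / (0.99 * l) ^ 3 * E * (0.06 + 1 / 2) := by
          gcongr
          linarith
      _ = (1.29 / 0.99 ^ 3 * 0.56) * E / l ^ 3 := by ring
      _ ≤ 0.8 * E / l ^ 3 := by gcongr; norm_num
  have hε_le : K * exp (-(l / 2)) ≤ 0.01 * E / l ^ 3 := by
    have hE_le : exp (-(37 / 100 * l)) ≤ E := by
      have hlL_le : l / L ≤ 1.46 * l := by
        rw [div_le_iff₀ hL0]
        nlinarith
      exact exp_le_exp.2 (by linarith)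
    rw [le_div_iff₀ (by positivity)]
    calc K * exp (-(l / 2)) * l ^ 3
        = K * l ^ 3 * exp (-(13 / 100 * l)) * exp (-(37 / 100 * l)) := by
          rw [mul_assoc (K * l ^ 3), ← exp_add]
          ring_nf
      _ ≤ 0.01 * E := by gcongr
  have hmertens : 16 * C * exp 6 * ((1 + l / L) * exp (-(l / L))) / l ^ 3 ≤
      0.01 * E / l ^ 3 := by gcongr
  have hE_nonneg : 0 ≤ E / l ^ 3 := by positivity
  rw [errorTermBound, errorTerm, ← hE, sub_self, zero_mul, sub_zero,
    mul_comm (decayKernel c (l / L))]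
  linear_combination hexp + hε_le + hmertens + hε + 0.18 * hE_nonneg

lemma tendsto_pow_mul_exp_neg_mul (n : ℕ) {b : ℝ} (hb : 0 < b) :
    Filter.Tendsto (fun x => x ^ n * exp (-(b * x))) Filter.atTop (nhds 0) := by
  have h := ((tendsto_pow_mul_exp_neg_atTop_nhds_zero n).comp
    (Filter.tendsto_id.const_mul_atTop hb)).const_mul (b ^ n)⁻¹
  rw [mul_zero] at h
  refine h.congr fun x => ?_
  simp only [Function.comp_apply, id, mul_pow]
  field_simp

lemma eventually_mul_exp_neg_le (a : ℝ) :
    ∀ᶠ s in Filter.atTop, a * ((1 + s) * exp (-s)) ≤ 0.01 * exp (-s / 4) := by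
  have h := ((tendsto_pow_mul_exp_neg_mul 0 (b := 3 / 4) (by norm_num)).add
    (tendsto_pow_mul_exp_neg_mul 1 (b := 3 / 4) (by norm_num))).const_mul a
  rw [add_zero, mul_zero] at h
  filter_upwards [h.eventually_le_const (show (0 : ℝ) < 0.01 by norm_num)] with s hs
  calc a * ((1 + s) * exp (-s))
      = a * (s ^ 0 * exp (-(3 / 4 * s)) + s ^ 1 * exp (-(3 / 4 * s))) * exp (-s / 4) := by
        have hsplit : exp (-s) = exp (-(3 / 4 * s)) * exp (-s / 4) := by
          rw [← exp_add]
          ring_nf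
        rw [hsplit]
        ring
    _ ≤ 0.01 * exp (-s / 4) := by gcongr

lemma eventually_mul_pow_mul_exp_neg_le (K : ℝ) :
    ∀ᶠ l in Filter.atTop, K * l ^ 3 * exp (-(13 / 100 * l)) ≤ 0.01 := by
  have h := (tendsto_pow_mul_exp_neg_mul 3 (b := 13 / 100) (by norm_num)).const_mul K
  rw [mul_zero] at h
  filter_upwards [h.eventually_le_const (show (0 : ℝ) < 0.01 by norm_num)] with l hl
  rwa [mul_assoc]

theorem exists_sum_errorTerm_add_le : ∃ s₀ : ℝ, 100 ≤ s₀ ∧ ∀ (K : ℝ) (c : ZMod 2),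
    ∀ᶠ l in Filter.atTop, ∀ L ε : ℝ, log 2 ≤ L → L ≤ l / plateauEnd c →
      (l / L < s₀ → ε ≤ K / l ^ 3) → (s₀ ≤ l / L → ε ≤ K * exp (-(l / 2))) →
      ∑ p ∈ primesIcc 2 (exp L), (1 : ℝ) / p * errorTerm (c + 1) (l - log p) (log p) + ε ≤
        errorTerm c l L := by
  obtain ⟨C, hC, hsum⟩ := exists_sum_errorTerm_le
  obtain ⟨s₀, hs₀⟩ := Filter.eventually_atTop.1
    ((eventually_mul_exp_neg_le (16 * C * exp 6)).and (Filter.eventually_ge_atTop 100))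
  refine ⟨s₀, (hs₀ s₀ le_rfl).2, fun K c => ?_⟩
  filter_upwards [eventually_mul_pow_mul_exp_neg_le K, Filter.eventually_ge_atTop (200 * C),
    Filter.eventually_ge_atTop (2 * s₀), Filter.eventually_ge_atTop
      ((10 * (16 * C * exp 6 + 31 + K) / decayKernel c (2 * s₀)) ^ 2)]
    with l hexp hlC hls hlQ L ε hL hLc hsmall hlarge
  have hlog := log_two_gt_d9
  have hL0 : 0 < L := by linarith
  have hLl := le_half_of_le_div_plateauEnd hL0.le hLc
  rcases lt_or_ge (l / L) s₀ with hs | hs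
  · have hsL := (div_lt_iff₀ hL0).1 hs
    have hL2 : 2 < L := lt_of_mul_lt_mul_left (by linarith) (by linarith [hs₀ s₀ le_rfl] : 0 ≤ s₀)
    have hhalf := hsum c l L (L / 2) (by linarith [log_two_lt_d9]) (by linarith) hLc
    exact (add_le_add_left hhalf ε).trans
      (errorTermBound_half_add_le hC (by linarith) hLl hlC hsL.le hlQ (hsmall hs))
  · obtain ⟨hs_exp, hs100⟩ := hs₀ _ hs
    have hL100 : L ≤ l / 100 := by
      rw [le_div_iff₀ hL0] at hs100
      linarith
    exact (add_le_add_left (hsum c l L L hL le_rfl hLc) ε).trans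
      (errorTermBound_self_add_le hC hL hL100 hlC hs_exp hexp (hlarge hs))

end ErrorRecursion

/-! ### The linear sieve by induction on the length of the interval -/

section CountingPrimes

variable {z : ℝ}

lemma primesBelow_ceil_subset_primesIcc (z : ℝ) : Nat.primesBelow ⌈z⌉₊ ⊆ primesIcc 2 z :=
  fun p hp => by
    obtain ⟨hprime, hpz⟩ := mem_primesBelow_ceil.1 hp
    exact mem_primesIcc.2 ⟨hprime, mod_cast hprime.two_le, hpz.le⟩

lemma card_primesIcc_two_le_primeCounting (z : ℝ) :
    (primesIcc 2 z).card ≤ Nat.primeCounting ⌊z⌋₊ := by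
  rw [← Nat.primesLE_card_eq_primeCounting]
  refine Finset.card_le_card fun p hp => ?_
  obtain ⟨hprime, -, hpz⟩ := mem_primesIcc.1 hp
  exact Nat.mem_primesLE.2 ⟨Nat.le_floor hpz, hprime⟩

lemma card_primesIcc_two_le (hz : 0 ≤ z) : ((primesIcc 2 z).card : ℝ) ≤ z := by
  have hsub : primesIcc 2 z ⊆ Finset.Ioc 0 ⌊z⌋₊ := fun p hp => by
    obtain ⟨hprime, -, hpz⟩ := mem_primesIcc.1 hp
    exact Finset.mem_Ioc.2 ⟨hprime.pos, Nat.le_floor hpz⟩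
  refine le_trans ?_ (Nat.floor_le hz)
  simpa using Finset.card_le_card hsub

lemma card_primesIcc_two_le_div_log (hz : 2 ≤ z) :
    ((primesIcc 2 z).card : ℝ) ≤ 5 * z / log z := by
  have hz0 : 0 < z := by linarith
  have hlog : 0 < log z := log_pos (by linarith)
  have hlog_sqrt : log √z = log z / 2 := log_sqrt hz0.le
  have hsqrt : √z ≤ 2 * z / log z := by
    rw [le_div_iff₀ hlog]
    nlinarith [log_le_sub_one_of_pos (sqrt_pos.2 hz0), mul_self_sqrt hz0.le, sqrt_nonneg z]
  have hlog_four : log 4 = 2 * log 2 := by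
    rw [show (4 : ℝ) = 2 ^ 2 by norm_num, log_pow, Nat.cast_two]
  calc ((primesIcc 2 z).card : ℝ) ≤ Nat.primeCounting ⌊z⌋₊ :=
        mod_cast card_primesIcc_two_le_primeCounting z
    _ ≤ log 4 * z / log √z + √z := Chebyshev.pi_le_log4_mul_div (by linarith)
    _ = 4 * log 2 * z / log z + √z := by
        rw [hlog_sqrt, hlog_four]
        field_simp
        ring
    _ ≤ 3 * z / log z + 2 * z / log z := by
        gcongr
        linarith [log_two_lt_d9]
    _ = 5 * z / log z := by ring

lemma card_primesBelow_ceil_le (hz : 0 ≤ z) : ((Nat.primesBelow ⌈z⌉₊).card : ℝ) ≤ z :=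
  le_trans (mod_cast Finset.card_le_card (primesBelow_ceil_subset_primesIcc z))
    (card_primesIcc_two_le hz)

end CountingPrimes

section SieveError

variable {v z w : ℝ}

/-- The error term of the linear sieve for an interval of length `v` sifted up to `z`, in the
upper bound for `c = 1` and in the lower bound for `c = 0`. -/
noncomputable def sieveError (c : ZMod 2) (v z : ℝ) : ℝ := v * errorTerm c (log v) (log z)

lemma sieveError_nonneg (c : ZMod 2) (hv : 1 ≤ v) (hz : 1 ≤ z) : 0 ≤ sieveError c v z :=
  mul_nonneg (by linarith) (errorTerm_nonneg (log_nonneg hv) (log_nonneg hz))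

lemma sieveError_div (c : ZMod 2) (hv : 0 < v) {p : ℕ} (hp : 0 < p) :
    sieveError c (v / p) p = v * ((1 : ℝ) / p * errorTerm c (log v - log p) (log p)) := by
  rw [sieveError, log_div hv.ne' (mod_cast hp.ne')]
  ring

lemma sieveError_one_le_sieveError_one (hv : 1 < v) (hz : 1 < z) (hzw : z ≤ w)
    (hvz : v ≤ z ^ 3) : sieveError 1 v z ≤ sieveError 1 v w := by
  have hlv : 0 < log v := log_pos hv
  have hlz : 0 < log z := log_pos hz
  have hlzw : log z ≤ log w := log_le_log (by linarith) hzw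
  have hlvz : log v / log z ≤ 3 := by
    rw [div_le_iff₀ hlz]
    simpa [log_pow] using log_le_log (by linarith) hvz
  have hdiv : log v / log w ≤ log v / log z := by gcongr
  rw [sieveError, sieveError, errorTerm, errorTerm, decayKernel_one_of_le hlvz,
    decayKernel_one_of_le (hdiv.trans hlvz)]
  have := damping_le_damping hlz.le hlzw
  gcongr

lemma exp_div_log_pow_le_sieveError (c : ZMod 2) {v₁ : ℝ} (hv : 1 < v) (hv₁ : v ≤ v₁)
    (hz : 2 ≤ z) : exp (-(log v₁ / log 2) / 4) / log v₁ ^ 3 ≤ sieveError c v z := by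
  have hl2 : 0 < log 2 := log_pos one_lt_two
  have hlv : 0 < log v := log_pos hv
  have hlv₁ : log v ≤ log v₁ := log_le_log (by linarith) hv₁
  have hlz : log 2 ≤ log z := log_le_log two_pos hz
  have hdiv : log v / log z ≤ log v₁ / log 2 := by
    have : 0 ≤ log v₁ := by linarith
    gcongr
  have hmain : 0 ≤ decayKernel c (log v / log z) * damping (log z) / log v ^ 2 := by
    have := decayKernel_pos c (log v / log z)
    have := damping_nonneg (hl2.le.trans hlz)
    positivity
  calc exp (-(log v₁ / log 2) / 4) / log v₁ ^ 3
      ≤ exp (-(log v / log z) / 4) / log v ^ 3 := by gcongr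
    _ ≤ errorTerm c (log v) (log z) := le_add_of_nonneg_left hmain
    _ ≤ sieveError c v z :=
        le_mul_of_one_le_left (errorTerm_nonneg hlv.le (hl2.le.trans hlz)) hv.le

lemma sqrt_eq_mul_exp_neg (hv : 0 < v) : √v = v * exp (-(log v / 2)) := by
  rw [exp_neg, ← log_sqrt hv.le, exp_log (sqrt_pos.2 hv), ← div_eq_mul_inv, div_sqrt]

lemma sqrt_le_mul_div_log_pow (hv : 1 < v) : √v ≤ 48 * v / log v ^ 3 := by
  have hl : 0 < log v := log_pos hv
  have hsqrt : 0 < √v := sqrt_pos.2 (by linarith)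
  have hexp := pow_div_factorial_le_exp (log v / 2) (by linarith) 3
  rw [← log_sqrt (by linarith), exp_log hsqrt, log_sqrt (by linarith)] at hexp
  rw [le_div_iff₀ (by positivity)]
  have hcube : log v ^ 3 ≤ 48 * √v := by
    norm_num [Nat.factorial] at hexp
    linarith
  nlinarith [mul_self_sqrt (show 0 ≤ v by linarith)]

lemma exists_sum_sieveError_add_le : ∃ s₀ : ℝ, 100 ≤ s₀ ∧ ∀ (K : ℝ) (c : ZMod 2),
    ∀ᶠ v in Filter.atTop, ∀ w ε : ℝ, 2 ≤ w → log w ≤ log v / plateauEnd c →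
      (log v / log w < s₀ → ε ≤ K * (v / log v ^ 3)) → (s₀ ≤ log v / log w → ε ≤ K * √v) →
      ∑ p ∈ primesIcc 2 w, sieveError (c + 1) (v / p) p + ε ≤ sieveError c v w := by
  obtain ⟨s₀, hs₀, hsum⟩ := exists_sum_errorTerm_add_le
  refine ⟨s₀, hs₀, fun K c => ?_⟩
  filter_upwards [tendsto_log_atTop.eventually (hsum K c), Filter.eventually_gt_atTop 0]
    with v hsum hv w ε hw hwv hsmall hlarge
  have hw0 : 0 < w := by linarith
  have hlog_scale := hsum (log w) (ε / v) (log_le_log two_pos hw) hwv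
    (fun h => by
      rw [div_le_iff₀ hv, div_mul_eq_mul_div, ← mul_div_assoc']
      exact hsmall h)
    (fun h => by
      rw [div_le_iff₀ hv, mul_assoc, mul_comm (exp _), ← sqrt_eq_mul_exp_neg hv]
      exact hlarge h)
  rw [exp_log hw0] at hlog_scale
  calc ∑ p ∈ primesIcc 2 w, sieveError (c + 1) (v / p) p + ε
      = v * (∑ p ∈ primesIcc 2 w,
          (1 : ℝ) / p * errorTerm (c + 1) (log v - log p) (log p) + ε / v) := by
        rw [mul_add, Finset.mul_sum, mul_div_cancel₀ _ hv.ne']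
        exact congrArg (· + ε) (Finset.sum_congr rfl fun p hp =>
          sieveError_div _ hv (mem_primesIcc.1 hp).1.pos)
    _ ≤ sieveError c v w := mul_le_mul_of_nonneg_left hlog_scale hv.le

lemma eventually_sum_sieveError_one_add_le : ∀ᶠ v in Filter.atTop, ∀ z : ℝ, 2 ≤ z → z ≤ √v →
    ∑ p ∈ Nat.primesBelow ⌈z⌉₊, sieveError 1 (v / p) p + (20 * √v + 1) ≤ sieveError 0 v z := by
  obtain ⟨s₀, -, hsum⟩ := exists_sum_sieveError_add_le
  filter_upwards [hsum (21 * 48) 0, Filter.eventually_gt_atTop 1] with v hsum hv z hz hzv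
  have hsqrt : 1 ≤ √v := one_le_sqrt.2 hv.le
  have hε := hsum z (20 * √v + 1) hz
    (by
      rw [plateauEnd_zero, ← log_sqrt (by linarith)]
      exact log_le_log (by linarith) hzv)
    (fun _ => by linear_combination 21 * sqrt_le_mul_div_log_pow hv + hsqrt)
    (fun _ => by linarith)
  refine le_trans (add_le_add_left (Finset.sum_le_sum_of_subset_of_nonneg
    (primesBelow_ceil_subset_primesIcc z) fun p hp _ => ?_) _) hε
  obtain ⟨-, h2p, hpz⟩ := mem_primesIcc.1 hp
  refine sieveError_nonneg 1 ?_ (by linarith)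
  rw [one_le_div (by linarith)]
  nlinarith [mul_self_sqrt (show 0 ≤ v by linarith)]

lemma card_primesIcc_two_pow_three_le_div {s : ℝ} (hv : 1 < v) (hw : 2 ≤ w) (hwv : w ^ 3 ≤ v)
    (hs : log v / log w < s) :
    ((primesIcc 2 w).card : ℝ) ^ 3 ≤ 125 * s ^ 3 * (v / log v ^ 3) := by
  have hlw : 0 < log w := log_pos (by linarith)
  have hlv : 0 < log v := log_pos hv
  have hrec : 1 / log w ≤ s / log v := by
    rw [div_le_div_iff₀ hlw hlv]
    linarith [(div_lt_iff₀ hlw).1 hs]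
  calc ((primesIcc 2 w).card : ℝ) ^ 3 ≤ (5 * w / log w) ^ 3 := by
        gcongr
        exact card_primesIcc_two_le_div_log hw
    _ = 125 * w ^ 3 * (1 / log w) ^ 3 := by ring
    _ ≤ 125 * v * (s / log v) ^ 3 := by gcongr
    _ = 125 * s ^ 3 * (v / log v ^ 3) := by ring

lemma card_primesIcc_two_pow_three_le_sqrt (hv : 0 < v) (hw : 1 < w)
    (hs : 6 ≤ log v / log w) : ((primesIcc 2 w).card : ℝ) ^ 3 ≤ √v := by
  have hlog : 6 * log w ≤ log v := (le_div_iff₀ (log_pos hw)).1 hs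
  have hw_pow : w ^ 3 ≤ √v := by
    rw [← log_le_log_iff (by positivity) (sqrt_pos.2 hv), log_pow, log_sqrt hv.le]
    push_cast
    linarith
  refine le_trans ?_ hw_pow
  gcongr
  exact card_primesIcc_two_le (by linarith)

lemma sum_card_primesBelow_sq_le {T : Finset ℕ} (hT : T ⊆ primesIcc 2 w) :
    ∑ p ∈ T, 3 * ((Nat.primesBelow ⌈(p : ℝ)⌉₊).card : ℝ) ^ 2 ≤
      3 * ((primesIcc 2 w).card : ℝ) ^ 3 := by
  calc ∑ p ∈ T, 3 * ((Nat.primesBelow ⌈(p : ℝ)⌉₊).card : ℝ) ^ 2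
      ≤ ∑ p ∈ T, 3 * ((primesIcc 2 w).card : ℝ) ^ 2 := by
        refine Finset.sum_le_sum fun p hp => ?_
        gcongr
        intro q hq
        obtain ⟨hq, h2q, hqp⟩ := mem_primesIcc.1 (primesBelow_ceil_subset_primesIcc p hq)
        exact mem_primesIcc.2 ⟨hq, h2q, hqp.trans (mem_primesIcc.1 (hT hp)).2.2⟩
    _ = T.card * (3 * ((primesIcc 2 w).card : ℝ) ^ 2) := by rw [Finset.sum_const, nsmul_eq_mul]
    _ ≤ (primesIcc 2 w).card * (3 * ((primesIcc 2 w).card : ℝ) ^ 2) := by gcongr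
    _ = 3 * ((primesIcc 2 w).card : ℝ) ^ 3 := by ring

lemma eventually_sum_sieveError_zero_add_le_of_pow_three_le : ∀ᶠ v in Filter.atTop,
    ∀ (w E : ℝ) (T : Finset ℕ), 2 ≤ w → w ^ 3 ≤ v → T ⊆ primesIcc 2 w → E ≤ 24 * √v →
      ∑ p ∈ T, (sieveError 0 (v / p) p + 3 * ((Nat.primesBelow ⌈(p : ℝ)⌉₊).card : ℝ) ^ 2) + E ≤
        sieveError 1 v w := by
  obtain ⟨s₀, hs₀, hsum⟩ := exists_sum_sieveError_add_le
  filter_upwards [hsum (27 * 48 + 3 * 125 * s₀ ^ 3) 1, Filter.eventually_gt_atTop 1]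
    with v hsum hv w E T hw hwv hT hE
  have hv0 : 0 < v := by linarith
  have hlv : 0 < log v := log_pos hv
  have hs₀_nonneg : 0 ≤ s₀ ^ 3 := by positivity
  have hrec := hsum w (3 * ((primesIcc 2 w).card : ℝ) ^ 3 + 24 * √v) hw
    (by
      rw [plateauEnd_one, le_div_iff₀ zero_lt_three, mul_comm]
      simpa [log_pow] using log_le_log (by positivity) hwv)
    (fun h => by
      have : 0 ≤ v / log v ^ 3 := by positivity
      linear_combination 3 * card_primesIcc_two_pow_three_le_div hv hw hwv h +
        24 * sqrt_le_mul_div_log_pow hv + 3 * 48 * this)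
    (fun h => by
      have := card_primesIcc_two_pow_three_le_sqrt (w := w) hv0 (by linarith) (by linarith)
      nlinarith [mul_nonneg hs₀_nonneg (sqrt_nonneg v), sqrt_nonneg v])
  have hT_sum : ∑ p ∈ T, sieveError 0 (v / p) p ≤ ∑ p ∈ primesIcc 2 w, sieveError 0 (v / p) p := by
    refine Finset.sum_le_sum_of_subset_of_nonneg hT fun p hp _ => ?_
    obtain ⟨-, h2p, hpw⟩ := mem_primesIcc.1 hp
    refine sieveError_nonneg 0 ?_ (by linarith)
    rw [one_le_div (by linarith)]
    exact hpw.trans ((le_self_pow₀ (by linarith) three_ne_zero).trans hwv)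
  rw [Finset.sum_add_distrib]
  rw [show (1 + 1 : ZMod 2) = 0 from rfl] at hrec
  linarith [sum_card_primesBelow_sq_le hT]

/-- Sifting up to `min z (v ^ (1 / 3))` suffices, since primes `p` with `v < p ^ 3` are handled
without an error term. -/
lemma eventually_sum_sieveError_zero_add_le : ∀ᶠ v in Filter.atTop, ∀ z : ℝ, 2 ≤ z → z ≤ √v →
    ∑ p ∈ Nat.primesBelow ⌈z⌉₊ with ((p : ℕ) : ℝ) ^ 3 ≤ v,
        (sieveError 0 (v / p) p + 3 * ((Nat.primesBelow ⌈(p : ℝ)⌉₊).card : ℝ) ^ 2) +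
      ((20 * √v + 1) + 3 * (Nat.primesBelow ⌈z⌉₊).card) ≤ sieveError 1 v z := by
  filter_upwards [eventually_sum_sieveError_zero_add_le_of_pow_three_le,
    Filter.eventually_ge_atTop 8] with v hsum hv z hz hzv
  have hv0 : 0 < v := by linarith
  set u := v ^ (1 / 3 : ℝ) with hu
  have hu0 : 0 ≤ u := by positivity
  have hu_pow : u ^ 3 = v := by
    rw [hu, ← rpow_natCast, ← rpow_mul hv0.le]
    norm_num
  have le_u_iff {x : ℝ} (hx : 0 ≤ x) : x ≤ u ↔ x ^ 3 ≤ v := by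
    rw [← hu_pow, pow_le_pow_iff_left₀ hx hu0 three_ne_zero]
  have hu2 : 2 ≤ u := (le_u_iff zero_le_two).2 (by linarith)
  have hw2 : 2 ≤ min z u := le_min hz hu2
  have hsubset : {p ∈ Nat.primesBelow ⌈z⌉₊ | ((p : ℕ) : ℝ) ^ 3 ≤ v} ⊆ primesIcc 2 (min z u) := by
    intro p hp
    obtain ⟨hp, hpv⟩ := Finset.mem_filter.1 hp
    obtain ⟨hprime, h2p, hpz⟩ := mem_primesIcc.1 (primesBelow_ceil_subset_primesIcc z hp)
    exact mem_primesIcc.2 ⟨hprime, h2p, le_min hpz ((le_u_iff p.cast_nonneg).2 hpv)⟩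
  have hcard := card_primesBelow_ceil_le (show 0 ≤ z by linarith)
  refine (hsum (min z u) _ _ hw2 ((le_u_iff (by linarith)).1 (min_le_right _ _)) hsubset
    (by linarith)).trans ?_
  rcases le_total z u with h | h
  · rw [min_eq_left h]
  · rw [min_eq_right h]
    exact sieveError_one_le_sieveError_one (by linarith) (by linarith) h hu_pow.ge

end SieveError

section RoughNumbers

variable {v w z : ℝ} {n : ℕ}

lemma mem_roughWithParity {c : ZMod 2} :
    n ∈ roughWithParity c z v ↔
      n ∈ roughUpTo z v ∧ (ArithmeticFunction.cardFactors n : ZMod 2) = c := by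
  classical rw [roughWithParity, Finset.mem_filter]

lemma IsRough.pow_cardFactors_le (hz : 0 ≤ z) (hn : n ≠ 0) (h : IsRough z n) :
    z ^ ArithmeticFunction.cardFactors n ≤ n := by
  induction n using induction_on_primes with
  | zero => exact absurd rfl hn
  | one => simp
  | prime_mul p m hp ih =>
    have hm : m ≠ 0 := right_ne_zero_of_mul hn
    rw [ArithmeticFunction.cardFactors_mul hp.ne_zero hm,
      ArithmeticFunction.cardFactors_apply_prime hp, pow_add, pow_one, Nat.cast_mul]
    have hpz : z ≤ p := h p hp (dvd_mul_right p m)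
    have := ih hm fun q hq hqm => h q hq (hqm.mul_left p)
    gcongr

lemma IsRough.cardFactors_lt (hz : 1 ≤ z) (hn : n ≠ 0) (h : IsRough z n) {k : ℕ}
    (hk : (n : ℝ) < z ^ k) : ArithmeticFunction.cardFactors n < k := by
  by_contra! hle
  exact (hk.trans_le (pow_le_pow_right₀ hz hle)).not_ge (h.pow_cardFactors_le (by linarith) hn)

lemma roughWithParity_zero_subset_singleton_one (hz : 1 ≤ z) (hv : v < z ^ 2) :
    roughWithParity 0 z v ⊆ {1} := fun n hn => by
  obtain ⟨hn, heven⟩ := mem_roughWithParity.1 hn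
  obtain ⟨hn0, hnv, hrough⟩ := mem_roughUpTo.1 hn
  have hlt := hrough.cardFactors_lt hz hn0 (hnv.trans_lt hv)
  obtain ⟨k, hk⟩ := ZMod.natCast_eq_zero_iff_even.1 heven
  have hzero : ArithmeticFunction.cardFactors n = 0 := by lia
  exact Finset.mem_singleton.2
    ((ArithmeticFunction.cardFactors_eq_zero_iff_eq_zero_or_one.1 hzero).resolve_left hn0)

lemma prime_of_mem_roughWithParity_one (hz : 1 < z) (hv : v ≤ z ^ 2)
    (hn : n ∈ roughWithParity 1 z v) : n.Prime := by
  obtain ⟨hn, hodd⟩ := mem_roughWithParity.1 hn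
  obtain ⟨hn0, hnv, hrough⟩ := mem_roughUpTo.1 hn
  have hlt := hrough.cardFactors_lt (k := 3) hz.le hn0
    ((hnv.trans hv).trans_lt (pow_lt_pow_right₀ hz (by norm_num)))
  obtain ⟨k, hk⟩ := ZMod.natCast_eq_one_iff_odd.1 hodd
  exact ArithmeticFunction.cardFactors_eq_one_iff_prime.1 (by lia)

lemma parityModel_zero_le_three (hz : 1 ≤ z) (hv : v < z ^ 2) : parityModel 0 v z ≤ 3 := by
  have hcard := Finset.card_le_card (roughWithParity_zero_subset_singleton_one hz hv)
  have : ((roughWithParity 0 z v).card : ℝ) ≤ 1 := mod_cast hcard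
  linarith [parityModel_le_three_mul_card 0 v z]

lemma parityModel_le_three_mul (c : ZMod 2) (hv : 0 ≤ v) : parityModel c v z ≤ 3 * v := by
  classical
  have hsub : roughWithParity c z v ⊆ Finset.Ioc 0 ⌊v⌋₊ :=
    (Finset.filter_subset _ _).trans (Finset.filter_subset _ _)
  have hcard : ((roughWithParity c z v).card : ℝ) ≤ v := by
    refine le_trans ?_ (Nat.floor_le hv)
    simpa using Finset.card_le_card hsub
  linarith [parityModel_le_three_mul_card c v z]

lemma parityModel_one_le_add_card (hz : 1 < z) (hzw : z ≤ w) (hv : v ≤ z ^ 2) :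
    parityModel 1 v z ≤ parityModel 1 v w + 3 * (Nat.primesBelow ⌈w⌉₊).card := by
  classical
  have hsub : roughWithParity 1 w v ⊆ roughWithParity 1 z v :=
    Finset.filter_subset_filter _ (roughUpTo_anti v hzw)
  have hdiff : roughWithParity 1 z v \ roughWithParity 1 w v ⊆ Nat.primesBelow ⌈w⌉₊ := by
    intro n hn
    obtain ⟨hnz, hnw⟩ := Finset.mem_sdiff.1 hn
    have hprime := prime_of_mem_roughWithParity_one hz hv hnz
    refine mem_primesBelow_ceil.2 ⟨hprime, not_le.1 fun hwn => hnw ?_⟩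
    obtain ⟨hnz, hodd⟩ := mem_roughWithParity.1 hnz
    obtain ⟨hn0, hnv, -⟩ := mem_roughUpTo.1 hnz
    refine mem_roughWithParity.2 ⟨mem_roughUpTo.2 ⟨hn0, hnv, fun q hq hqn => ?_⟩, hodd⟩
    rwa [(Nat.prime_dvd_prime_iff_eq hq hprime).1 hqn]
  have hextra : 2 / log 2 * ∑ n ∈ roughWithParity 1 z v \ roughWithParity 1 w v,
      floorParity (v / n) ≤ 3 * (Nat.primesBelow ⌈w⌉₊).card := by
    refine mul_le_mul two_div_log_two_le ?_
      (Finset.sum_nonneg fun _ _ => floorParity_nonneg _) zero_le_three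
    refine (Finset.sum_le_card_nsmul _ _ 1 fun n _ => floorParity_le_one _).trans ?_
    rw [nsmul_eq_mul, mul_one]
    exact_mod_cast Finset.card_le_card hdiff
  rw [parityModel, parityModel, ← Finset.sum_sdiff hsub, mul_add]
  linarith

end RoughNumbers

section Induction

variable {A a b v z : ℝ}

/-- The upper and lower bound linear sieve for the interval `(a, b]`, with error constant `A`. -/
def SieveBounds (A a b z : ℝ) : Prop :=
  siftedCount a b z ≤ parityModel 1 (b - a) z + A * sieveError 1 (b - a) z ∧
    parityModel 0 (b - a) z - A * sieveError 0 (b - a) z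
      - 3 * ((Nat.primesBelow ⌈z⌉₊).card : ℝ) ^ 2 ≤ siftedCount a b z

lemma le_sqrt_div_iff {x : ℝ} (hx : 0 < x) : x ≤ √(v / x) ↔ x ^ 3 ≤ v := by
  rw [le_sqrt' hx, le_div_iff₀ hx, ← pow_succ]

lemma sieveBounds_of_sub_le {v₁ : ℝ} (ha : 0 ≤ a) (hv : 1 < b - a) (hv₁ : b - a ≤ v₁)
    (hz : 2 ≤ z) (hA : (3 * v₁ + 1) / (exp (-(log v₁ / log 2) / 4) / log v₁ ^ 3) ≤ A) :
    SieveBounds A a b z := by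
  set ρ := exp (-(log v₁ / log 2) / 4) / log v₁ ^ 3 with hρ_def
  have hρ : 0 < ρ := by
    have : 0 < log v₁ := log_pos (by linarith)
    positivity
  have hA0 : 0 ≤ A := le_trans (div_nonneg (by linarith) hρ.le) hA
  have hAρ : 3 * v₁ + 1 ≤ A * ρ := (div_le_iff₀ hρ).1 hA
  have herror (c : ZMod 2) : 3 * v₁ + 1 ≤ A * sieveError c (b - a) z :=
    hAρ.trans (mul_le_mul_of_nonneg_left (exp_div_log_pow_le_sieveError c hv hv₁ hz) hA0)
  constructor
  · have hanti : (siftedCount a b z : ℝ) ≤ siftedCount a b 2 := mod_cast siftedCount_anti a b hz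
    have htwo := abs_le.1 (abs_siftedCount_two_sub_le ha (show a ≤ b by linarith))
    linarith [parityModel_nonneg 1 (b - a) z, herror 1]
  · have hmodel := parityModel_le_three_mul (z := z) 0 (show 0 ≤ b - a by linarith)
    have hcount : (0 : ℝ) ≤ siftedCount a b z := Nat.cast_nonneg _
    have hcard : 0 ≤ 3 * ((Nat.primesBelow ⌈z⌉₊).card : ℝ) ^ 2 := by positivity
    linarith [herror 0]

lemma parityModel_zero_sub_siftedCount_div_le (hA : 1 ≤ A) {p : ℕ} (hp : p.Prime)
    (ih : (p : ℝ) ≤ √((b - a) / p) → SieveBounds A (a / p) (b / p) p) :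
    parityModel 0 ((b - a) / p) p - siftedCount (a / p) (b / p) p ≤
      (if (p : ℝ) ^ 3 ≤ b - a then A * (sieveError 0 ((b - a) / p) p
        + 3 * ((Nat.primesBelow ⌈(p : ℝ)⌉₊).card : ℝ) ^ 2) else 0) + 3 := by
  have hp0 : (0 : ℝ) < p := mod_cast hp.pos
  split_ifs with hp3
  · have hlower := (ih ((le_sqrt_div_iff hp0).2 hp3)).2
    rw [← sub_div] at hlower
    have hcard : 0 ≤ 3 * ((Nat.primesBelow ⌈(p : ℝ)⌉₊).card : ℝ) ^ 2 := by positivity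
    linarith [le_mul_of_one_le_left hcard hA]
  · have hmodel := parityModel_zero_le_three (v := (b - a) / p) (z := p)
      (mod_cast hp.one_lt.le) (by
        rw [div_lt_iff₀ hp0, ← pow_succ]
        exact not_le.1 hp3)
    linarith

lemma siftedCount_le_of_forall_prime (hA : 1 ≤ A) (ha : 0 ≤ a) (hv : 1 ≤ b - a)
    (ih : ∀ p : ℕ, p.Prime → (p : ℝ) < z → (p : ℝ) ≤ √((b - a) / p) →
      SieveBounds A (a / p) (b / p) p)
    (hrec : ∑ p ∈ Nat.primesBelow ⌈z⌉₊ with ((p : ℕ) : ℝ) ^ 3 ≤ b - a,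
        (sieveError 0 ((b - a) / p) p + 3 * ((Nat.primesBelow ⌈(p : ℝ)⌉₊).card : ℝ) ^ 2) +
      ((20 * √(b - a) + 1) + 3 * (Nat.primesBelow ⌈z⌉₊).card) ≤ sieveError 1 (b - a) z) :
    siftedCount a b z ≤ parityModel 1 (b - a) z + A * sieveError 1 (b - a) z := by
  have hchild := Finset.sum_le_sum fun p hp => by
    obtain ⟨hprime, hpz⟩ := mem_primesBelow_ceil (z := z).1 hp
    exact parityModel_zero_sub_siftedCount_div_le hA hprime (ih p hprime hpz)
  rw [Finset.sum_sub_distrib, Finset.sum_add_distrib, ← Finset.sum_filter, ← Finset.mul_sum,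
    Finset.sum_const, nsmul_eq_mul] at hchild
  have hcount_two := abs_le.1 (abs_siftedCount_two_sub_le ha (show a ≤ b by linarith))
  have hmodel_two := abs_le.1 (abs_parityModel_two_sub_le 1 hv)
  have hmul := mul_le_mul_of_nonneg_left hrec (by linarith : 0 ≤ A)
  have hslack : 20 * √(b - a) + 1 + 3 * (Nat.primesBelow ⌈z⌉₊).card ≤
      A * (20 * √(b - a) + 1 + 3 * (Nat.primesBelow ⌈z⌉₊).card) :=
    le_mul_of_one_le_left (by positivity) hA
  rw [siftedCount_eq_sub, parityModel_eq_sub, show (1 + 1 : ZMod 2) = 0 from rfl]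
  linarith

lemma siftedCount_div_sub_parityModel_one_le (hA : 1 ≤ A) {p : ℕ} (hp : p.Prime)
    (hpz : (p : ℝ) < z) (hpv : 4 ≤ (b - a) / p)
    (ih : ∀ w : ℝ, 2 ≤ w → w ≤ √((b - a) / p) → SieveBounds A (a / p) (b / p) w) :
    siftedCount (a / p) (b / p) p - parityModel 1 ((b - a) / p) p ≤
      A * sieveError 1 ((b - a) / p) p + 3 * (Nat.primesBelow ⌈z⌉₊).card := by
  rcases le_or_gt (p : ℝ) √((b - a) / p) with hle | hlt
  · have hupper := (ih p (mod_cast hp.two_le) hle).1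
    rw [← sub_div] at hupper
    have : (0 : ℝ) ≤ 3 * (Nat.primesBelow ⌈z⌉₊).card := by positivity
    linarith
  · set v := (b - a) / p
    have hsqrt : √v ^ 2 = v := sq_sqrt (by linarith)
    have hsqrt_two : 2 ≤ √v := le_sqrt_of_sq_le (by linarith)
    have hupper := (ih √v hsqrt_two le_rfl).1
    rw [← sub_div] at hupper
    have hcount : (siftedCount (a / p) (b / p) p : ℝ) ≤ siftedCount (a / p) (b / p) √v :=
      mod_cast siftedCount_anti _ _ hlt.le
    have hmodel := parityModel_one_le_add_card (by linarith) hlt.le hsqrt.ge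
    have herror : sieveError 1 v √v ≤ sieveError 1 v p :=
      sieveError_one_le_sieveError_one (by linarith) (by linarith) hlt.le (by nlinarith)
    have hcard : ((Nat.primesBelow ⌈(p : ℝ)⌉₊).card : ℝ) ≤ (Nat.primesBelow ⌈z⌉₊).card :=
      mod_cast Finset.card_le_card fun q hq => by
        obtain ⟨hq, hqp⟩ := mem_primesBelow_ceil.1 hq
        exact mem_primesBelow_ceil.2 ⟨hq, hqp.trans hpz⟩
    linarith [mul_le_mul_of_nonneg_left herror (by linarith : 0 ≤ A)]

lemma le_siftedCount_of_forall_prime (hA : 1 ≤ A) (ha : 0 ≤ a) (hv : 1 ≤ b - a)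
    (hzv : z ≤ (b - a) / 4)
    (ih : ∀ p : ℕ, p.Prime → (p : ℝ) < z → ∀ w : ℝ, 2 ≤ w → w ≤ √((b - a) / p) →
      SieveBounds A (a / p) (b / p) w)
    (hrec : ∑ p ∈ Nat.primesBelow ⌈z⌉₊, sieveError 1 ((b - a) / p) p + (20 * √(b - a) + 1) ≤
      sieveError 0 (b - a) z) :
    parityModel 0 (b - a) z - A * sieveError 0 (b - a) z
      - 3 * ((Nat.primesBelow ⌈z⌉₊).card : ℝ) ^ 2 ≤ siftedCount a b z := by
  have hchild := Finset.sum_le_sum fun p hp => by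
    obtain ⟨hprime, hpz⟩ := mem_primesBelow_ceil (z := z).1 hp
    refine siftedCount_div_sub_parityModel_one_le hA hprime hpz ?_ (ih p hprime hpz)
    rw [le_div_iff₀ (mod_cast hprime.pos)]
    linarith
  rw [Finset.sum_sub_distrib, Finset.sum_add_distrib, ← Finset.mul_sum, Finset.sum_const,
    nsmul_eq_mul] at hchild
  have hcount_two := abs_le.1 (abs_siftedCount_two_sub_le ha (show a ≤ b by linarith))
  have hmodel_two := abs_le.1 (abs_parityModel_two_sub_le 0 hv)
  have hmul := mul_le_mul_of_nonneg_left hrec (by linarith : 0 ≤ A)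
  have hslack : 20 * √(b - a) + 1 ≤ A * (20 * √(b - a) + 1) :=
    le_mul_of_one_le_left (by positivity) hA
  rw [siftedCount_eq_sub, parityModel_eq_sub, zero_add]
  linarith

theorem exists_sieveBounds : ∃ A : ℝ, 1 ≤ A ∧ ∀ a b z : ℝ, 0 ≤ a → 4 ≤ b - a → 2 ≤ z →
    z ≤ √(b - a) → SieveBounds A a b z := by
  obtain ⟨v₁, hrec⟩ := Filter.eventually_atTop.1 (eventually_sum_sieveError_zero_add_le.and
    (eventually_sum_sieveError_one_add_le.and (Filter.eventually_ge_atTop 16)))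
  refine ⟨max 1 ((3 * v₁ + 1) / (exp (-(log v₁ / log 2) / 4) / log v₁ ^ 3)), le_max_left _ _, ?_⟩
  set A := max 1 ((3 * v₁ + 1) / (exp (-(log v₁ / log 2) / 4) / log v₁ ^ 3))
  have hA : 1 ≤ A := le_max_left _ _
  suffices main : ∀ (n : ℕ) (a b z : ℝ), b - a ≤ 2 ^ n → 0 ≤ a → 4 ≤ b - a → 2 ≤ z →
      z ≤ √(b - a) → SieveBounds A a b z by
    intro a b z
    obtain ⟨n, hn⟩ := pow_unbounded_of_one_lt (b - a) (one_lt_two (α := ℝ))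
    exact main n a b z hn.le
  intro n
  induction n with
  | zero => intro a b z hn _ hv; norm_num at hn; linarith
  | succ n ih =>
    intro a b z hn ha hv hz hzv
    rcases le_total (b - a) v₁ with hsmall | hlarge
    · exact sieveBounds_of_sub_le ha (by linarith) hsmall hz (le_max_right _ _)
    obtain ⟨hrec_upper, hrec_lower, hv16⟩ := hrec _ hlarge
    have hsqrt : √(b - a) * √(b - a) = b - a := mul_self_sqrt (by linarith)
    have hsqrt_four : 4 ≤ √(b - a) := le_sqrt_of_sq_le (by linarith)
    have hchild (p : ℕ) (hp : p.Prime) (hpz : (p : ℝ) < z) (w : ℝ) (hw : 2 ≤ w)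
        (hwv : w ≤ √((b - a) / p)) : SieveBounds A (a / p) (b / p) w := by
      have h2p : (2 : ℝ) ≤ p := mod_cast hp.two_le
      refine ih _ _ _ ?_ (by positivity) ?_ hw (by rwa [← sub_div])
      · rw [← sub_div, div_le_iff₀ (by linarith)]
        rw [pow_succ] at hn
        nlinarith [show (0 : ℝ) < 2 ^ n by positivity]
      · rw [← sub_div, le_div_iff₀ (by linarith)]
        nlinarith
    exact ⟨siftedCount_le_of_forall_prime hA ha (by linarith)
        (fun p hp hpz => hchild p hp hpz p (mod_cast hp.two_le)) (hrec_upper z hz hzv),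
      le_siftedCount_of_forall_prime hA ha (by linarith) (by nlinarith) hchild
        (hrec_lower z hz hzv)⟩

end Induction

/-! ### Main terms and bounds at the boundary -/

section PrimeSums

variable {u w : ℝ}

open ArithmeticFunction hiding log

lemma two_pow_mul_half_factorial_sq_le (n : ℕ) :
    2 ^ n * ((n / 2).factorial * (n / 2).factorial) ≤ (n + 1) * n.factorial := by
  have hchoose : 2 ^ n ≤ (n + 1) * n.choose (n / 2) := by
    rw [← Nat.sum_range_choose]
    simpa using Finset.sum_le_card_nsmul (Finset.range (n + 1)) _ _
      fun k _ => Nat.choose_le_middle k n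
  calc 2 ^ n * ((n / 2).factorial * (n / 2).factorial)
      ≤ ((n + 1) * n.choose (n / 2)) * ((n / 2).factorial * (n - n / 2).factorial) := by
        gcongr
        lia
    _ = (n + 1) * (n.choose (n / 2) * (n / 2).factorial * (n - n / 2).factorial) := by ring
    _ = (n + 1) * n.factorial := by
        rw [Nat.choose_mul_factorial_mul_factorial (n.div_le_self 2)]

lemma mul_log_two_sub_le_log_factorial_sub (n : ℕ) :
    n * log 2 - log (n + 1) ≤ log n.factorial - 2 * log (n / 2).factorial := by
  have hfact : ∀ m : ℕ, (m.factorial : ℝ) ≠ 0 := fun m => mod_cast m.factorial_ne_zero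
  have h : log (2 ^ n * ((n / 2).factorial * (n / 2).factorial : ℝ))
      ≤ log ((n + 1) * n.factorial) :=
    log_le_log (by positivity) (mod_cast two_pow_mul_half_factorial_sq_le n)
  rw [log_mul (by positivity) (by positivity), log_mul (hfact _) (hfact _),
    log_mul (by positivity) (hfact _), log_pow] at h
  linarith

lemma mul_log_two_sub_le_sum_vonMangoldt_mul_floorParity (hu : 1 ≤ u) :
    (u - 1) * log 2 - log (u + 1) ≤
      ∑ n ∈ Finset.Ioc 0 ⌊u⌋₊, vonMangoldt n * floorParity (u / n) := by
  have hhalf : ⌊u / 2⌋₊ = ⌊u⌋₊ / 2 := by simpa using Nat.floor_div_natCast u 2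
  rw [sum_mul_floorParity_div (by linarith), ← log_factorial_eq_sum_vonMangoldt_mul,
    ← log_factorial_eq_sum_vonMangoldt_mul, hhalf]
  refine le_trans ?_ (mul_log_two_sub_le_log_factorial_sub ⌊u⌋₊)
  have := Nat.floor_le (show 0 ≤ u by linarith)
  have := (Nat.sub_one_lt_floor u).le
  gcongr

lemma theta_sub_theta_le_sum_log_primesIcc (hw : 0 ≤ w) :
    Chebyshev.theta u - Chebyshev.theta w ≤ ∑ p ∈ primesIcc w u, log p := by
  rw [sub_le_iff_le_add, Chebyshev.theta, Chebyshev.theta, ← Finset.sum_union_inter]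
  refine (Finset.sum_le_sum_of_subset_of_nonneg (fun p hp => ?_)
    fun p _ _ => log_natCast_nonneg p).trans
    (le_add_of_nonneg_right (Finset.sum_nonneg fun p _ => log_natCast_nonneg p))
  obtain ⟨hpu, hp⟩ := Finset.mem_filter.1 hp
  rw [Finset.mem_Ioc, Nat.le_floor_iff' hp.ne_zero] at hpu
  rw [Finset.mem_union, mem_primesIcc, Finset.mem_filter, Finset.mem_Ioc, Nat.le_floor_iff hw]
  exact (le_total w p).imp (fun h => ⟨hp, h, hpu.2⟩) fun h => ⟨⟨hpu.1, h⟩, hp⟩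

lemma sum_vonMangoldt_mul_floorParity_le (hw : 0 ≤ w) :
    ∑ n ∈ Finset.Ioc 0 ⌊u⌋₊, vonMangoldt n * floorParity (u / n) ≤
      ∑ p ∈ primesIcc w u, log p * floorParity (u / p)
        + (Chebyshev.psi u - Chebyshev.theta u + Chebyshev.theta w) := by
  have hsub : primesIcc w u ⊆ Finset.Ioc 0 ⌊u⌋₊ := fun p hp => by
    obtain ⟨hp, -, hpu⟩ := mem_primesIcc.1 hp
    exact Finset.mem_Ioc.2 ⟨hp.pos, Nat.le_floor hpu⟩
  have hlog : ∀ p ∈ primesIcc w u, vonMangoldt p = log p := fun p hp =>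
    vonMangoldt_apply_prime (mem_primesIcc.1 hp).1
  have hpsi : Chebyshev.psi u = ∑ n ∈ Finset.Ioc 0 ⌊u⌋₊ \ primesIcc w u, vonMangoldt n
      + ∑ p ∈ primesIcc w u, log p := by
    rw [Chebyshev.psi, ← Finset.sum_sdiff hsub, Finset.sum_congr rfl hlog]
  have hrest : ∑ n ∈ Finset.Ioc 0 ⌊u⌋₊ \ primesIcc w u, vonMangoldt n * floorParity (u / n) ≤
      ∑ n ∈ Finset.Ioc 0 ⌊u⌋₊ \ primesIcc w u, vonMangoldt n :=
    Finset.sum_le_sum fun n _ =>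
      mul_le_of_le_one_right vonMangoldt_nonneg (floorParity_le_one _)
  have hmain : ∑ p ∈ primesIcc w u, vonMangoldt p * floorParity (u / p) =
      ∑ p ∈ primesIcc w u, log p * floorParity (u / p) :=
    Finset.sum_congr rfl fun p hp => by rw [hlog p hp]
  rw [← Finset.sum_sdiff hsub, hmain]
  linarith [theta_sub_theta_le_sum_log_primesIcc (u := u) hw]

lemma eventually_log_le_mul_sqrt {ε : ℝ} (hε : 0 < ε) :
    ∀ᶠ u in Filter.atTop, log u ≤ ε * √u := by
  filter_upwards [(isLittleO_log_rpow_atTop one_half_pos).bound hε] with u hu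
  rw [← sqrt_eq_rpow, norm_of_nonneg (sqrt_nonneg u)] at hu
  exact (le_norm_self _).trans hu

lemma eventually_half_le_sum_log_mul_floorParity :
    ∀ᶠ u in Filter.atTop, ∀ w, 0 ≤ w → w ≤ u / 100 →
      u / 2 ≤ ∑ q ∈ primesIcc w u, log q * floorParity (u / q) := by
  filter_upwards [eventually_log_le_mul_sqrt (show (0 : ℝ) < 1 / 100 by norm_num),
    Filter.eventually_ge_atTop 100] with u hlog hu w hw0 hw
  have hsq : √u * √u = u := mul_self_sqrt (by linarith)
  have hsqrt : 10 ≤ √u := le_sqrt_of_sq_le (by linarith)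
  have hlog_four : log 4 = 2 * log 2 := by
    rw [show (4 : ℝ) = 2 ^ 2 by norm_num, log_pow, Nat.cast_two]
  have hpsi := Chebyshev.psi_sub_theta_le (x := u) (by linarith)
  have htheta : Chebyshev.theta w ≤ log 4 * (u / 100) :=
    (Chebyshev.theta_le_log4_mul_x hw0).trans (by gcongr)
  have hsqrt_log : √u * log u ≤ u / 100 := by
    calc √u * log u ≤ √u * (1 / 100 * √u) := by gcongr
      _ = u / 100 := by rw [mul_left_comm, hsq]; ring
  have hlog_succ : log (u + 1) ≤ log 2 + log u := by
    rw [← log_mul two_ne_zero (by linarith)]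
    exact log_le_log (by linarith) (by linarith)
  have hlog_le : log u ≤ u / 1000 := by nlinarith
  have hlow := mul_log_two_sub_le_sum_vonMangoldt_mul_floorParity (u := u) (by linarith)
  have hupp := sum_vonMangoldt_mul_floorParity_le (u := u) hw0
  nlinarith [log_two_gt_d9, log_two_lt_d9]

/-- The prime powers with exponent at least two contribute a convergent series to Mertens' first
theorem. -/
lemma exists_sum_vonMangoldt_div_le_sum_log_div :
    ∃ C, ∀ s : Finset ℕ, ∑ n ∈ s, vonMangoldt n / n ≤ ∑ p ∈ s with p.Prime, log p / p + C := by
  have hsummable := vonMangoldt.summable_residueClass_non_primes_div (0 : ZMod 1)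
  have hnonprime := fun s : Finset ℕ => hsummable.sum_le_tsum s fun n _ => by
    have := vonMangoldt.residueClass_nonneg (0 : ZMod 1) n
    positivity
  refine ⟨_, fun s => le_trans (le_of_eq ?_) (add_le_add_right (hnonprime s) _)⟩
  rw [Finset.sum_filter, ← Finset.sum_add_distrib]
  refine Finset.sum_congr rfl fun n _ => ?_
  split_ifs with hn
  · rw [vonMangoldt_apply_prime hn, zero_div, add_zero]
  · rw [zero_add, vonMangoldt.residueClass,
      Set.indicator_of_mem (Set.mem_ofPred_eq ▸ Subsingleton.elim _ _)]

lemma exists_log_sub_log_sub_le_sum_log_div_primesIcc :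
    ∃ C, ∀ x z, 1 ≤ x → x ≤ z →
      log z - log x - C ≤ ∑ p ∈ primesIcc x z, log p / p := by
  obtain ⟨C, hC⟩ := exists_sum_vonMangoldt_div_le_sum_log_div
  refine ⟨C + 2 * (log 4 + 4) + log 2, fun x z hx hxz => ?_⟩
  have hfloor_x : 1 ≤ ⌊x⌋₊ := Nat.le_floor (by simpa using hx)
  have hfloor_le : ⌊x⌋₊ ≤ ⌊z⌋₊ := Nat.floor_le_floor hxz
  have hsub : ∑ p ∈ Finset.Ioc ⌊x⌋₊ ⌊z⌋₊ with p.Prime, log p / p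
      ≤ ∑ p ∈ primesIcc x z, log p / p := by
    refine Finset.sum_le_sum_of_subset_of_nonneg (fun p hp => ?_) fun p _ _ =>
      div_nonneg (log_natCast_nonneg p) p.cast_nonneg
    rw [Finset.mem_filter, Finset.mem_Ioc, Nat.floor_lt (by linarith),
      Nat.le_floor_iff (by linarith)] at hp
    exact mem_primesIcc.2 ⟨hp.2, hp.1.1.le, hp.1.2⟩
  have hsplit := Finset.sum_Ioc_consecutive (fun d : ℕ => vonMangoldt d / (d : ℝ))
    (Nat.zero_le _) hfloor_le
  have hlow := (abs_le.1 (abs_sum_vonMangoldt_div_sub_log_le (n := ⌊z⌋₊) (by lia))).1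
  have hupp := (abs_le.1 (abs_sum_vonMangoldt_div_sub_log_le (n := ⌊x⌋₊) (by lia))).2
  have hlog_x : log ⌊x⌋₊ ≤ log x := log_le_log (mod_cast hfloor_x) (Nat.floor_le (by linarith))
  have hlog_z : log z ≤ log 2 + log ⌊z⌋₊ := by
    have hfloor_z : (1 : ℝ) ≤ ⌊z⌋₊ := mod_cast hfloor_x.trans hfloor_le
    rw [← log_mul two_ne_zero (by linarith)]
    exact log_le_log (by linarith) (by linarith [Nat.lt_floor_add_one z])
  linarith [hC (Finset.Ioc ⌊x⌋₊ ⌊z⌋₊)]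

lemma sum_log_div_primesIcc_le_log_mul (x z : ℝ) :
    ∑ p ∈ primesIcc x z, log p / p ≤ log z * ∑ p ∈ primesIcc x z, (1 : ℝ) / p := by
  rw [Finset.mul_sum]
  refine Finset.sum_le_sum fun p hp => ?_
  obtain ⟨hp, -, hpz⟩ := mem_primesIcc.1 hp
  rw [mul_one_div]
  gcongr
  exact_mod_cast hp.pos

end PrimeSums

section BoundarySieve

variable {u v w z : ℝ}

lemma sum_log_mul_floorParity_le_log_mul_parityModel_one (hu : 1 ≤ u) :
    2 * ∑ q ∈ primesIcc w u, log q * floorParity (u / q) ≤ log u * parityModel 1 u w := by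
  classical
  have hsub : primesIcc w u ⊆ roughWithParity 1 w u := fun q hq => by
    obtain ⟨hq, hwq, hqu⟩ := mem_primesIcc.1 hq
    refine mem_roughWithParity.2 ⟨mem_roughUpTo.2 ⟨hq.ne_zero, hqu, fun r hr hrq => ?_⟩, ?_⟩
    · rwa [(Nat.prime_dvd_prime_iff_eq hr hq).1 hrq]
    · rw [ArithmeticFunction.cardFactors_apply_prime hq, Nat.cast_one]
  have hlog : 0 ≤ log u := log_nonneg hu
  have hsum_nonneg : 0 ≤ ∑ n ∈ roughWithParity 1 w u, floorParity (u / n) :=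
    Finset.sum_nonneg fun n _ => floorParity_nonneg _
  have htwo : 2 ≤ 2 / log 2 := by
    rw [le_div_iff₀ (log_pos one_lt_two)]
    linarith [log_two_lt_d9]
  calc 2 * ∑ q ∈ primesIcc w u, log q * floorParity (u / q)
      ≤ 2 * ∑ q ∈ primesIcc w u, log u * floorParity (u / q) := by
        gcongr with q hq
        · exact floorParity_nonneg _
        · exact_mod_cast (mem_primesIcc.1 hq).1.pos
        · exact (mem_primesIcc.1 hq).2.2
    _ ≤ 2 * (log u * ∑ n ∈ roughWithParity 1 w u, floorParity (u / n)) := by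
        rw [← Finset.mul_sum]
        gcongr
        exact fun n _ _ => floorParity_nonneg _
    _ ≤ 2 / log 2 * (log u * ∑ n ∈ roughWithParity 1 w u, floorParity (u / n)) := by gcongr
    _ = log u * parityModel 1 u w := by rw [parityModel, mul_left_comm]

lemma eventually_div_log_le_parityModel_one :
    ∀ᶠ u in Filter.atTop, ∀ w, 0 ≤ w → w ≤ u / 100 → u / log u ≤ parityModel 1 u w := by
  filter_upwards [eventually_half_le_sum_log_mul_floorParity, Filter.eventually_gt_atTop 1]
    with u hhalf hu w hw0 hw
  rw [div_le_iff₀' (log_pos hu)]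
  linarith [hhalf w hw0 hw, sum_log_mul_floorParity_le_log_mul_parityModel_one (w := w) hu.le]

lemma sum_parityModel_div_primesIcc_le (c : ZMod 2) (v z y : ℝ) :
    ∑ p ∈ primesIcc z y, parityModel (c + 1) (v / p) p ≤ parityModel c v z := by
  classical
  rcases lt_or_ge y z with hyz | hzy
  · rw [primesIcc, Finset.sum_eq_zero fun p hp => ?_]
    · exact parityModel_nonneg c v z
    · obtain ⟨-, hzp, hpy⟩ := mem_primesIcc.1 hp
      linarith
  have hdisj : Disjoint (Nat.primesBelow ⌈z⌉₊) (primesIcc z y) :=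
    Finset.disjoint_left.2 fun p hp hp' =>
      (mem_primesBelow_ceil.1 hp).2.not_ge (mem_primesIcc.1 hp').2.1
  have hsub : Nat.primesBelow ⌈z⌉₊ ∪ primesIcc z y ⊆ Nat.primesBelow ⌈y + 1⌉₊ := by
    refine Finset.union_subset (fun p hp => ?_) fun p hp => ?_
    · obtain ⟨hp, hpz⟩ := mem_primesBelow_ceil.1 hp
      exact mem_primesBelow_ceil.2 ⟨hp, by linarith⟩
    · obtain ⟨hp, -, hpy⟩ := mem_primesIcc.1 hp
      exact mem_primesBelow_ceil.2 ⟨hp, by linarith⟩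
  have hsum : ∑ p ∈ Nat.primesBelow ⌈z⌉₊ ∪ primesIcc z y, parityModel (c + 1) (v / p) p ≤
      ∑ p ∈ Nat.primesBelow ⌈y + 1⌉₊, parityModel (c + 1) (v / p) p :=
    Finset.sum_le_sum_of_subset_of_nonneg hsub fun p _ _ => parityModel_nonneg _ _ _
  rw [Finset.sum_union hdisj] at hsum
  have hz := parityModel_eq_sub c v z
  have hy := parityModel_eq_sub c v (y + 1)
  linarith [parityModel_nonneg c v (y + 1)]

lemma exists_log_sub_mul_le_parityModel_zero :
    ∃ C, ∀ᶠ v in Filter.atTop, ∀ z, 1 ≤ z → z ≤ √v / 20 →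
      (log (√v / 20) - log z - C) * (v / log v ^ 2) ≤ parityModel 0 v z := by
  obtain ⟨C, hC⟩ := exists_log_sub_log_sub_le_sum_log_div_primesIcc
  have hmodel : ∀ᶠ v in Filter.atTop, ∀ u ≥ 20 * √v, ∀ w, 0 ≤ w → w ≤ u / 100 →
      u / log u ≤ parityModel 1 u w :=
    (tendsto_sqrt_atTop.const_mul_atTop (by norm_num : (0 : ℝ) < 20)).eventually
      (Filter.eventually_forall_ge_atTop.2 eventually_div_log_le_parityModel_one)
  refine ⟨C, ?_⟩
  filter_upwards [hmodel, Filter.eventually_gt_atTop 1] with v hmodel hv z hz hzy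
  have hsq : √v * √v = v := mul_self_sqrt (by linarith)
  set y := √v / 20 with hy_def
  have hyv : y ≤ v := by nlinarith
  have hlog : 0 < log v := log_pos hv
  have hmertens := (hC z y hz hzy).trans (sum_log_div_primesIcc_le_log_mul z y)
  have hterm : ∀ p ∈ primesIcc z y, v / log v * ((1 : ℝ) / p) ≤ parityModel (0 + 1) (v / p) p := by
    intro p hp
    obtain ⟨hp, -, hpy⟩ := mem_primesIcc.1 hp
    have hp1 : (1 : ℝ) < p := mod_cast hp.one_lt
    have hlow : 20 * √v ≤ v / p := by
      rw [le_div_iff₀ (by linarith)]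
      nlinarith
    have hvp : v / p ≤ v := div_le_self (by linarith) hp1.le
    rw [zero_add]
    refine le_trans ?_ (hmodel (v / p) hlow p (by linarith) (by linarith))
    calc v / log v * (1 / p) = v / p / log v := by ring
      _ ≤ v / p / log (v / p) := by
        gcongr
        exact log_pos (by linarith)
  calc (log y - log z - C) * (v / log v ^ 2)
      ≤ (log v * ∑ p ∈ primesIcc z y, (1 : ℝ) / p) * (v / log v ^ 2) := by
        gcongr
        exact hmertens.trans (by gcongr)
    _ = ∑ p ∈ primesIcc z y, v / log v * ((1 : ℝ) / p) := by
        rw [← Finset.mul_sum]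
        field_simp
    _ ≤ ∑ p ∈ primesIcc z y, parityModel (0 + 1) (v / p) p := Finset.sum_le_sum hterm
    _ ≤ parityModel 0 v z := sum_parityModel_div_primesIcc_le 0 v z y

lemma sieveError_le (c : ZMod 2) (hv : 1 ≤ log v) (hv0 : 0 ≤ v) (hz : 1 ≤ z) :
    sieveError c v z ≤ 3 * (v / log v ^ 2) := by
  have hz0 : 0 ≤ log z := log_nonneg hz
  have hmain : decayKernel c (log v / log z) * damping (log z) ≤ 2 * 1 :=
    mul_le_mul (decayKernel_le_two _ _) (damping_le_one _) (damping_nonneg hz0) two_pos.le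
  have hexp : exp (-(log v / log z) / 4) ≤ 1 := by
    rw [exp_le_one_iff]
    have : 0 ≤ log v / log z := by positivity
    linarith
  calc sieveError c v z ≤ v * (2 * 1 / log v ^ 2 + 1 / log v ^ 2) := by
        rw [sieveError, errorTerm]
        gcongr
        norm_num
    _ = 3 * (v / log v ^ 2) := by ring

lemma one_le_log_of_four_le (hv : 4 ≤ v) : 1 ≤ log v := by
  rw [le_log_iff_exp_le (by linarith)]
  linarith [exp_one_lt_d9]

lemma parityModel_one_sqrt_le (hv : 4 ≤ v) : parityModel 1 v √v ≤ 15 * (v / log v) := by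
  have hsqrt : 1 < √v := by
    rw [lt_sqrt zero_le_one]
    linarith
  have hsub : roughWithParity 1 √v v ⊆ primesIcc 2 v := fun n hn => by
    have hprime := prime_of_mem_roughWithParity_one hsqrt (sq_sqrt (by linarith)).ge hn
    exact mem_primesIcc.2 ⟨hprime, mod_cast hprime.two_le,
      (mem_roughUpTo.1 (mem_roughWithParity.1 hn).1).2.1⟩
  calc parityModel 1 v √v ≤ 3 * (roughWithParity 1 √v v).card :=
        parityModel_le_three_mul_card 1 v √v
    _ ≤ 3 * (primesIcc 2 v).card := by gcongr
    _ ≤ 3 * (5 * v / log v) := by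
        gcongr
        exact card_primesIcc_two_le_div_log (by linarith)
    _ = 15 * (v / log v) := by ring

lemma exists_siftedCount_sqrt_le :
    ∃ C, 0 < C ∧ ∀ a b, 0 ≤ a → 4 ≤ b - a →
      siftedCount a b √(b - a) ≤ C * ((b - a) / log (b - a)) := by
  obtain ⟨A, hA, hbounds⟩ := exists_sieveBounds
  refine ⟨15 + 3 * A, by linarith, fun a b ha hv => ?_⟩
  have hsqrt : 2 ≤ √(b - a) := le_sqrt_of_sq_le (by linarith)
  have hlog := one_le_log_of_four_le hv
  have herror : sieveError 1 (b - a) √(b - a) ≤ 3 * ((b - a) / log (b - a)) :=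
    (sieveError_le 1 hlog (by linarith) (by linarith)).trans <| by
      gcongr
      exact le_self_pow₀ hlog two_ne_zero
  calc (siftedCount a b √(b - a) : ℝ)
      ≤ parityModel 1 (b - a) √(b - a) + A * sieveError 1 (b - a) √(b - a) :=
        (hbounds a b _ ha hv hsqrt le_rfl).1
    _ ≤ 15 * ((b - a) / log (b - a)) + A * (3 * ((b - a) / log (b - a))) := by
        gcongr
        exact parityModel_one_sqrt_le hv
    _ = (15 + 3 * A) * ((b - a) / log (b - a)) := by ring

lemma log_sqrt_sqrt (hv : 0 ≤ v) : log √√v = log v / 4 := by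
  rw [log_sqrt (sqrt_nonneg v), log_sqrt hv]
  ring

lemma card_primesBelow_ceil_sq_le (hv : 4 ≤ v) (hz : 2 ≤ z) (hzv : z ≤ √v) (hvz : √√v ≤ z) :
    ((Nat.primesBelow ⌈z⌉₊).card : ℝ) ^ 2 ≤ 400 * (v / log v ^ 2) := by
  have hv0 : 0 ≤ v := by linarith
  have hlog : 1 ≤ log v := one_le_log_of_four_le hv
  have hlog_z : log v / 4 ≤ log z := by
    calc log v / 4 = log √√v := (log_sqrt_sqrt hv0).symm
      _ ≤ log z := log_le_log (by positivity) hvz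
  calc ((Nat.primesBelow ⌈z⌉₊).card : ℝ) ^ 2 ≤ ((primesIcc 2 z).card : ℝ) ^ 2 := by
        gcongr
        exact primesBelow_ceil_subset_primesIcc z
    _ ≤ (5 * z / log z) ^ 2 := by
        gcongr
        exact card_primesIcc_two_le_div_log hz
    _ ≤ (5 * √v / (log v / 4)) ^ 2 := by
        have : 0 < log z := by linarith
        gcongr
    _ = 400 * ((√v) ^ 2 / log v ^ 2) := by ring
    _ = 400 * (v / log v ^ 2) := by rw [sq_sqrt hv0]

lemma exists_le_log_div_sub_log_mul (M : ℝ) {k : ℝ} (hk : 0 < k) :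
    ∃ κ, 0 < κ ∧ κ ≤ 1 / k ∧ ∀ x, 0 < x → M ≤ log (x / k) - log (κ * x) := by
  refine ⟨exp (-max M 0) / k, by positivity, ?_, fun x hx => ?_⟩
  · gcongr
    exact exp_le_one_iff.2 (neg_nonpos.2 (le_max_right M 0))
  · rw [div_mul_eq_mul_div, mul_div_assoc, log_mul (exp_pos _).ne' (by positivity), log_exp]
    linarith [le_max_left M 0]

lemma exists_le_siftedCount_mul_sqrt :
    ∃ κ, 0 < κ ∧ ∃ v₀, ∀ a b, 0 ≤ a → v₀ ≤ b - a →
      (b - a) / log (b - a) ^ 2 ≤ siftedCount a b (κ * √(b - a)) := by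
  obtain ⟨A, hA, hbounds⟩ := exists_sieveBounds
  obtain ⟨C, hC⟩ := exists_log_sub_mul_le_parityModel_zero
  obtain ⟨κ, hκ, hκ_le, hlog_gap⟩ :=
    exists_le_log_div_sub_log_mul (C + 3 * A + 1201) (show (0 : ℝ) < 20 by norm_num)
  obtain ⟨v₀, hv₀⟩ := Filter.eventually_atTop.1 <| hC.and <|
    (Filter.eventually_ge_atTop 4).and <|
    (tendsto_sqrt_atTop.eventually_ge_atTop (2 / κ)).and <|
    (tendsto_sqrt_atTop.comp tendsto_sqrt_atTop).eventually_ge_atTop (1 / κ)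
  refine ⟨κ, hκ, v₀, fun a b ha hv => ?_⟩
  obtain ⟨hmodel, hv4, hsqrt, hsqrt_sqrt⟩ := hv₀ _ hv
  set v := b - a with hv_def
  rw [div_le_iff₀' hκ] at hsqrt
  rw [Function.comp_apply, div_le_iff₀' hκ] at hsqrt_sqrt
  have hsqrt_pos : 0 < √v := sqrt_pos.2 (by linarith)
  have hfourth : √√v ≤ κ * √v := by
    nlinarith [mul_self_sqrt (sqrt_nonneg v), sqrt_nonneg (√v)]
  have hκ_sqrt : κ * √v ≤ √v / 20 := by nlinarith
  have hmain := hmodel (κ * √v) (by linarith) hκ_sqrt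
  have herror := sieveError_le 0 (one_le_log_of_four_le hv4) (by linarith)
    (show 1 ≤ κ * √v by linarith)
  have hprimes := card_primesBelow_ceil_sq_le hv4 hsqrt (by linarith) hfourth
  have hsieve := (hbounds a b (κ * √v) ha hv4 hsqrt (by linarith)).2
  rw [← hv_def] at hsieve
  have hgap :=
    mul_le_mul_of_nonneg_right (hlog_gap _ hsqrt_pos) (show 0 ≤ v / log v ^ 2 by positivity)
  have := mul_le_mul_of_nonneg_left herror (show 0 ≤ A by linarith)
  linarith

end BoundarySieve

section IndependentSets

variable {α : Type*} {r : α → α → Prop} {D : ℝ}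

open Classical in
/-- The number of elements of `s` other than `a` that are related to `a`: the degree of `a` in the
graph which `r` induces on `s`. -/
noncomputable def conflictDegree (r : α → α → Prop) (s : Finset α) (a : α) : ℕ :=
  (s.filter fun b => a ≠ b ∧ r a b).card

lemma conflictDegree_mono {s t : Finset α} (hst : s ⊆ t) (a : α) :
    conflictDegree r s a ≤ conflictDegree r t a := by
  classical
  exact Finset.card_le_card (Finset.filter_subset_filter _ hst)

lemma exists_pairwise_not_card_le_mul [Std.Symm r] (s : Finset α)
    (hD : ∀ a ∈ s, (conflictDegree r s a : ℝ) ≤ D) :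
    ∃ I ⊆ s, (I : Set α).Pairwise (fun a b => ¬ r a b) ∧ (s.card : ℝ) ≤ I.card * (D + 1) := by
  classical
  have : Std.Symm fun a b => ¬ r a b := ⟨fun a b hab hba => hab (symm_of r hba)⟩
  obtain ⟨I, hI, hmax⟩ := Finset.exists_max_image
    (s.powerset.filter fun I : Finset α => (I : Set α).Pairwise fun a b => ¬ r a b) Finset.card
    ⟨∅, by simp⟩
  obtain ⟨hIs, hpair⟩ := Finset.mem_filter.1 hI
  rw [Finset.mem_powerset] at hIs
  have hdominates : s ⊆ I.biUnion fun a => insert a (s.filter fun b => a ≠ b ∧ r a b) := by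
    intro b hb
    by_contra hfree
    simp only [Finset.mem_biUnion, Finset.mem_insert, Finset.mem_filter, not_exists, not_and,
      not_or] at hfree
    have hbI : b ∉ I := fun h => (hfree b h).1 rfl
    have hinsert : (insert b I : Set α).Pairwise fun a b => ¬ r a b :=
      (Set.pairwise_insert_of_symm_of_notMem hbI).2
        ⟨hpair, fun a ha hba => (hfree a ha).2 hb (fun h => hbI (h ▸ ha)) (symm_of r hba)⟩
    have := hmax (insert b I) <| Finset.mem_filter.2
      ⟨Finset.mem_powerset.2 (Finset.insert_subset hb hIs), by rwa [Finset.coe_insert]⟩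
    rw [Finset.card_insert_of_notMem hbI] at this
    omega
  refine ⟨I, hIs, hpair, ?_⟩
  calc (s.card : ℝ)
      ≤ ∑ a ∈ I, ((insert a (s.filter fun b => a ≠ b ∧ r a b)).card : ℝ) :=
        mod_cast (Finset.card_le_card hdominates).trans Finset.card_biUnion_le
    _ ≤ ∑ _a ∈ I, (D + 1) := by
        refine Finset.sum_le_sum fun a ha => ?_
        have hcard : ((insert a (s.filter fun b => a ≠ b ∧ r a b)).card : ℝ)
            ≤ conflictDegree r s a + 1 := by
          rw [conflictDegree]
          exact_mod_cast Finset.card_insert_le _ _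
        linarith [hD a (hIs ha)]
    _ = I.card * (D + 1) := by rw [Finset.sum_const, nsmul_eq_mul]

lemma half_card_le_card_filter_le {s : Finset α} {f : α → ℝ} (hf : ∀ a ∈ s, 0 ≤ f a) (hD : 0 < D)
    (hsum : ∑ a ∈ s, f a ≤ D * s.card / 2) :
    (s.card : ℝ) / 2 ≤ (s.filter fun a => f a ≤ D).card := by
  have hsplit : ((s.filter fun a => f a ≤ D).card : ℝ) + (s.filter fun a => ¬ f a ≤ D).card
      = s.card := mod_cast Finset.card_filter_add_card_filter_not _
  have hlarge : (s.filter fun a => ¬ f a ≤ D).card * D ≤ s.card / 2 * D :=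
    calc (s.filter fun a => ¬ f a ≤ D).card * D ≤ ∑ a ∈ s with ¬ f a ≤ D, f a := by
          rw [← nsmul_eq_mul]
          exact Finset.card_nsmul_le_sum _ _ _ fun a ha => (not_le.1 (Finset.mem_filter.1 ha).2).le
      _ ≤ ∑ a ∈ s, f a :=
          Finset.sum_le_sum_of_subset_of_nonneg (Finset.filter_subset _ _) fun a ha _ => hf a ha
      _ ≤ s.card / 2 * D := by linarith
  linarith [le_of_mul_le_mul_right hlarge hD]

lemma exists_pairwise_not_half_card_le_mul [Std.Symm r] (hD : 0 < D) {s : Finset α}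
    (hsum : ∑ a ∈ s, (conflictDegree r s a : ℝ) ≤ D * s.card / 2) :
    ∃ I ⊆ s, (I : Set α).Pairwise (fun a b => ¬ r a b) ∧ (s.card : ℝ) / 2 ≤ I.card * (D + 1) := by
  classical
  set t := s.filter fun a => (conflictDegree r s a : ℝ) ≤ D
  have hts : t ⊆ s := Finset.filter_subset _ _
  obtain ⟨I, hIt, hpair, hcard⟩ := exists_pairwise_not_card_le_mul t fun a ha =>
    le_trans (mod_cast conflictDegree_mono hts a) (Finset.mem_filter.1 ha).2
  exact ⟨I, hIt.trans hts, hpair,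
    (half_card_le_card_filter_le (fun _ _ => Nat.cast_nonneg _) hD hsum).trans hcard⟩

end IndependentSets

section Conflicts

variable {a b : ℝ}

lemma le_sub_of_dvd_of_dvd {d m n : ℕ} (hne : m ≠ n) (hm : (m : ℝ) ∈ Set.Ioc a b)
    (hn : (n : ℝ) ∈ Set.Ioc a b) (hdm : d ∣ m) (hdn : d ∣ n) : (d : ℝ) ≤ b - a := by
  wlog hlt : m < n generalizing m n
  · exact this hne.symm hn hm hdn hdm (by omega)
  have hd : (d : ℝ) ≤ n - m := by
    rw [← Nat.cast_sub hlt.le]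
    exact_mod_cast Nat.le_of_dvd (by omega) (Nat.dvd_sub hdn hdm)
  linarith [hm.1, hn.2]

lemma sum_conflictDegree_not_coprime_le (a b z : ℝ) :
    ∑ m ∈ siftedSet a b z, conflictDegree (fun m n => ¬ m.Coprime n) (siftedSet a b z) m
      ≤ ∑ p ∈ primesIcc z (b - a), ((siftedSet a b z).filter (p ∣ ·)).card ^ 2 := by
  classical
  set s := siftedSet a b z
  have hsub : (s.sigma fun m => s.filter fun n => m ≠ n ∧ ¬ m.Coprime n) ⊆
      (primesIcc z (b - a)).biUnion fun p =>
        (s.filter (p ∣ ·)).sigma fun _ => s.filter (p ∣ ·) := by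
    rintro ⟨m, n⟩ hmn
    simp only [Finset.mem_sigma, Finset.mem_filter] at hmn
    obtain ⟨hm, hn, hne, hcoprime⟩ := hmn
    obtain ⟨p, hp, hpm, hpn⟩ := Nat.Prime.not_coprime_iff_dvd.1 hcoprime
    obtain ⟨-, ham, hmb, hrough⟩ := mem_siftedSet.1 hm
    obtain ⟨-, han, hnb, -⟩ := mem_siftedSet.1 hn
    simp only [Finset.mem_biUnion, Finset.mem_sigma, Finset.mem_filter]
    exact ⟨p, mem_primesIcc.2 ⟨hp, hrough p hp hpm,
      le_sub_of_dvd_of_dvd hne ⟨ham, hmb⟩ ⟨han, hnb⟩ hpm hpn⟩, ⟨hm, hpm⟩, hn, hpn⟩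
  calc ∑ m ∈ s, conflictDegree (fun m n => ¬ m.Coprime n) s m
      = (s.sigma fun m => s.filter fun n => m ≠ n ∧ ¬ m.Coprime n).card := by
        simp only [conflictDegree, Finset.card_sigma]
    _ ≤ _ := (Finset.card_le_card hsub).trans Finset.card_biUnion_le
    _ = _ := by simp only [Finset.card_sigma, Finset.sum_const, smul_eq_mul, ← sq]

lemma card_filter_dvd_siftedSet_le (a b z : ℝ) {d : ℕ} (hd : 0 < d) :
    ((siftedSet a b z).filter (d ∣ ·)).card ≤ siftedCount (a / d) (b / d) z := by
  classical
  have hd0 : (0 : ℝ) < d := mod_cast hd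
  have hsub : (siftedSet a b z).filter (d ∣ ·) ⊆ (siftedSet (a / d) (b / d) z).image (d * ·) := by
    intro n hn
    obtain ⟨hn, m, rfl⟩ := Finset.mem_filter.1 hn
    obtain ⟨hne, han, hnb, hrough⟩ := mem_siftedSet.1 hn
    push_cast at han hnb
    exact Finset.mem_image_of_mem _ <| mem_siftedSet.2 ⟨right_ne_zero_of_mul hne,
      (div_lt_iff₀' hd0).2 han, (le_div_iff₀' hd0).2 hnb,
      fun p hp hpm => hrough p hp (hpm.mul_left d)⟩
  exact (Finset.card_le_card hsub).trans Finset.card_image_le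

lemma sum_conflictDegree_le_sum_siftedCount_sq (a b z : ℝ) :
    ∑ m ∈ siftedSet a b z, conflictDegree (fun m n => ¬ m.Coprime n) (siftedSet a b z) m
      ≤ ∑ p ∈ primesIcc z (b - a), siftedCount (a / p) (b / p) z ^ 2 := by
  refine (sum_conflictDegree_not_coprime_le a b z).trans (Finset.sum_le_sum fun p hp => ?_)
  gcongr
  exact card_filter_dvd_siftedSet_le a b z (mem_primesIcc.1 hp).1.pos

end Conflicts

section ConflictCount

variable {a b κ v w z : ℝ}

lemma sum_one_div_sq_primesIcc_le_div_sq (hz : 0 < z) (hw : 2 ≤ w) :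
    ∑ p ∈ primesIcc z w, 1 / (p : ℝ) ^ 2 ≤ 5 * w / log w / z ^ 2 := by
  have hsub : primesIcc z w ⊆ primesIcc 2 w := fun p hp => by
    obtain ⟨hprime, -, hpw⟩ := mem_primesIcc.1 hp
    exact mem_primesIcc.2 ⟨hprime, mod_cast hprime.two_le, hpw⟩
  calc ∑ p ∈ primesIcc z w, 1 / (p : ℝ) ^ 2 ≤ ∑ _p ∈ primesIcc z w, 1 / z ^ 2 := by
        gcongr with p hp
        exact (mem_primesIcc.1 hp).2.1
    _ = (primesIcc z w).card / z ^ 2 := by rw [Finset.sum_const, nsmul_eq_mul, mul_one_div]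
    _ ≤ (primesIcc 2 w).card / z ^ 2 := by gcongr
    _ ≤ 5 * w / log w / z ^ 2 := by
        gcongr
        exact card_primesIcc_two_le_div_log hw

lemma sum_one_div_sq_primesIcc_mul_two_pow_le (hz : 2 ≤ z) (j : ℕ) :
    ∑ p ∈ primesIcc z (z * 2 ^ j), 1 / (p : ℝ) ^ 2 ≤ (25 - 20 / 2 ^ j) / (z * log z) := by
  classical
  have hz0 : 0 < z := by linarith
  have hlog : 0 < log z := log_pos (by linarith)
  induction j with
  | zero =>
    rw [pow_zero, mul_one]
    refine (sum_one_div_sq_primesIcc_le_div_sq hz0 hz).trans_eq ?_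
    field_simp
    norm_num
  | succ j ih =>
    set m := z * 2 ^ j
    set w := z * 2 ^ (j + 1)
    have hzw : z ≤ w := le_mul_of_one_le_right hz0.le (one_le_pow₀ one_le_two)
    have hsplit : primesIcc z w ⊆ primesIcc z m ∪ primesIcc m w := fun p hp => by
      obtain ⟨hprime, hzp, hpw⟩ := mem_primesIcc.1 hp
      rw [Finset.mem_union, mem_primesIcc, mem_primesIcc]
      exact (le_total (p : ℝ) m).imp (fun h => ⟨hprime, hzp, h⟩) fun h => ⟨hprime, h, hpw⟩
    have hblock : ∑ p ∈ primesIcc m w, 1 / (p : ℝ) ^ 2 ≤ 10 / 2 ^ j / (z * log z) :=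
      calc ∑ p ∈ primesIcc m w, 1 / (p : ℝ) ^ 2 ≤ 5 * w / log w / m ^ 2 :=
            sum_one_div_sq_primesIcc_le_div_sq (by positivity) (by linarith)
        _ ≤ 5 * w / log z / m ^ 2 := by gcongr
        _ = 10 / 2 ^ j / (z * log z) := by
            simp only [w, m]
            field_simp
            ring
    calc ∑ p ∈ primesIcc z w, 1 / (p : ℝ) ^ 2
        ≤ ∑ p ∈ primesIcc z m ∪ primesIcc m w, 1 / (p : ℝ) ^ 2 :=
          Finset.sum_le_sum_of_subset_of_nonneg hsplit fun p _ _ => by positivity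
      _ ≤ ∑ p ∈ primesIcc z m, 1 / (p : ℝ) ^ 2 + ∑ p ∈ primesIcc m w, 1 / (p : ℝ) ^ 2 := by
          rw [← Finset.sum_union_inter]
          exact le_add_of_nonneg_right (Finset.sum_nonneg fun p _ => by positivity)
      _ ≤ (25 - 20 / 2 ^ j) / (z * log z) + 10 / 2 ^ j / (z * log z) := add_le_add ih hblock
      _ = (25 - 20 / 2 ^ (j + 1)) / (z * log z) := by
          field_simp
          ring

lemma sum_one_div_sq_primesIcc_le (hz : 2 ≤ z) (v : ℝ) :
    ∑ p ∈ primesIcc z v, 1 / (p : ℝ) ^ 2 ≤ 25 / (z * log z) := by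
  have hlog : 0 < log z := log_pos (by linarith)
  obtain ⟨j, hj⟩ := pow_unbounded_of_one_lt v one_lt_two
  have hsub : primesIcc z v ⊆ primesIcc z (z * 2 ^ j) := fun p hp => by
    obtain ⟨hprime, hzp, hpv⟩ := mem_primesIcc.1 hp
    exact mem_primesIcc.2 ⟨hprime, hzp, by nlinarith⟩
  calc ∑ p ∈ primesIcc z v, 1 / (p : ℝ) ^ 2
      ≤ ∑ p ∈ primesIcc z (z * 2 ^ j), 1 / (p : ℝ) ^ 2 :=
        Finset.sum_le_sum_of_subset_of_nonneg hsub fun p _ _ => by positivity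
    _ ≤ (25 - 20 / 2 ^ j) / (z * log z) := sum_one_div_sq_primesIcc_mul_two_pow_le hz j
    _ ≤ 25 / (z * log z) := by
        gcongr
        exact sub_le_self _ (by positivity)

lemma tendsto_sqrt_sqrt_atTop : Filter.Tendsto (fun v => √√v) Filter.atTop Filter.atTop :=
  tendsto_sqrt_atTop.comp tendsto_sqrt_atTop

lemma eventually_log_pow_three_le_sqrt_sqrt :
    ∀ᶠ v in Filter.atTop, log v ^ 3 ≤ √√v := by
  have hlittle := (isLittleO_pow_log_id_atTop (n := 3)).bound (show (0 : ℝ) < 1 / 64 by norm_num)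
  filter_upwards [tendsto_sqrt_sqrt_atTop.eventually hlittle, Filter.eventually_ge_atTop 0]
    with v hv hv0
  rw [id, norm_of_nonneg (sqrt_nonneg _), log_sqrt_sqrt hv0, div_pow] at hv
  linarith [le_of_abs_le hv]

lemma sqrt_div_le_mul_sqrt (hκ : 0 < κ) (hv : 0 < v) (hcube : 1 ≤ κ ^ 3 * √v) (hw : κ * √v ≤ w) :
    √(v / w) ≤ κ * √v := by
  have hz : 0 < κ * √v := by positivity
  rw [sqrt_le_left hz.le, div_le_iff₀ (hz.trans_le hw)]
  calc v = √v ^ 2 := (sq_sqrt hv.le).symm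
    _ ≤ κ ^ 3 * √v * √v ^ 2 := le_mul_of_one_le_left (by positivity) hcube
    _ = (κ * √v) ^ 2 * (κ * √v) := by ring
    _ ≤ (κ * √v) ^ 2 * w := by gcongr

lemma siftedCount_le_sub_add_one (ha : 0 ≤ a) (hab : a ≤ b) (hz : 2 ≤ z) :
    (siftedCount a b z : ℝ) ≤ b - a + 1 := by
  have hanti : (siftedCount a b z : ℝ) ≤ siftedCount a b 2 := mod_cast siftedCount_anti a b hz
  linarith [(abs_le.1 (abs_siftedCount_two_sub_le ha hab)).2]

-- The sieve bound applies while the interval `(a / p, b / p]` has length at least `v ^ (1 / 8)`;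
-- shorter intervals are counted trivially.
lemma exists_siftedCount_div_sq_le :
    ∃ C, 0 < C ∧ ∀ κ, 0 < κ → ∀ᶠ v in Filter.atTop, ∀ a b, 0 ≤ a → b - a = v → ∀ p : ℕ, κ * √v ≤ p →
      (siftedCount (a / p) (b / p) (κ * √v) : ℝ) ^ 2 ≤
        C * (v / log v) ^ 2 * (1 / (p : ℝ) ^ 2) + 4 * √√v := by
  obtain ⟨C, hC, hupper⟩ := exists_siftedCount_sqrt_le
  refine ⟨(8 * C) ^ 2, by positivity, fun κ hκ => ?_⟩
  filter_upwards [tendsto_sqrt_atTop.eventually_ge_atTop (1 / κ ^ 3),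
    tendsto_sqrt_atTop.eventually_ge_atTop (2 / κ), Filter.eventually_gt_atTop 1,
    (tendsto_sqrt_atTop.comp tendsto_sqrt_sqrt_atTop).eventually_ge_atTop 4]
    with v hcube hsqrt hv1 hroot a b ha hv p hp
  rw [Function.comp_apply] at hroot
  rw [div_le_iff₀' (by positivity)] at hcube hsqrt
  have hv0 : 0 < v := by linarith
  have hlog : 0 < log v := log_pos hv1
  have hp0 : (0 : ℝ) < p := by linarith
  have ha' : 0 ≤ a / p := by positivity
  have hlength : b / p - a / p = v / p := by rw [← hv]; ring
  rcases le_total (√√√v) (v / p) with hlong | hshort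
  · have hsqrt_le := sqrt_div_le_mul_sqrt hκ hv0 hcube hp
    have hlog_le : log v / 8 ≤ log (v / p) :=
      calc log v / 8 = log √√√v := by
            rw [log_sqrt (by positivity), log_sqrt_sqrt hv0.le]; ring
        _ ≤ log (v / p) := log_le_log (by linarith) hlong
    have hcount : (siftedCount (a / p) (b / p) (κ * √v) : ℝ) ≤ 8 * C * (v / log v) * (1 / p) :=
      calc (siftedCount (a / p) (b / p) (κ * √v) : ℝ) ≤ siftedCount (a / p) (b / p) √(v / p) :=
            mod_cast siftedCount_anti _ _ hsqrt_le
        _ ≤ C * (v / p / log (v / p)) :=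
            hlength ▸ hupper (a / p) (b / p) ha' (by linarith)
        _ ≤ C * (v / p / (log v / 8)) := by gcongr
        _ = 8 * C * (v / log v) * (1 / p) := by field_simp
    calc (siftedCount (a / p) (b / p) (κ * √v) : ℝ) ^ 2 ≤ (8 * C * (v / log v) * (1 / p)) ^ 2 := by
          gcongr
      _ = (8 * C) ^ 2 * (v / log v) ^ 2 * (1 / (p : ℝ) ^ 2) := by ring
      _ ≤ _ := le_add_of_nonneg_right (by positivity)
  · have hcount : (siftedCount (a / p) (b / p) (κ * √v) : ℝ) ≤ 2 * √√√v :=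
      calc (siftedCount (a / p) (b / p) (κ * √v) : ℝ) ≤ v / p + 1 := hlength ▸
            siftedCount_le_sub_add_one ha' (by linarith [div_nonneg hv0.le hp0.le]) hsqrt
        _ ≤ 2 * √√√v := by linarith
    calc (siftedCount (a / p) (b / p) (κ * √v) : ℝ) ^ 2 ≤ (2 * √√√v) ^ 2 := by gcongr
      _ = 4 * √√v := by rw [mul_pow, sq_sqrt (by positivity)]; norm_num
      _ ≤ _ := le_add_of_nonneg_left (by positivity)

lemma sum_one_div_sq_primesIcc_mul_sqrt_le (hκ : 0 < κ) (hv : 1 < v) (hz : 2 ≤ κ * √v)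
    (hvz : √√v ≤ κ * √v) :
    ∑ p ∈ primesIcc (κ * √v) v, 1 / (p : ℝ) ^ 2 ≤ 100 / κ / (√v * log v) := by
  have hlog : 0 < log v := log_pos hv
  have hlog_le : log v / 4 ≤ log (κ * √v) :=
    calc log v / 4 = log √√v := (log_sqrt_sqrt (by linarith)).symm
      _ ≤ log (κ * √v) := log_le_log (by positivity) hvz
  calc ∑ p ∈ primesIcc (κ * √v) v, 1 / (p : ℝ) ^ 2 ≤ 25 / (κ * √v * log (κ * √v)) :=
        sum_one_div_sq_primesIcc_le hz v
    _ ≤ 25 / (κ * √v * (log v / 4)) := by gcongr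
    _ = 100 / κ / (√v * log v) := by
        field_simp
        norm_num

lemma exists_sum_conflictDegree_le (hκ : 0 < κ) :
    ∃ M, 0 < M ∧ ∀ᶠ v in Filter.atTop, ∀ a b, 0 ≤ a → b - a = v →
      ∑ m ∈ siftedSet a b (κ * √v),
        (conflictDegree (fun m n => ¬ m.Coprime n) (siftedSet a b (κ * √v)) m : ℝ)
          ≤ M * (v * √v / log v ^ 3) := by
  obtain ⟨C, hC0, hC⟩ := exists_siftedCount_div_sq_le
  refine ⟨100 / κ * C + 4, by positivity, ?_⟩
  filter_upwards [hC κ hκ, tendsto_sqrt_atTop.eventually_ge_atTop (2 / κ),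
    tendsto_sqrt_sqrt_atTop.eventually_ge_atTop (1 / κ), Filter.eventually_gt_atTop 1,
    eventually_log_pow_three_le_sqrt_sqrt] with v hcount hsqrt hsqrt_sqrt hv1 hlog_pow a b ha hv
  rw [div_le_iff₀' hκ] at hsqrt hsqrt_sqrt
  have hv0 : 0 < v := by linarith
  have hlog : 0 < log v := log_pos hv1
  have hfourth : √√v * √√v = √v := mul_self_sqrt (sqrt_nonneg v)
  have hreciprocals := sum_one_div_sq_primesIcc_mul_sqrt_le hκ hv1 hsqrt
    (by nlinarith [sqrt_nonneg √v])
  set z := κ * √v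
  have hcard : ((primesIcc z v).card : ℝ) ≤ v := by
    refine le_trans (mod_cast Finset.card_le_card fun p hp => ?_) (card_primesIcc_two_le hv0.le)
    obtain ⟨hprime, -, hpv⟩ := mem_primesIcc.1 hp
    exact mem_primesIcc.2 ⟨hprime, mod_cast hprime.two_le, hpv⟩
  have hroot : √√v ≤ √v / log v ^ 3 := by
    rw [le_div_iff₀ (by positivity)]
    exact (mul_le_mul_of_nonneg_left hlog_pow (sqrt_nonneg _)).trans_eq hfourth
  calc ∑ m ∈ siftedSet a b z,
        (conflictDegree (fun m n => ¬ m.Coprime n) (siftedSet a b z) m : ℝ)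
      ≤ ∑ p ∈ primesIcc z v, (siftedCount (a / p) (b / p) z : ℝ) ^ 2 := by
        rw [← hv]
        exact_mod_cast sum_conflictDegree_le_sum_siftedCount_sq a b z
    _ ≤ ∑ p ∈ primesIcc z v, (C * (v / log v) ^ 2 * (1 / (p : ℝ) ^ 2) + 4 * √√v) :=
        Finset.sum_le_sum fun p hp => hcount a b ha hv p (mem_primesIcc.1 hp).2.1
    _ = C * (v / log v) ^ 2 * ∑ p ∈ primesIcc z v, 1 / (p : ℝ) ^ 2
          + (primesIcc z v).card * (4 * √√v) := by
        rw [Finset.sum_add_distrib, Finset.mul_sum, Finset.sum_const, nsmul_eq_mul]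
    _ ≤ C * (v / log v) ^ 2 * (100 / κ / (√v * log v)) + v * (4 * (√v / log v ^ 3)) := by gcongr
    _ = (100 / κ * C + 4) * (v * √v / log v ^ 3) := by
        field_simp
        rw [sq_sqrt hv0.le]
        ring

lemma one_le_two_mul_sqrt_div_log (hv : 1 < v) : 1 ≤ 2 * (√v / log v) := by
  have h := log_le_sub_one_of_pos (sqrt_pos.2 (show 0 < v by linarith))
  rw [log_sqrt (by linarith)] at h
  rw [← mul_div_assoc, le_div_iff₀ (log_pos hv)]
  linarith

lemma exists_pairwise_coprime_subset_siftedSet :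
    ∃ κ c, 0 < c ∧ ∀ᶠ v in Filter.atTop, ∀ a b, 0 ≤ a → b - a = v →
      ∃ I ⊆ siftedSet a b (κ * √v),
        (I : Set ℕ).Pairwise Nat.Coprime ∧ c * √v / log v ≤ I.card := by
  obtain ⟨κ, hκ, v₀, hlower⟩ := exists_le_siftedCount_mul_sqrt
  obtain ⟨M, hM, hconflicts⟩ := exists_sum_conflictDegree_le hκ
  have : Std.Symm fun m n : ℕ => ¬ m.Coprime n := ⟨fun _ _ h hcoprime => h hcoprime.symm⟩
  refine ⟨κ, 1 / (4 * (M + 1)), by positivity, ?_⟩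
  filter_upwards [hconflicts, Filter.eventually_ge_atTop v₀, Filter.eventually_gt_atTop 1]
    with v hconflicts hv₀ hv1 a b ha hv
  have hv0 : 0 < v := by linarith
  have hlog : 0 < log v := log_pos hv1
  have hcard : v / log v ^ 2 ≤ (siftedSet a b (κ * √v)).card :=
    hv ▸ hlower a b ha (hv₀.trans_eq hv.symm)
  obtain ⟨I, hI, hpair, hIcard⟩ := exists_pairwise_not_half_card_le_mul
    (D := 2 * M * (√v / log v)) (s := siftedSet a b (κ * √v)) (by positivity) <|
      calc _ ≤ M * (v * √v / log v ^ 3) := hconflicts a b ha hv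
        _ = 2 * M * (√v / log v) * (v / log v ^ 2) / 2 := by field_simp
        _ ≤ _ := by gcongr
  refine ⟨I, hI, hpair.mono' fun _ _ => not_not.1, ?_⟩
  have hone := one_le_two_mul_sqrt_div_log hv1
  refine le_of_mul_le_mul_right ?_ (show 0 < 2 * (M + 1) * (√v / log v) by positivity)
  calc 1 / (4 * (M + 1)) * √v / log v * (2 * (M + 1) * (√v / log v)) = v / log v ^ 2 / 2 := by
        field_simp
        rw [sq_sqrt hv0.le]
        ring
    _ ≤ (siftedSet a b (κ * √v)).card / 2 := by gcongr
    _ ≤ I.card * (2 * M * (√v / log v) + 1) := hIcard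
    _ ≤ I.card * (2 * (M + 1) * (√v / log v)) := by
        gcongr
        linarith

end ConflictCount

end LinearSieve

/-- Any interval [x−y, x] with y sufficiently large and x ≥ y+1 contains a pairwise
coprime set of positive integers of size at least c₃ √y / log y. -/
theorem coprime_subset_of_interval :
    ∃ c₃ : ℝ, 0 < c₃ ∧ ∃ Y : ℝ, ∀ y : ℝ, Y ≤ y → ∀ x : ℝ, y + 1 ≤ x →
      ∃ S : Finset ℕ,
        (∀ n ∈ S, 0 < n ∧ x - y ≤ (n : ℝ) ∧ (n : ℝ) ≤ x) ∧
        (∀ m ∈ S, ∀ n ∈ S, m ≠ n → Nat.Coprime m n) ∧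
        c₃ * Real.sqrt y / log y ≤ (S.card : ℝ) := by
  obtain ⟨κ, c, hc, hsubset⟩ := LinearSieve.exists_pairwise_coprime_subset_siftedSet
  obtain ⟨Y, hY⟩ := Filter.eventually_atTop.1 hsubset
  refine ⟨c, hc, Y, fun y hy x hx => ?_⟩
  obtain ⟨S, hS, hcoprime, hcard⟩ := hY y hy (x - y) x (by linarith) (sub_sub_self x y)
  refine ⟨S, fun n hn => ?_, fun m hm n hn hne => hcoprime hm hn hne, hcard⟩
  obtain ⟨hne, hlt, hle, -⟩ := LinearSieve.mem_siftedSet.1 (hS hn)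
  exact ⟨Nat.pos_of_ne_zero hne, hlt.le, hle⟩
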